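/- Let r, s, k be natural numbers with k > r ≥ 1, and let κ be an integer satisfying 1 ≤ κ ≤ (k−r+2)/2. Suppose that 1 ≤ s ≤ k(k+1)/2 − (k(k+1)−r(r−1))/(4κ). Then for each ε > 0 one has I_{s,k,r}(X) ≪ X^{s+(r−1)(1−1/(2κ))+ε}. -/

import Mathlib

open Finset

/-- `vinogradovSliceCount s k r X` is the number of integral solutions of the system
`x_1^j + ⋯ + x_s^j = y_1^j + ⋯ + y_s^j` for `1 ≤ j ≤ k`, `j ≠ r`, with `1 ≤ x_i, y_i ≤ X`. -/
noncomputable def vinogradovSliceCount (s k r : ℕ) (X : ℝ) : ℕ :=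
  {p : (Fin s → ℤ) × (Fin s → ℤ) |
      (∀ i, 1 ≤ p.1 i ∧ (p.1 i : ℝ) ≤ X) ∧
      (∀ i, 1 ≤ p.2 i ∧ (p.2 i : ℝ) ≤ X) ∧
      ∀ j ∈ Finset.Icc 1 k, j ≠ r →
        ∑ i, (p.1 i) ^ j = ∑ i, (p.2 i) ^ j}.ncard

/-!
The missing equation leaves room for translations. If `(x, y)` solves the system without degree
`r` and `w = ∑ x_i ^ r - ∑ y_i ^ r`, then `(x + h, y + h)` has no defect in degrees below `r`, and
the defect `w * j.choose r * h ^ (j - r)` in each degree `j ≥ r`. Counting over all `1 ≤ h ≤ n`,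
`n` times the number of solutions is at most the mean of `|f| ^ (2 * s) * |G|`, where `f` is the
Weyl sum of degree `k` and `G` is an exponential sum over the pairs `(h, w)`. Hölder's inequality
separates `f` from `G`.

The `2 * κ`-th moment of `G` counts systems of `2 * κ` weights `w` at nodes `h` whose moments of
degree at most `k - r` vanish. Since `2 * κ ≤ k - r + 2`, a Vandermonde argument and the divisor
bound show that, up to `ε`, there are no more of them than those whose nodes all coincide. As `G`
does not depend on the frequencies of degree below `r`, the factor `f` may be averaged over these
alone when it is paired with `G`. Interpolation between the mean values of degrees `r - 1` and `k`
at their critical exponents gives the range of `s`.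

These mean values are Vinogradov's, and come from decoupling for the moment curve over `ZMod q` with
`q` a power of a prime `p > k`: a bilinear estimate between two separated residue classes is
iterated through lower degrees, following Guo, Li, Yung and Zorin-Kranich, until the decoupling
exponent is forced to be `0`.
-/

section Inequalities

variable {α β ι : Type*}

theorem sum_prod_rpow_le_prod_sum_rpow (s : Finset α) (t : Finset ι) {w : ι → ℝ} {f : ι → α → ℝ}
    (hw : ∀ i ∈ t, 0 ≤ w i) (hw1 : ∑ i ∈ t, w i = 1) (hf : ∀ i ∈ t, ∀ x ∈ s, 0 ≤ f i x) :
    ∑ x ∈ s, ∏ i ∈ t, f i x ^ w i ≤ ∏ i ∈ t, (∑ x ∈ s, f i x) ^ w i := by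
  have hF : ∀ i ∈ t, 0 ≤ ∑ x ∈ s, f i x := fun i hi => sum_nonneg (hf i hi)
  have hprod : 0 ≤ ∏ i ∈ t, (∑ x ∈ s, f i x) ^ w i :=
    prod_nonneg fun i hi => Real.rpow_nonneg (hF i hi) _
  by_cases hzero : ∃ i ∈ t, w i ≠ 0 ∧ ∑ x ∈ s, f i x = 0
  · obtain ⟨i, hi, hwi, hFi⟩ := hzero
    rw [sum_eq_zero]
    · exact hprod
    · intro x hx
      rw [prod_eq_zero hi]
      rw [(sum_eq_zero_iff_of_nonneg (hf i hi)).1 hFi x hx, Real.zero_rpow hwi]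
  push Not at hzero
  have amgm : ∀ x ∈ s, ∏ i ∈ t, f i x ^ w i ≤
      (∏ i ∈ t, (∑ y ∈ s, f i y) ^ w i) * ∑ i ∈ t, w i * (f i x / ∑ y ∈ s, f i y) := by
    intro x hx
    have hratio : ∀ i ∈ t, 0 ≤ f i x / ∑ y ∈ s, f i y :=
      fun i hi => div_nonneg (hf i hi x hx) (hF i hi)
    have hsplit : ∏ i ∈ t, f i x ^ w i =
        (∏ i ∈ t, (∑ y ∈ s, f i y) ^ w i) * ∏ i ∈ t, (f i x / ∑ y ∈ s, f i y) ^ w i := by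
      rw [← prod_mul_distrib]
      refine prod_congr rfl fun i hi => ?_
      rcases eq_or_ne (w i) 0 with hwi | hwi
      · simp [hwi]
      · rw [← Real.mul_rpow (hF i hi) (hratio i hi), mul_div_cancel₀ _ (hzero i hi hwi)]
    rw [hsplit]
    gcongr
    exact Real.geom_mean_le_arith_mean_weighted t w _ hw hw1 hratio
  calc ∑ x ∈ s, ∏ i ∈ t, f i x ^ w i
      ≤ ∑ x ∈ s, (∏ i ∈ t, (∑ y ∈ s, f i y) ^ w i) *
          ∑ i ∈ t, w i * (f i x / ∑ y ∈ s, f i y) := sum_le_sum amgm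
    _ = (∏ i ∈ t, (∑ y ∈ s, f i y) ^ w i) *
          ∑ i ∈ t, w i * ((∑ x ∈ s, f i x) / ∑ y ∈ s, f i y) := by
        rw [← mul_sum, sum_comm]
        simp only [← mul_sum, ← sum_div]
    _ ≤ ∏ i ∈ t, (∑ x ∈ s, f i x) ^ w i := by
        refine mul_le_of_le_one_right hprod ?_
        rw [← hw1]
        exact sum_le_sum fun i hi => mul_le_of_le_one_right (hw i hi) (div_self_le_one _)

theorem sum_rpow_mul_rpow_le (s : Finset α) {θ : ℝ} (hθ₀ : 0 ≤ θ) (hθ₁ : θ ≤ 1) {f g : α → ℝ}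
    (hf : ∀ x ∈ s, 0 ≤ f x) (hg : ∀ x ∈ s, 0 ≤ g x) :
    ∑ x ∈ s, f x ^ (1 - θ) * g x ^ θ ≤ (∑ x ∈ s, f x) ^ (1 - θ) * (∑ x ∈ s, g x) ^ θ := by
  have h := sum_prod_rpow_le_prod_sum_rpow s univ (w := ![1 - θ, θ]) (f := ![f, g])
    (by simp [Fin.forall_fin_two, hθ₀, hθ₁]) (by simp)
    (by simpa [Fin.forall_fin_two] using ⟨hf, hg⟩)
  simpa using h

theorem pow_rpow_mul_pow_rpow {A θ : ℝ} (hA : 0 ≤ A) (hθ₀ : 0 ≤ θ) (hθ₁ : θ ≤ 1) {m n r : ℕ}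
    (h : (1 - θ) * m + θ * n = r) : (A ^ m) ^ (1 - θ) * (A ^ n) ^ θ = A ^ r := by
  have : 0 ≤ 1 - θ := sub_nonneg.2 hθ₁
  rw [← Real.rpow_natCast, ← Real.rpow_natCast, ← Real.rpow_natCast, ← Real.rpow_mul hA,
    ← Real.rpow_mul hA, ← Real.rpow_add_of_nonneg hA (by positivity) (by positivity), ← h]
  ring_nf

theorem mul_pow_rpow_mul_mul_pow_rpow {A B θ : ℝ} (hA : 0 ≤ A) (hB : 0 ≤ B) (hθ₀ : 0 ≤ θ)
    (hθ₁ : θ ≤ 1) {m₁ n₁ m₂ n₂ m n : ℕ} (hm : (1 - θ) * m₁ + θ * m₂ = m)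
    (hn : (1 - θ) * n₁ + θ * n₂ = n) :
    (A ^ m₁ * B ^ n₁) ^ (1 - θ) * (A ^ m₂ * B ^ n₂) ^ θ = A ^ m * B ^ n := by
  rw [← pow_rpow_mul_pow_rpow hA hθ₀ hθ₁ hm, ← pow_rpow_mul_pow_rpow hB hθ₀ hθ₁ hn,
    Real.mul_rpow (by positivity) (by positivity), Real.mul_rpow (by positivity) (by positivity)]
  ring

theorem sum_pow_mul_pow_le_interpolate (s : Finset α) {θ : ℝ} (hθ₀ : 0 ≤ θ) (hθ₁ : θ ≤ 1)
    {f g : α → ℝ} (hf : ∀ x, 0 ≤ f x) (hg : ∀ x, 0 ≤ g x) {A B C₁ C₂ : ℝ} (hA : 0 ≤ A)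
    (hB : 0 ≤ B) (hC₁ : 0 ≤ C₁) (hC₂ : 0 ≤ C₂) {m₁ n₁ m₂ n₂ m n : ℕ}
    (hm : (1 - θ) * m₁ + θ * m₂ = m) (hn : (1 - θ) * n₁ + θ * n₂ = n)
    (h₁ : ∑ x ∈ s, f x ^ m₁ * g x ^ n₁ ≤ C₁ * (A ^ m₁ * B ^ n₁))
    (h₂ : ∑ x ∈ s, f x ^ m₂ * g x ^ n₂ ≤ C₂ * (A ^ m₂ * B ^ n₂)) :
    ∑ x ∈ s, f x ^ m * g x ^ n ≤ C₁ ^ (1 - θ) * C₂ ^ θ * (A ^ m * B ^ n) := by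
  have hpos : ∀ i j x, 0 ≤ f x ^ i * g x ^ j := fun i j x =>
    mul_nonneg (pow_nonneg (hf x) i) (pow_nonneg (hg x) j)
  calc ∑ x ∈ s, f x ^ m * g x ^ n
      = ∑ x ∈ s, (f x ^ m₁ * g x ^ n₁) ^ (1 - θ) * (f x ^ m₂ * g x ^ n₂) ^ θ :=
        sum_congr rfl fun x _ =>
          (mul_pow_rpow_mul_mul_pow_rpow (hf x) (hg x) hθ₀ hθ₁ hm hn).symm
    _ ≤ (∑ x ∈ s, f x ^ m₁ * g x ^ n₁) ^ (1 - θ) * (∑ x ∈ s, f x ^ m₂ * g x ^ n₂) ^ θ :=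
        sum_rpow_mul_rpow_le s hθ₀ hθ₁ (fun x _ => hpos _ _ x) (fun x _ => hpos _ _ x)
    _ ≤ (C₁ * (A ^ m₁ * B ^ n₁)) ^ (1 - θ) * (C₂ * (A ^ m₂ * B ^ n₂)) ^ θ := by
        have := sum_nonneg fun x (_ : x ∈ s) => hpos m₁ n₁ x
        have := sum_nonneg fun x (_ : x ∈ s) => hpos m₂ n₂ x
        have : 0 ≤ 1 - θ := sub_nonneg.2 hθ₁
        gcongr
    _ = C₁ ^ (1 - θ) * C₂ ^ θ * (A ^ m * B ^ n) := by
        rw [Real.mul_rpow hC₁ (by positivity), Real.mul_rpow hC₂ (by positivity),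
          ← mul_pow_rpow_mul_mul_pow_rpow hA hB hθ₀ hθ₁ hm hn]
        ring

theorem Lp_sum_le_sum_Lp (s : Finset α) (t : Finset β) {p : ℝ} (hp : 1 ≤ p) {f : β → α → ℝ}
    (hf : ∀ j ∈ t, ∀ x ∈ s, 0 ≤ f j x) :
    (∑ x ∈ s, (∑ j ∈ t, f j x) ^ p) ^ p⁻¹ ≤ ∑ j ∈ t, (∑ x ∈ s, f j x ^ p) ^ p⁻¹ := by
  classical
  have hp0 : p ≠ 0 := by positivity
  induction t using Finset.induction_on with
  | empty => simp [Real.zero_rpow hp0, Real.zero_rpow (inv_ne_zero hp0)]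
  | insert j t hj ih =>
    rw [forall_mem_insert] at hf
    simp only [sum_insert hj]
    have hadd := Real.Lp_add_le_of_nonneg s hp hf.1
      fun x hx => sum_nonneg fun i hi => hf.2 i hi x hx
    simp only [one_div] at hadd
    exact hadd.trans (by gcongr; exact ih hf.2)

theorem sum_weight_mul_sum_pow_le (s : Finset α) (t : Finset β) {m : ℕ} (hm : m ≠ 0)
    {w : α → ℝ} (hw : ∀ x ∈ s, 0 ≤ w x) {f : β → α → ℝ} (hf : ∀ j ∈ t, ∀ x ∈ s, 0 ≤ f j x) :
    ∑ x ∈ s, w x * (∑ j ∈ t, f j x) ^ m ≤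
      (∑ j ∈ t, (∑ x ∈ s, w x * f j x ^ m) ^ (m : ℝ)⁻¹) ^ m := by
  have habsorb : ∀ g : α → ℝ,
      ∑ x ∈ s, (w x ^ (m : ℝ)⁻¹ * g x) ^ (m : ℝ) = ∑ x ∈ s, w x * g x ^ m := fun g =>
    sum_congr rfl fun x hx => by
      rw [Real.rpow_natCast, mul_pow, Real.rpow_inv_natCast_pow (hw x hx) hm]
  have hmink := Lp_sum_le_sum_Lp s t (p := m) (by exact_mod_cast Nat.one_le_iff_ne_zero.2 hm)
    (f := fun j x => w x ^ (m : ℝ)⁻¹ * f j x)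
    fun j hj x hx => mul_nonneg (Real.rpow_nonneg (hw x hx) _) (hf j hj x hx)
  simp only [← mul_sum, habsorb] at hmink
  have hnonneg : 0 ≤ ∑ x ∈ s, w x * (∑ j ∈ t, f j x) ^ m := sum_nonneg fun x hx =>
    mul_nonneg (hw x hx) (pow_nonneg (sum_nonneg fun j hj => hf j hj x hx) _)
  calc ∑ x ∈ s, w x * (∑ j ∈ t, f j x) ^ m
      = ((∑ x ∈ s, w x * (∑ j ∈ t, f j x) ^ m) ^ (m : ℝ)⁻¹) ^ m :=
        (Real.rpow_inv_natCast_pow hnonneg hm).symm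
    _ ≤ _ := by gcongr

theorem sum_pow_le_pow_sum (t : Finset ι) {f : ι → ℝ} (hf : ∀ i ∈ t, 0 ≤ f i) {m : ℕ}
    (hm : m ≠ 0) : ∑ i ∈ t, f i ^ m ≤ (∑ i ∈ t, f i) ^ m := by
  obtain ⟨n, rfl⟩ := Nat.exists_eq_succ_of_ne_zero hm
  rw [pow_succ', sum_mul]
  refine sum_le_sum fun i hi => ?_
  rw [pow_succ']
  have := hf i hi
  gcongr
  exact single_le_sum hf hi

theorem pow_sum_le_pow_mul_sum_pow (t : Finset ι) {f : ι → ℝ} (hf : ∀ i ∈ t, 0 ≤ f i) {m Q : ℕ}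
    (hm : m ≠ 0) (hQ : #t ≤ Q) : (∑ i ∈ t, f i) ^ m ≤ (Q : ℝ) ^ m * ∑ i ∈ t, f i ^ m := by
  rcases t.eq_empty_or_nonempty with rfl | ht
  · simp [hm]
  obtain ⟨n, rfl⟩ := Nat.exists_eq_succ_of_ne_zero hm
  have : (0 : ℝ) < #t := by exact_mod_cast ht.card_pos
  have hsum : 0 ≤ ∑ i ∈ t, f i ^ (n + 1) := sum_nonneg fun i hi => pow_nonneg (hf i hi) _
  calc (∑ i ∈ t, f i) ^ (n + 1) ≤ (#t : ℝ) ^ n * ∑ i ∈ t, f i ^ (n + 1) := by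
        have := pow_sum_div_card_le_sum_pow hf n
        rwa [div_le_iff₀' (by positivity)] at this
    _ ≤ (Q : ℝ) ^ n * ∑ i ∈ t, f i ^ (n + 1) := by gcongr
    _ ≤ (Q : ℝ) ^ (n + 1) * ∑ i ∈ t, f i ^ (n + 1) := by
        have : (1 : ℝ) ≤ Q := by exact_mod_cast ht.card_pos.trans_le hQ
        gcongr
        exact n.le_succ

end Inequalities

section ResidueClasses

/-- The partition of a finite set of integers into its nonempty residue classes modulo `q`. -/
def residueClasses (q : ℕ) (s : Finset ℤ) : Finpartition s :=
  letI : DecidableRel fun i j : ℤ => (q : ℤ) ∣ j - i := fun _ _ => inferInstance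
  .ofSetSetoid
    { r := fun i j => (q : ℤ) ∣ j - i
      iseqv :=
        { refl := by simp
          symm := fun {_ _} h => (dvd_sub_comm).1 h
          trans := fun {i j l} hij hjl => by simpa using dvd_add hjl hij } } s

variable {q q' : ℕ} {s J : Finset ℤ}

theorem mem_residueClasses :
    J ∈ (residueClasses q s).parts ↔ ∃ i ∈ s, {j ∈ s | (q : ℤ) ∣ j - i} = J :=
  mem_image

theorem filter_dvd_sub_mem_residueClasses {i : ℤ} (hi : i ∈ s) :
    {j ∈ s | (q : ℤ) ∣ j - i} ∈ (residueClasses q s).parts :=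
  mem_residueClasses.2 ⟨i, hi, rfl⟩

theorem subset_of_mem_residueClasses (hJ : J ∈ (residueClasses q s).parts) : J ⊆ s :=
  (residueClasses q s).le hJ

theorem dvd_sub_of_mem_residueClasses (hJ : J ∈ (residueClasses q s).parts) {i j : ℤ}
    (hi : i ∈ J) (hj : j ∈ J) : (q : ℤ) ∣ j - i := by
  obtain ⟨l, -, rfl⟩ := mem_residueClasses.1 hJ
  simpa using dvd_sub (mem_filter.1 hj).2 (mem_filter.1 hi).2

theorem eq_filter_of_mem_residueClasses (hJ : J ∈ (residueClasses q s).parts) {i : ℤ}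
    (hi : i ∈ J) : J = {j ∈ s | (q : ℤ) ∣ j - i} :=
  (residueClasses q s).eq_of_mem_parts hJ
    (filter_dvd_sub_mem_residueClasses (subset_of_mem_residueClasses hJ hi)) hi
    (by simp [subset_of_mem_residueClasses hJ hi])

theorem not_dvd_sub_of_mem_residueClasses {J' : Finset ℤ} (hJ : J ∈ (residueClasses q s).parts)
    (hJ' : J' ∈ (residueClasses q s).parts) (hne : J ≠ J') {i i' : ℤ} (hi : i ∈ J)
    (hi' : i' ∈ J') : ¬ (q : ℤ) ∣ i - i' := fun hdvd => by
  have hiJ' : i ∈ J' := by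
    rw [eq_filter_of_mem_residueClasses hJ' hi']
    exact mem_filter.2 ⟨subset_of_mem_residueClasses hJ hi, hdvd⟩
  exact disjoint_left.1 ((residueClasses q s).disjoint hJ hJ' hne) hi hiJ'

theorem sum_residueClasses {A : Type*} [AddCommMonoid A] (q : ℕ) (s : Finset ℤ) (g : ℤ → A) :
    ∑ J ∈ (residueClasses q s).parts, ∑ i ∈ J, g i = ∑ i ∈ s, g i := by
  conv_rhs => rw [← (residueClasses q s).biUnion_parts]
  exact (sum_biUnion (residueClasses q s).disjoint).symm

theorem residueClasses_eq_biUnion (hq : q ∣ q') (s : Finset ℤ) :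
    (residueClasses q' s).parts =
      (residueClasses q s).parts.biUnion fun K => (residueClasses q' K).parts := by
  have hfilter : ∀ K ∈ (residueClasses q s).parts, ∀ i ∈ K,
      {j ∈ K | (q' : ℤ) ∣ j - i} = {j ∈ s | (q' : ℤ) ∣ j - i} := by
    intro K hK i hi
    rw [eq_filter_of_mem_residueClasses hK hi, filter_filter]
    refine filter_congr fun j _ => and_iff_right_of_imp fun h => ?_
    exact (Int.natCast_dvd_natCast.2 hq).trans h
  ext J
  simp only [mem_biUnion, mem_residueClasses (q := q')]
  constructor
  · rintro ⟨i, hi, rfl⟩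
    have hK := filter_dvd_sub_mem_residueClasses (q := q) hi
    exact ⟨_, hK, i, by simp [hi], hfilter _ hK i (by simp [hi])⟩
  · rintro ⟨K, hK, i, hi, rfl⟩
    exact ⟨i, subset_of_mem_residueClasses hK hi, (hfilter K hK i hi).symm⟩

theorem sum_residueClasses_residueClasses {A : Type*} [AddCommMonoid A] (hq : q ∣ q')
    (s : Finset ℤ) (Φ : Finset ℤ → A) :
    ∑ K ∈ (residueClasses q s).parts, ∑ J ∈ (residueClasses q' K).parts, Φ J =
      ∑ J ∈ (residueClasses q' s).parts, Φ J := by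
  rw [residueClasses_eq_biUnion hq, sum_biUnion]
  intro K hK L hL hKL
  refine disjoint_left.2 fun J hJK hJL => ?_
  obtain ⟨i, hi⟩ := (residueClasses q' K).nonempty_of_mem_parts hJK
  exact disjoint_left.1 ((residueClasses q s).disjoint hK hL hKL)
    (subset_of_mem_residueClasses hJK hi) (subset_of_mem_residueClasses hJL hi)

theorem card_residueClasses_le (hq : 0 < q) (s : Finset ℤ) :
    #(residueClasses q s).parts ≤ q := by
  have : NeZero q := ⟨hq.ne'⟩
  have hsub : (residueClasses q s).parts ⊆
      (univ : Finset (ZMod q)).image fun c => {j ∈ s | (j : ZMod q) = c} := by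
    intro J hJ
    obtain ⟨i, -, rfl⟩ := mem_residueClasses.1 hJ
    refine mem_image.2 ⟨(i : ZMod q), mem_univ _, filter_congr fun j _ => ?_⟩
    rw [eq_comm, ZMod.intCast_eq_intCast_iff_dvd_sub]
  calc #(residueClasses q s).parts ≤ #(univ : Finset (ZMod q)) :=
        (card_le_card hsub).trans card_image_le
    _ = q := by rw [card_univ, ZMod.card]

theorem residueClasses_parts_eq_singleton (hs : s.Nonempty)
    (h : ∀ i ∈ s, ∀ j ∈ s, (q : ℤ) ∣ j - i) : (residueClasses q s).parts = {s} := by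
  have hall : ∀ i ∈ s, {j ∈ s | (q : ℤ) ∣ j - i} = s := fun i hi =>
    filter_true_of_mem fun j hj => h i hi j hj
  ext J
  rw [mem_residueClasses, mem_singleton]
  constructor
  · rintro ⟨i, hi, rfl⟩
    exact hall i hi
  · rintro rfl
    obtain ⟨i, hi⟩ := hs
    exact ⟨i, hi, hall i hi⟩

theorem sum_residueClasses_image_affine {A : Type*} [AddCommMonoid A] {d : ℕ} (hd : d ≠ 0)
    (q : ℕ) (t : ℤ) (s : Finset ℤ) (Φ : Finset ℤ → A) :
    ∑ K ∈ (residueClasses (q * d) (s.image fun z => t + d * z)).parts, Φ K =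
      ∑ K ∈ (residueClasses q s).parts, Φ (K.image fun z => t + d * z) := by
  have hinj : Function.Injective fun z : ℤ => t + d * z := fun x y h => by simpa [hd] using h
  have hclass : ∀ i : ℤ, {j ∈ s.image fun z => t + d * z | ((q * d : ℕ) : ℤ) ∣ j - (t + d * i)} =
      {j ∈ s | (q : ℤ) ∣ j - i}.image fun z => t + d * z := by
    intro i
    rw [filter_image]
    congr 1
    refine filter_congr fun j _ => ?_
    rw [add_sub_add_left_eq_sub, ← mul_sub, Nat.cast_mul, mul_comm (q : ℤ)]
    exact mul_dvd_mul_iff_left (by exact_mod_cast hd)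
  have hparts : (residueClasses (q * d) (s.image fun z => t + d * z)).parts =
      (residueClasses q s).parts.image (image fun z => t + d * z) := by
    ext K
    simp only [mem_image, mem_residueClasses, exists_exists_and_eq_and, hclass]
  rw [hparts, sum_image (image_injective hinj).injOn]

end ResidueClasses

section TaylorMatrix

open Polynomial Matrix

variable {R K : Type*} [CommRing R] [Field K] {k l : ℕ}

/-- The matrix of nonconstant Taylor coefficients, up to order `l`, of a polynomial curve at `t`. -/
noncomputable def taylorMatrix (l : ℕ) (γ : Fin k → R[X]) (t : R) : Matrix (Fin k) (Fin l) R :=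
  .of fun j i => (taylor t (γ j)).coeff (i.1 + 1)

/-- The moment curve `(X, X ^ 2, …, X ^ k)`. -/
noncomputable def momentCurve (R : Type*) [CommRing R] (k : ℕ) : Fin k → R[X] :=
  fun j => X ^ (j.1 + 1)

/-- The polynomial curves congruent to the moment curve modulo `π`: the class that is stable under
rescaling, on which the induction for decoupling runs. -/
def IsMomentCurveMod (π : R) (γ : Fin k → R[X]) : Prop :=
  ∀ j, C π ∣ γ j - momentCurve R k j

/-- The point of the curve `γ` with parameter `u`. -/
def curveEval (γ : Fin k → R[X]) (u : R) : Fin k → R :=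
  fun j => (γ j).eval u

theorem exists_eval_eq_add_sum_add (f : R[X]) (l : ℕ) : ∃ h : R[X], ∀ z, f.eval z =
    f.coeff 0 + ∑ i : Fin l, f.coeff (i.1 + 1) * z ^ (i.1 + 1) + z ^ (l + 1) * h.eval z := by
  obtain ⟨h, hh⟩ : X ^ (l + 1) ∣ f - ∑ m ∈ range (l + 1), C (f.coeff m) * X ^ m := by
    rw [X_pow_dvd_iff]
    intro d hd
    simp [finsetSum_coeff, hd]
  refine ⟨h, fun z => ?_⟩
  have hz := congrArg (eval z) (sub_eq_iff_eq_add'.1 hh)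
  rw [Fin.sum_univ_eq_sum_range fun m => f.coeff (m + 1) * z ^ (m + 1), add_comm (f.coeff 0)]
  simpa [eval_finsetSum, sum_range_succ' (fun m => f.coeff m * z ^ m)] using hz

theorem exists_mulVec_curveEval_add_pow_mul (π : R) (W : Matrix (Fin l) (Fin k) R)
    (γ : Fin k → R[X]) (t : R) {a : ℕ} (ha : 1 ≤ a)
    (hW : IsUnit (W * taylorMatrix l γ t).det) :
    ∃ γ' : Fin l → R[X], IsMomentCurveMod π γ' ∧ ∀ z, W *ᵥ curveEval γ (t + π ^ a * z) =
      W *ᵥ curveEval γ t +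
        (W * taylorMatrix l γ t) *ᵥ fun i => π ^ (a * (i.1 + 1)) * (γ' i).eval z := by
  set A := W * taylorMatrix l γ t
  choose h hh using fun j => exists_eval_eq_add_sum_add (taylor t (γ j)) l
  let q : Fin l → R[X] := fun i => X ^ (l + 1) * ∑ j, C ((A⁻¹ * W) i j) * (h j).comp (C (π ^ a) * X)
  refine ⟨fun i => X ^ (i.1 + 1) + C (π ^ (a * (l - i.1))) * q i, fun i => ?_, fun z => ?_⟩
  · have hexp : a * (l - i.1) ≠ 0 := (Nat.mul_pos ha (Nat.sub_pos_of_lt i.2)).ne'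
    simpa [momentCurve] using (dvd_pow_self (C π) hexp).mul_right (q i)
  set H : Fin k → R := fun j => (h j).eval (π ^ a * z)
  have hq : (fun i : Fin l => π ^ (a * (i.1 + 1)) *
      (X ^ (i.1 + 1) + C (π ^ (a * (l - i.1))) * q i).eval z) =
      (fun i : Fin l => (π ^ a * z) ^ (i.1 + 1)) + (π ^ a * z) ^ (l + 1) • (A⁻¹ * W) *ᵥ H := by
    ext i
    have hl : π ^ (a * (l + 1)) = π ^ (a * (i.1 + 1)) * π ^ (a * (l - i.1)) := by
      rw [← pow_add, ← mul_add]
      congr 2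
      omega
    simp only [q, H, eval_add, eval_mul, eval_pow, eval_X, eval_C, eval_finsetSum, eval_comp,
      mul_pow, ← pow_mul, hl, mulVec, dotProduct, Pi.add_apply, Pi.smul_apply, smul_eq_mul]
    ring
  have hγ : curveEval γ (t + π ^ a * z) = curveEval γ t +
      taylorMatrix l γ t *ᵥ (fun i => (π ^ a * z) ^ (i.1 + 1)) + (π ^ a * z) ^ (l + 1) • H := by
    ext j
    have hj := hh j (π ^ a * z)
    rw [taylor_eval, add_comm, taylor_coeff_zero] at hj
    simpa [curveEval, mulVec, dotProduct, taylorMatrix] using hj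
  rw [hq, hγ, mulVec_add A, mulVec_smul, mulVec_mulVec, ← Matrix.mul_assoc, mul_nonsing_inv _ hW,
    Matrix.one_mul, mulVec_add, mulVec_add, mulVec_smul, mulVec_mulVec, add_assoc]

theorem taylorMatrix_map (φ : R →+* K) (γ : Fin k → R[X]) (t : R) :
    (taylorMatrix l γ t).map φ = taylorMatrix l (fun j => (γ j).map φ) (φ t) := by
  ext j i
  simp [taylorMatrix, ← map_taylor]

theorem IsMomentCurveMod.map_eq {π : R} {φ : R →+* K} (hπ : φ π = 0) {γ : Fin k → R[X]}
    (hγ : IsMomentCurveMod π γ) : (fun j => (γ j).map φ) = momentCurve K k := by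
  ext1 j
  obtain ⟨g, hg⟩ := hγ j
  rw [sub_eq_iff_eq_add.1 hg]
  simp [hπ, momentCurve]

theorem eq_zero_of_X_pow_dvd_taylor_X_pow_mul {e : ℕ} {u : K} (hu : u ≠ 0 ∨ e = 0) {q : K[X]}
    (hq : q.degree < l) (h : X ^ l ∣ taylor u (X ^ e * q)) : q = 0 := by
  rw [taylor_mul, taylor_X_pow] at h
  have hcop : IsCoprime ((X : K[X]) ^ l) ((X + C u) ^ e) := by
    rcases hu with hu | rfl
    · have := isCoprime_X_sub_C_of_isUnit_sub (a := (0 : K)) (b := -u) (by simpa using hu)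
      simpa using this.pow (m := l) (n := e)
    · simpa using isCoprime_one_right
  rw [← taylor_eq_zero u]
  exact eq_zero_of_dvd_of_degree_lt (hcop.dvd_of_dvd_mul_left h) (by simpa using hq)

theorem det_taylorMatrix_X_pow_ne_zero {e : ℕ} {u : K} (hu : u ≠ 0 ∨ e = 0)
    (hK : ∀ j < l, ((e + j + 1 : ℕ) : K) ≠ 0) :
    (taylorMatrix l (fun j : Fin l => (X : K[X]) ^ (e + j.1 + 1)) u).det ≠ 0 := by
  intro h
  obtain ⟨v, hv₀, hv⟩ := exists_vecMul_eq_zero_iff.2 h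
  apply hv₀
  set q : K[X] := ∑ j : Fin l, C (v j * (e + j.1 + 1 : ℕ)) * X ^ j.1
  have hderiv : derivative (taylor u (∑ j : Fin l, C (v j) * X ^ (e + j.1 + 1))) =
      taylor u (X ^ e * q) := by
    simp only [q, map_sum, mul_sum, taylor_mul, taylor_C, taylor_X_pow, derivative_C_mul,
      derivative_X_add_C_pow, C_mul, Nat.add_sub_cancel]
    exact sum_congr rfl fun j _ => by ring
  have hq : q = 0 := by
    refine eq_zero_of_X_pow_dvd_taylor_X_pow_mul hu (degree_sum_fin_lt _) ?_
    rw [← hderiv, X_pow_dvd_iff]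
    intro d hd
    have hvd := congrFun hv ⟨d, hd⟩
    simp only [vecMul, dotProduct, taylorMatrix, of_apply, Pi.zero_apply] at hvd
    simp only [coeff_derivative, map_sum, taylor_mul, taylor_C, finsetSum_coeff, coeff_C_mul]
    rw [← sum_mul, hvd, zero_mul]
  ext j
  have hj := congrArg (coeff · j.1) hq
  simp only [q, finsetSum_coeff, coeff_C_mul, coeff_X_pow, coeff_zero, Fin.val_inj, mul_ite,
    mul_one, mul_zero, sum_ite_eq, mem_univ, if_true] at hj
  exact (mul_eq_zero.1 hj).resolve_right (hK j j.2)

theorem taylorMatrix_eq_mul {γ : Fin k → R[X]} (hγ : ∀ j, (γ j).natDegree ≤ k) (c t : R) :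
    taylorMatrix l γ t = taylorMatrix k γ c * taylorMatrix l (momentCurve R k) (t - c) := by
  ext j i
  have hsum : taylor c (γ j) = C ((taylor c (γ j)).coeff 0) +
      ∑ m : Fin k, C ((taylor c (γ j)).coeff (m.1 + 1)) * X ^ (m.1 + 1) := by
    rw [Fin.sum_univ_eq_sum_range fun m => C ((taylor c (γ j)).coeff (m + 1)) * X ^ (m + 1),
      add_comm]
    have := as_sum_range_C_mul_X_pow' (p := taylor c (γ j)) (n := k + 1)
      (Nat.lt_succ_of_le ((natDegree_taylor _ _).trans_le (hγ j)))
    simpa [sum_range_succ'] using this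
  have htc : taylor t (γ j) = taylor (t - c) (taylor c (γ j)) := by
    rw [taylor_taylor, sub_add_cancel]
  simp only [taylorMatrix, of_apply, mul_apply, htc]
  conv_lhs => rw [hsum]
  simp [momentCurve, finsetSum_coeff, taylor_mul]

theorem natDegree_momentCurve_le (R : Type*) [CommRing R] (k : ℕ) (j : Fin k) :
    (momentCurve R k j).natDegree ≤ k :=
  (natDegree_X_pow_le _).trans j.2

section Reduction

variable {π : R} {φ : R →+* K} [IsLocalHom φ] {γ : Fin k → R[X]}

theorem IsMomentCurveMod.isUnit_det_taylorMatrix (hγ : IsMomentCurveMod π γ) (hπ : φ π = 0)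
    (hK : ∀ j < k, ((j + 1 : ℕ) : K) ≠ 0) (c : R) : IsUnit (taylorMatrix k γ c).det := by
  refine IsUnit.of_map φ _ (IsUnit.mk0 _ ?_)
  rw [RingHom.map_det, RingHom.mapMatrix_apply, taylorMatrix_map, hγ.map_eq hπ]
  unfold momentCurve
  simpa only [zero_add] using
    det_taylorMatrix_X_pow_ne_zero (e := 0) (u := φ c) (Or.inr rfl) (by simpa using hK)

theorem IsMomentCurveMod.isUnit_det_submatrix_inv_mul_taylorMatrix (hγ : IsMomentCurveMod π γ)
    (hπ : φ π = 0) (hK : ∀ j < k, ((j + 1 : ℕ) : K) ≠ 0) {c t : R} (hct : φ t ≠ φ c)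
    {f : Fin l → Fin k} (e : ℕ) (hf : ∀ j, (f j).1 = e + j.1) (hlk : e + l ≤ k) :
    IsUnit ((taylorMatrix k γ c)⁻¹.submatrix f id * taylorMatrix l γ t).det := by
  refine IsUnit.of_map φ _ (IsUnit.mk0 _ ?_)
  have hdet := hγ.isUnit_det_taylorMatrix hπ hK c
  have hinv : ((taylorMatrix k γ c)⁻¹).map φ * taylorMatrix k (momentCurve K k) (φ c) = 1 := by
    rw [← hγ.map_eq hπ, ← taylorMatrix_map, ← Matrix.map_mul, nonsing_inv_mul _ hdet]
    simp
  have hred : ((taylorMatrix k γ c)⁻¹.submatrix f id * taylorMatrix l γ t).map φ =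
      taylorMatrix l (fun j : Fin l => X ^ (e + j.1 + 1)) (φ t - φ c) := by
    rw [Matrix.map_mul, taylorMatrix_map, hγ.map_eq hπ,
      taylorMatrix_eq_mul (natDegree_momentCurve_le K k) (φ c), ← Matrix.mul_assoc]
    have : ((taylorMatrix k γ c)⁻¹.submatrix f id).map φ * taylorMatrix k (momentCurve K k) (φ c) =
        (1 : Matrix (Fin k) (Fin k) K).submatrix f id := by
      rw [← hinv]; rfl
    rw [this]
    ext j i
    simp [Matrix.mul_apply, Matrix.one_apply, taylorMatrix, momentCurve, hf]
  rw [RingHom.map_det, RingHom.mapMatrix_apply, hred]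
  exact det_taylorMatrix_X_pow_ne_zero (Or.inl (sub_ne_zero.2 hct)) fun j hj => hK _ (by omega)

end Reduction

end TaylorMatrix

section Triangle

/-- The triangular number `1 + 2 + ⋯ + l`; the critical decoupling exponent of the moment curve in
dimension `k` is `2 * triangle k`. -/
def triangle (l : ℕ) : ℕ := l * (l + 1) / 2

variable {k l : ℕ}

theorem two_mul_triangle (l : ℕ) : 2 * triangle l = l * (l + 1) :=
  Nat.mul_div_cancel' (Nat.even_mul_succ_self l).two_dvd

theorem triangle_strictMono : StrictMono triangle := fun l k h => by
  have hl := two_mul_triangle l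
  have hk := two_mul_triangle k
  nlinarith

theorem triangle_ne_zero (hk : k ≠ 0) : triangle k ≠ 0 :=
  (triangle_strictMono (Nat.pos_of_ne_zero hk)).ne_bot

theorem cast_triangle (l : ℕ) : (triangle l : ℝ) = l * (l + 1) / 2 := by
  rw [eq_div_iff two_ne_zero, mul_comm]
  exact_mod_cast two_mul_triangle l

theorem cast_triangle_sub_one {r : ℕ} (hr : r ≠ 0) :
    (triangle (r - 1) : ℝ) = r * (r - 1) / 2 := by
  rw [cast_triangle, Nat.cast_pred (Nat.pos_of_ne_zero hr)]
  ring

theorem cast_triangle_sub (h : l ≤ k) :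
    ((triangle k - triangle l : ℕ) : ℝ) = triangle k - triangle l :=
  Nat.cast_sub (triangle_strictMono.monotone h)

end Triangle

section CurveSums

open Polynomial Matrix

variable {p M k N a : ℕ}

/-- The phase at `x` of the frequency with parameter `u` on the curve `γ`. Sums over frequencies
that are distinct modulo `p ^ N` only need the phases in `p ^ (M - k * N) ℤ / p ^ M ℤ`. -/
def curvePhase (N : ℕ) (γ : Fin k → (ZMod (p ^ M))[X]) (x : Fin k → ZMod (p ^ M))
    (u : ZMod (p ^ M)) : ZMod (p ^ M) :=
  (p : ZMod (p ^ M)) ^ (M - k * N) * (x ⬝ᵥ curveEval γ u)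

theorem curvePhase_add (γ : Fin k → (ZMod (p ^ M))[X]) (x y : Fin k → ZMod (p ^ M))
    (u : ZMod (p ^ M)) : curvePhase N γ (x + y) u =
      curvePhase N γ x u + curvePhase N γ y u := by
  rw [curvePhase, add_dotProduct, mul_add]; rfl

variable [NeZero p]

/-- The exponential sum over the frequencies in `s` along the curve `γ`, with coefficients `c`. -/
noncomputable def curveSum (N : ℕ) (γ : Fin k → (ZMod (p ^ M))[X]) (c : ℤ → ℂ) (s : Finset ℤ)
    (x : Fin k → ZMod (p ^ M)) : ℂ :=
  ∑ i ∈ s, c i * ZMod.stdAddChar (curvePhase N γ x i)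

/-- The squared `L ^ (2 * triangle k)` norm, for the counting measure, of a sum along a curve. -/
noncomputable def curveSumNormSq (N : ℕ) (γ : Fin k → (ZMod (p ^ M))[X]) (c : ℤ → ℂ)
    (s : Finset ℤ) : ℝ :=
  (∑ x, ‖curveSum N γ c s x‖ ^ (2 * triangle k)) ^ (triangle k : ℝ)⁻¹

/-- The square function side of decoupling: the sum of the squared norms of the pieces of a sum
along a curve with frequencies in a fixed class modulo `p ^ N`. -/
noncomputable def squareSum (N : ℕ) (γ : Fin k → (ZMod (p ^ M))[X]) (c : ℤ → ℂ)
    (s : Finset ℤ) : ℝ :=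
  ∑ J ∈ (residueClasses (p ^ N) s).parts, curveSumNormSq N γ c J

/-- `ℓ²` decoupling with constant `C ^ (1 / (2 * triangle k))` at scale `p ^ N`, uniformly over the
curves congruent to the moment curve of dimension `k` modulo `p`. -/
def HasDecoupling (p M k N : ℕ) [NeZero p] (C : ℝ) : Prop :=
  0 ≤ C ∧ ∀ γ : Fin k → (ZMod (p ^ M))[X], IsMomentCurveMod (p : ZMod (p ^ M)) γ → ∀ c s,
    ∑ x, ‖curveSum N γ c s x‖ ^ (2 * triangle k) ≤ C * squareSum N γ c s ^ triangle k

variable {γ : Fin k → (ZMod (p ^ M))[X]} {c : ℤ → ℂ} {s J : Finset ℤ} {C C' : ℝ}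

theorem sum_curveSum_residueClasses (q : ℕ) (x : Fin k → ZMod (p ^ M)) :
    ∑ J ∈ (residueClasses q s).parts, curveSum N γ c J x = curveSum N γ c s x :=
  sum_residueClasses q s _

theorem curveSumNormSq_nonneg : 0 ≤ curveSumNormSq N γ c s := by
  unfold curveSumNormSq
  positivity

theorem curveSumNormSq_pow (hk : k ≠ 0) :
    curveSumNormSq N γ c s ^ triangle k = ∑ x, ‖curveSum N γ c s x‖ ^ (2 * triangle k) :=
  Real.rpow_inv_natCast_pow (by positivity) (triangle_ne_zero hk)

theorem squareSum_nonneg : 0 ≤ squareSum N γ c s :=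
  sum_nonneg fun _ _ => curveSumNormSq_nonneg

theorem sum_squareSum_residueClasses (ha : a ≤ N) :
    ∑ J ∈ (residueClasses (p ^ a) s).parts, squareSum N γ c J = squareSum N γ c s :=
  sum_residueClasses_residueClasses (pow_dvd_pow p ha) s _

theorem squareSum_le_of_mem_residueClasses (ha : a ≤ N)
    (hJ : J ∈ (residueClasses (p ^ a) s).parts) : squareSum N γ c J ≤ squareSum N γ c s := by
  rw [← sum_squareSum_residueClasses (s := s) ha]
  exact single_le_sum (f := squareSum N γ c) (fun _ _ => squareSum_nonneg) hJ

theorem norm_curveSum_pow_le (x : Fin k → ZMod (p ^ M)) (a : ℕ) {m : ℕ} (hm : m ≠ 0) :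
    ‖curveSum N γ c s x‖ ^ m ≤ ((p ^ a : ℕ) : ℝ) ^ m *
      ∑ J ∈ (residueClasses (p ^ a) s).parts, ‖curveSum N γ c J x‖ ^ m := by
  rw [← sum_curveSum_residueClasses (p ^ a)]
  refine (pow_le_pow_left₀ (norm_nonneg _) (norm_sum_le _ _) m).trans ?_
  exact pow_sum_le_pow_mul_sum_pow _ (fun _ _ => norm_nonneg _) hm
    (card_residueClasses_le (pow_pos (NeZero.pos p) a) s)

theorem HasDecoupling.mono (h : HasDecoupling p M k N C) (hC : C ≤ C') :
    HasDecoupling p M k N C' :=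
  ⟨h.1.trans hC, fun γ hγ c s => (h.2 γ hγ c s).trans <|
    mul_le_mul_of_nonneg_right hC (pow_nonneg squareSum_nonneg _)⟩

theorem hasDecoupling_scale_zero (hk : k ≠ 0) : HasDecoupling p M k 0 1 := by
  refine ⟨zero_le_one, fun γ _ c s => ?_⟩
  rw [one_mul, ← curveSumNormSq_pow hk]
  rcases s.eq_empty_or_nonempty with rfl | hs
  · have h : curveSumNormSq 0 γ c ∅ = 0 := by
      simp [curveSumNormSq, curveSum, triangle_ne_zero hk]
    rw [h, zero_pow (triangle_ne_zero hk)]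
    exact pow_nonneg squareSum_nonneg _
  · rw [squareSum, residueClasses_parts_eq_singleton hs (by simp), sum_singleton]

end CurveSums

section Transfer

open Polynomial Matrix

variable {p M k l N n a : ℕ}

theorem exists_curvePhase_shift_eq (γ : Fin k → (ZMod (p ^ M))[X])
    (W : Matrix (Fin l) (Fin k) (ZMod (p ^ M))) (t : ZMod (p ^ M))
    (hW : IsUnit (W * taylorMatrix l γ t).det) (ha : 1 ≤ a) (hlk : l * (n + a) ≤ k * N)
    (hM : k * N ≤ M) :
    ∃ γ' : Fin l → (ZMod (p ^ M))[X], IsMomentCurveMod (p : ZMod (p ^ M)) γ' ∧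
      ∀ u, ∃ v c₀, ∀ z,
        curvePhase N γ ((((p : ZMod (p ^ M)) ^ (k * N - l * (n + a))) • v) ᵥ* W)
            (t + (p : ZMod (p ^ M)) ^ a * z) = c₀ + curvePhase n γ' u z := by
  set π : ZMod (p ^ M) := (p : ZMod (p ^ M)) with hπ
  set A := W * taylorMatrix l γ t
  obtain ⟨γ', hγ', hexp⟩ := exists_mulVec_curveEval_add_pow_mul π W γ t ha hW
  refine ⟨γ', hγ', fun u => ?_⟩
  let v := (fun i : Fin l => π ^ ((l - 1 - i.1) * a) * u i) ᵥ* A⁻¹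
  have hv : v ᵥ* A = fun i : Fin l => π ^ ((l - 1 - i.1) * a) * u i := by
    rw [vecMul_vecMul, nonsing_inv_mul _ hW, vecMul_one]
  refine ⟨v, curvePhase N γ ((π ^ (k * N - l * (n + a)) • v) ᵥ* W) t, fun z => ?_⟩
  simp only [curvePhase, ← hπ, ← dotProduct_mulVec, hexp, dotProduct_add]
  rw [mul_add]
  congr 1
  rw [dotProduct_mulVec, smul_vecMul, hv, smul_dotProduct, smul_eq_mul, dotProduct, dotProduct,
    mul_sum, mul_sum, mul_sum]
  refine sum_congr rfl fun i _ => ?_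
  have hexp : M - l * n =
      (M - k * N) + (k * N - l * (n + a)) + (l - 1 - i.1) * a + a * (i.1 + 1) := by
    have hi : (l - 1 - i.1) * a + a * (i.1 + 1) = l * a := by
      rw [mul_comm a, ← add_mul]
      congr 1
      omega
    have := mul_add l n a
    omega
  rw [hexp, pow_add, pow_add, pow_add, curveEval]
  ring

/- Shifting by the last `l` rows of the inverse Taylor matrix at `t` only affects the orders beyond
`k - l` of the expansion around `t`, and these are below the resolution. -/
theorem curvePhase_eq_of_dvd_sub {γ : Fin k → (ZMod (p ^ M))[X]} {t i : ℤ}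
    (hT : IsUnit (taylorMatrix k γ t).det) {b : ℕ} (hb : 1 ≤ b)
    {f : Fin l → Fin k} (hf : ∀ i, (f i).1 = k - l + i.1) (hlk : l ≤ k) (hnN : n ≤ N)
    (hln : l * n ≤ (k - l + 1) * b) (hM : k * N ≤ M) (hi : ((p ^ b : ℕ) : ℤ) ∣ i - t)
    (v : Fin l → ZMod (p ^ M)) :
    curvePhase N γ (((p : ZMod (p ^ M)) ^ (k * N - l * n) • v) ᵥ*
        (taylorMatrix k γ t)⁻¹.submatrix f id) i =
      curvePhase N γ (((p : ZMod (p ^ M)) ^ (k * N - l * n) • v) ᵥ*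
        (taylorMatrix k γ t)⁻¹.submatrix f id) t := by
  obtain ⟨γ', -, hexp⟩ := exists_mulVec_curveEval_add_pow_mul (p : ZMod (p ^ M)) 1 γ t hb
    (by rwa [Matrix.one_mul])
  obtain ⟨z, hz⟩ := hi
  have hit : (i : ZMod (p ^ M)) = t + (p : ZMod (p ^ M)) ^ b * z := by
    rw [← sub_eq_iff_eq_add']
    exact_mod_cast congrArg (Int.cast : ℤ → ZMod (p ^ M)) hz
  have hrows : (taylorMatrix k γ t)⁻¹.submatrix f id * taylorMatrix k γ t =
      (1 : Matrix (Fin k) (Fin k) (ZMod (p ^ M))).submatrix f id := by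
    rw [← nonsing_inv_mul _ hT]; rfl
  simp only [Matrix.one_mul, one_mulVec] at hexp
  rw [curvePhase, curvePhase, hit, hexp, dotProduct_add, mul_add, add_eq_left, dotProduct_mulVec,
    vecMul_vecMul, hrows, ← dotProduct_mulVec, smul_dotProduct, smul_eq_mul, dotProduct, mul_sum,
    mul_sum]
  refine sum_eq_zero fun j _ => ?_
  have hzero : (p : ZMod (p ^ M)) ^ (M - k * N + (k * N - l * n) + b * ((f j).1 + 1)) = 0 := by
    have hlnN : l * n ≤ k * N := Nat.mul_le_mul hlk hnN
    have hlast : (k - l + 1) * b ≤ b * ((f j).1 + 1) := by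
      rw [mul_comm, hf]
      exact Nat.mul_le_mul_left b (by omega)
    have hpM : (p : ZMod (p ^ M)) ^ M = 0 := by exact_mod_cast ZMod.natCast_self (p ^ M)
    exact pow_eq_zero_of_le (by omega) hpM
  have hsub : ((1 : Matrix (Fin k) (Fin k) (ZMod (p ^ M))).submatrix f id *ᵥ
      fun i => (p : ZMod (p ^ M)) ^ (b * (i.1 + 1)) * (γ' i).eval (z : ZMod (p ^ M))) j =
      (p : ZMod (p ^ M)) ^ (b * ((f j).1 + 1)) * (γ' (f j)).eval (z : ZMod (p ^ M)) := by
    simp [mulVec, dotProduct, Matrix.one_apply]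
  rw [hsub]
  linear_combination v j * (γ' (f j)).eval (z : ZMod (p ^ M)) * hzero

variable [NeZero p]

theorem norm_curveSum_image_add {γ : Fin k → (ZMod (p ^ M))[X]} {γ' : Fin l → (ZMod (p ^ M))[X]}
    {y : Fin k → ZMod (p ^ M)} {u : Fin l → ZMod (p ^ M)} {c₀ : ZMod (p ^ M)} {t d : ℤ} (hd : d ≠ 0)
    (hphase : ∀ z, curvePhase N γ y (t + d * z) = c₀ + curvePhase n γ' u z)
    (c : ℤ → ℂ) (s : Finset ℤ) (x : Fin k → ZMod (p ^ M)) :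
    ‖curveSum N γ c (s.image fun z => t + d * z) (x + y)‖ = ‖curveSum n γ'
      (fun z => c (t + d * z) * ZMod.stdAddChar (curvePhase N γ x ((t + d * z : ℤ)))) s u‖ := by
  have hsum : curveSum N γ c (s.image fun z => t + d * z) (x + y) =
      ZMod.stdAddChar c₀ * curveSum n γ'
        (fun z => c (t + d * z) * ZMod.stdAddChar (curvePhase N γ x ((t + d * z : ℤ)))) s u := by
    rw [curveSum, sum_image fun i _ j _ h => by simpa [hd] using h, curveSum, mul_sum]
    refine sum_congr rfl fun z _ => ?_
    have hz : ((t + d * z : ℤ) : ZMod (p ^ M)) = t + d * z := by push_cast; rfl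
    rw [curvePhase_add, hz, hphase, AddChar.map_add_eq_mul, AddChar.map_add_eq_mul]
    ring
  rw [hsum, norm_mul, AddChar.norm_apply, one_mul]

theorem norm_curveSum_add_of_curvePhase_eq {γ : Fin k → (ZMod (p ^ M))[X]} {c : ℤ → ℂ}
    {s : Finset ℤ} {y : Fin k → ZMod (p ^ M)} {φ : ZMod (p ^ M)}
    (h : ∀ i ∈ s, curvePhase N γ y (i : ℤ) = φ) (x : Fin k → ZMod (p ^ M)) :
    ‖curveSum N γ c s (x + y)‖ = ‖curveSum N γ c s x‖ := by
  have hsum : curveSum N γ c s (x + y) = ZMod.stdAddChar φ * curveSum N γ c s x := by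
    rw [curveSum, curveSum, mul_sum]
    refine sum_congr rfl fun i hi => ?_
    rw [curvePhase_add, h i hi, AddChar.map_add_eq_mul]
    ring
  rw [hsum, norm_mul, AddChar.norm_apply, one_mul]

theorem sum_mul_sum_add_eq {G U : Type*} [Fintype G] [AddGroup G] [Fintype U] {w : G → ℝ}
    {ρ : U → G} (hw : ∀ x u, w (x + ρ u) = w x) (f : G → ℝ) :
    ∑ x, w x * ∑ u, f (x + ρ u) = Fintype.card U * ∑ x, w x * f x := by
  have hshift : ∀ u, ∑ x, w x * f (x + ρ u) = ∑ x, w x * f x := fun u => by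
    rw [← Equiv.sum_comp (Equiv.addRight (ρ u)) fun x => w x * f x]
    exact sum_congr rfl fun x _ => by rw [Equiv.coe_addRight, hw]
  simp_rw [mul_sum]
  rw [sum_comm, sum_congr rfl fun u _ => hshift u, sum_const, nsmul_eq_mul, card_univ, mul_sum]

theorem exists_eq_image_affine {s : Finset ℤ} {d : ℕ} {t : ℤ} (hs : ∀ i ∈ s, (d : ℤ) ∣ i - t) :
    ∃ s₀ : Finset ℤ, s = s₀.image fun z => t + d * z := by
  refine ⟨s.image fun i => (i - t) / d, ?_⟩
  rw [image_image]
  refine (image_id.symm.trans <| image_congr fun i hi => ?_)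
  simp [Int.mul_ediv_cancel' (hs i hi)]

/- Averaging over the shifts of `exists_curvePhase_shift_eq`, which leave the weight invariant,
turns the sum along `γ` into sums along a curve of dimension `l` at the coarser scale `p ^ n`. -/
theorem exists_sum_mul_sum_norm_curveSum_pow_eq (γ : Fin k → (ZMod (p ^ M))[X])
    (W : Matrix (Fin l) (Fin k) (ZMod (p ^ M))) (t : ℤ)
    (hW : IsUnit (W * taylorMatrix l γ t).det) (ha : 1 ≤ a) (hlk : l * (n + a) ≤ k * N)
    (hM : k * N ≤ M) (c : ℤ → ℂ) {w : (Fin k → ZMod (p ^ M)) → ℝ}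
    (hw : ∀ x v, w (x + ((p : ZMod (p ^ M)) ^ (k * N - l * (n + a)) • v) ᵥ* W) = w x) (m : ℕ) :
    ∃ γ' : Fin l → (ZMod (p ^ M))[X], IsMomentCurveMod (p : ZMod (p ^ M)) γ' ∧
      ∃ c' : (Fin k → ZMod (p ^ M)) → ℤ → ℂ, ∀ J : Finset ℤ,
        ∑ x, w x * ∑ u, ‖curveSum n γ' (c' x) J u‖ ^ m = Fintype.card (Fin l → ZMod (p ^ M)) *
          ∑ x, w x * ‖curveSum N γ c (J.image fun z => t + (p ^ a : ℕ) * z) x‖ ^ m := by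
  obtain ⟨γ', hγ', hshift⟩ := exists_curvePhase_shift_eq γ W t hW ha hlk hM
  choose v c₀ hphase using hshift
  refine ⟨γ', hγ', fun x z => c (t + (p ^ a : ℕ) * z) *
    ZMod.stdAddChar (curvePhase N γ x ((t + (p ^ a : ℕ) * z : ℤ))), fun J => ?_⟩
  rw [← sum_mul_sum_add_eq (fun x u => hw x (v u))]
  refine sum_congr rfl fun x _ => congrArg _ (sum_congr rfl fun u _ => ?_)
  rw [norm_curveSum_image_add (by exact_mod_cast NeZero.ne (p ^ a)) fun z => by
    simpa using hphase u z]

theorem HasDecoupling.sum_mul_norm_curveSum_pow_le {C : ℝ} (hC : HasDecoupling p M l n C)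
    (hl : l ≠ 0) (γ : Fin k → (ZMod (p ^ M))[X]) (W : Matrix (Fin l) (Fin k) (ZMod (p ^ M))) {t : ℤ}
    (hW : IsUnit (W * taylorMatrix l γ t).det) (ha : 1 ≤ a) (hlk : l * (n + a) ≤ k * N)
    (hM : k * N ≤ M) (c : ℤ → ℂ) {s : Finset ℤ} (hs : ∀ i ∈ s, ((p ^ a : ℕ) : ℤ) ∣ i - t)
    {w : (Fin k → ZMod (p ^ M)) → ℝ} (hw₀ : ∀ x, 0 ≤ w x)
    (hw : ∀ x v, w (x + ((p : ZMod (p ^ M)) ^ (k * N - l * (n + a)) • v) ᵥ* W) = w x) :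
    ∑ x, w x * ‖curveSum N γ c s x‖ ^ (2 * triangle l) ≤
      C * (∑ J ∈ (residueClasses (p ^ (n + a)) s).parts,
        (∑ x, w x * ‖curveSum N γ c J x‖ ^ (2 * triangle l)) ^ (triangle l : ℝ)⁻¹) ^
          triangle l := by
  have hm := triangle_ne_zero hl
  obtain ⟨s, rfl⟩ := exists_eq_image_affine hs
  obtain ⟨γ', hγ', c', haverage⟩ :=
    exists_sum_mul_sum_norm_curveSum_pow_eq γ W t hW ha hlk hM c hw (2 * triangle l)
  set U := (Fintype.card (Fin l → ZMod (p ^ M)) : ℝ)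
  have hU : 0 < U := Nat.cast_pos.2 Fintype.card_pos
  have hclass : ∀ J : Finset ℤ, (∑ x, w x * curveSumNormSq n γ' (c' x) J ^ triangle l) ^
      (triangle l : ℝ)⁻¹ = U ^ (triangle l : ℝ)⁻¹ * (∑ x, w x * ‖curveSum N γ c
        (J.image fun z => t + (p ^ a : ℕ) * z) x‖ ^ (2 * triangle l)) ^ (triangle l : ℝ)⁻¹ := by
    intro J
    rw [← Real.mul_rpow hU.le (sum_nonneg fun x _ => mul_nonneg (hw₀ x) (by positivity)),
      ← haverage]
    simp_rw [curveSumNormSq_pow hl]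
  refine le_of_mul_le_mul_left ?_ hU
  calc U * ∑ x, w x * ‖curveSum N γ c (s.image fun z => t + (p ^ a : ℕ) * z) x‖ ^ (2 * triangle l)
      = ∑ x, w x * ∑ u, ‖curveSum n γ' (c' x) s u‖ ^ (2 * triangle l) := (haverage s).symm
    _ ≤ ∑ x, w x * (C * squareSum n γ' (c' x) s ^ triangle l) :=
        sum_le_sum fun x _ => mul_le_mul_of_nonneg_left (hC.2 γ' hγ' _ s) (hw₀ x)
    _ = C * ∑ x, w x * squareSum n γ' (c' x) s ^ triangle l := by
        rw [mul_sum]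
        exact sum_congr rfl fun x _ => mul_left_comm _ _ _
    _ ≤ C * (∑ J ∈ (residueClasses (p ^ n) s).parts,
          (∑ x, w x * curveSumNormSq n γ' (c' x) J ^ triangle l) ^ (triangle l : ℝ)⁻¹) ^
            triangle l :=
        mul_le_mul_of_nonneg_left (sum_weight_mul_sum_pow_le univ _ hm (fun x _ => hw₀ x)
          fun J _ x _ => curveSumNormSq_nonneg) hC.1
    _ = _ := by
        rw [pow_add, sum_residueClasses_image_affine (NeZero.ne (p ^ a)), sum_congr rfl fun J _ =>
          hclass J, ← mul_sum, mul_pow, Real.rpow_inv_natCast_pow hU.le hm, mul_left_comm]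

end Transfer

section Bilinear

open Polynomial Matrix

variable {p M k l N n a b : ℕ} [Fact p.Prime]

theorem isLocalHom_castHom_pow (hM : M ≠ 0) :
    IsLocalHom (ZMod.castHom (dvd_pow_self p hM) (ZMod p)) := by
  refine ⟨fun u hu => ?_⟩
  obtain ⟨m, rfl⟩ := ZMod.natCast_zmod_surjective u
  rw [map_natCast, ZMod.isUnit_iff_coprime] at hu
  exact (ZMod.isUnit_iff_coprime _ _).2 (hu.pow_right M)

theorem natCast_add_one_ne_zero_of_lt (hkp : k < p) : ∀ j < k, ((j + 1 : ℕ) : ZMod p) ≠ 0 :=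
  fun j hj h => Nat.not_dvd_of_pos_of_lt j.succ_pos ((Nat.succ_le_of_lt hj).trans_lt hkp)
    ((ZMod.natCast_eq_zero_iff _ _).1 h)

variable {γ : Fin k → (ZMod (p ^ M))[X]}

theorem isUnit_det_taylorMatrix (hγ : IsMomentCurveMod (p : ZMod (p ^ M)) γ) (hM : M ≠ 0)
    (hkp : k < p) (t : ZMod (p ^ M)) : IsUnit (taylorMatrix k γ t).det :=
  have := isLocalHom_castHom_pow (p := p) hM
  hγ.isUnit_det_taylorMatrix (φ := ZMod.castHom (dvd_pow_self p hM) (ZMod p)) (by simp)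
    (natCast_add_one_ne_zero_of_lt hkp) t

theorem isUnit_det_submatrix_inv_mul_taylorMatrix (hγ : IsMomentCurveMod (p : ZMod (p ^ M)) γ)
    (hM : M ≠ 0) (hkp : k < p) (hlk : l ≤ k) {t t' : ℤ} (htt' : ¬ (p : ℤ) ∣ t - t')
    {f : Fin l → Fin k} (hf : ∀ i, (f i).1 = k - l + i.1) :
    IsUnit ((taylorMatrix k γ t')⁻¹.submatrix f id * taylorMatrix l γ t).det := by
  have := isLocalHom_castHom_pow (p := p) hM
  refine hγ.isUnit_det_submatrix_inv_mul_taylorMatrix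
    (φ := ZMod.castHom (dvd_pow_self p hM) (ZMod p)) (by simp)
    (natCast_add_one_ne_zero_of_lt hkp) (fun h => htt' ?_) (k - l) hf (Nat.sub_add_cancel hlk).le
  rw [map_intCast, map_intCast] at h
  exact (ZMod.intCast_eq_intCast_iff_dvd_sub _ _ _).1 h.symm

theorem HasDecoupling.rescale {C : ℝ} (hC : HasDecoupling p M k (N - a) C) (hk : k ≠ 0)
    (hkp : k < p) (ha : 1 ≤ a) (haN : a ≤ N) (hM : k * N ≤ M)
    (hγ : IsMomentCurveMod (p : ZMod (p ^ M)) γ) (c : ℤ → ℂ) {s : Finset ℤ} {t : ℤ}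
    (hs : ∀ i ∈ s, ((p ^ a : ℕ) : ℤ) ∣ i - t) :
    ∑ x, ‖curveSum N γ c s x‖ ^ (2 * triangle k) ≤ C * squareSum N γ c s ^ triangle k := by
  have hM₀ : M ≠ 0 := fun h => by
    have := Nat.mul_pos (Nat.pos_of_ne_zero hk) (ha.trans haN)
    omega
  have hNa : N - a + a = N := Nat.sub_add_cancel haN
  have := hC.sum_mul_norm_curveSum_pow_le hk γ 1
    (by rw [Matrix.one_mul]; exact isUnit_det_taylorMatrix hγ hM₀ hkp (t : ZMod (p ^ M))) ha
    (by rw [hNa]) hM c hs (w := fun _ => 1) (fun _ => zero_le_one) (fun _ _ => rfl)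
  simpa only [one_mul, hNa, squareSum, curveSumNormSq] using this

/-- The bilinear estimate with constant `C`, for the frequencies in a class modulo `p ^ a`, of
degree `2 * triangle l`, and those in a class modulo `p ^ b`, of the complementary degree, when the
two classes are distinct modulo `p`. -/
def HasBilinearDecoupling (p M k N l a b : ℕ) [NeZero p] (C : ℝ) : Prop :=
  0 ≤ C ∧ ∀ γ : Fin k → (ZMod (p ^ M))[X], IsMomentCurveMod (p : ZMod (p ^ M)) γ →
    ∀ (c : ℤ → ℂ) (s s' : Finset ℤ) (t t' : ℤ), (∀ i ∈ s, ((p ^ a : ℕ) : ℤ) ∣ i - t) →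
    (∀ i ∈ s', ((p ^ b : ℕ) : ℤ) ∣ i - t') → ¬ (p : ℤ) ∣ t - t' →
    ∑ x, (‖curveSum N γ c s x‖ ^ 2) ^ triangle l *
        (‖curveSum N γ c s' x‖ ^ 2) ^ (triangle k - triangle l) ≤
      C * (squareSum N γ c s ^ triangle l * squareSum N γ c s' ^ (triangle k - triangle l))

variable {C C' C₁ C₂ : ℝ}

theorem HasBilinearDecoupling.mono (h : HasBilinearDecoupling p M k N l a b C) (hC : C ≤ C') :
    HasBilinearDecoupling p M k N l a b C' :=
  ⟨h.1.trans hC, fun γ hγ c s s' t t' hs hs' htt' => (h.2 γ hγ c s s' t t' hs hs' htt').trans <|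
    mul_le_mul_of_nonneg_right hC
      (mul_nonneg (pow_nonneg squareSum_nonneg _) (pow_nonneg squareSum_nonneg _))⟩

theorem HasDecoupling.bilinear_zero (hC : HasDecoupling p M k (N - b) C) (hk : k ≠ 0)
    (hkp : k < p) (hb : 1 ≤ b) (hbN : b ≤ N) (hM : k * N ≤ M) :
    HasBilinearDecoupling p M k N 0 a b C := by
  refine ⟨hC.1, fun γ hγ c _ s' _ t' _ hs' _ => ?_⟩
  simpa [triangle, ← pow_mul] using hC.rescale hk hkp hb hbN hM hγ c hs'

theorem HasDecoupling.bilinear (ha : HasDecoupling p M k (N - a) C)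
    (hb : HasDecoupling p M k (N - b) C) (hk : k ≠ 0) (hlk : l ≤ k) (hkp : k < p) (ha₁ : 1 ≤ a)
    (haN : a ≤ N) (hb₁ : 1 ≤ b) (hbN : b ≤ N) (hM : k * N ≤ M) :
    HasBilinearDecoupling p M k N l a b C := by
  refine ⟨ha.1, fun γ hγ c s s' t t' hs hs' _ => ?_⟩
  have hT : (0 : ℝ) < triangle k := Nat.cast_pos.2 (Nat.pos_of_ne_zero (triangle_ne_zero hk))
  set θ : ℝ := (triangle k - triangle l : ℕ) / triangle k
  have hθ₀ : 0 ≤ θ := by positivity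
  have hθ₁ : θ ≤ 1 := div_le_one_of_le₀ (Nat.cast_le.2 (Nat.sub_le _ _)) hT.le
  have hθT : θ * triangle k = (triangle k - triangle l : ℕ) := div_mul_cancel₀ _ hT.ne'
  have hC : C ^ (1 - θ) * C ^ θ = C := by
    rw [← Real.rpow_add_of_nonneg ha.1 (sub_nonneg.2 hθ₁) hθ₀, sub_add_cancel, Real.rpow_one]
  rw [← hC]
  refine sum_pow_mul_pow_le_interpolate univ hθ₀ hθ₁ (m₁ := triangle k) (n₁ := 0) (m₂ := 0)
    (n₂ := triangle k) (fun _ => by positivity) (fun _ => by positivity) squareSum_nonneg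
    squareSum_nonneg ha.1 ha.1 ?_ ?_ ?_ ?_
  · rw [sub_mul, hθT, cast_triangle_sub hlk]; simp
  · simpa using hθT
  · simpa [← pow_mul] using ha.rescale hk hkp ha₁ haN hM hγ c hs
  · simpa [← pow_mul] using hb.rescale hk hkp hb₁ hbN hM hγ c hs'

theorem HasBilinearDecoupling.interpolate (h₁ : HasBilinearDecoupling p M k N (l - 1) a b C₁)
    (h₂ : HasBilinearDecoupling p M k N (k - l) b a C₂) (hl : 1 ≤ l) (hlk : l < k) :
    HasBilinearDecoupling p M k N l a b
      (C₁ ^ (1 - 1 / ((k : ℝ) - l + 1)) * C₂ ^ (1 / ((k : ℝ) - l + 1))) := by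
  refine ⟨mul_nonneg (Real.rpow_nonneg h₁.1 _) (Real.rpow_nonneg h₂.1 _),
    fun γ hγ c s s' t t' hs hs' htt' => ?_⟩
  have hlk' : (l : ℝ) < k := Nat.cast_lt.2 hlk
  have hd : 0 < (k : ℝ) - l + 1 := by linarith
  have hm : (1 - 1 / ((k : ℝ) - l + 1)) * triangle (l - 1) +
      1 / ((k : ℝ) - l + 1) * (triangle k - triangle (k - l) : ℕ) = triangle l := by
    rw [cast_triangle_sub (Nat.sub_le _ _), cast_triangle, cast_triangle, cast_triangle,
      cast_triangle, Nat.cast_sub hl, Nat.cast_sub hlk.le]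
    field_simp
    push_cast
    ring
  refine sum_pow_mul_pow_le_interpolate univ (n₂ := triangle (k - l)) (by positivity)
    ((div_le_one hd).2 (by linarith)) (fun _ => by positivity) (fun _ => by positivity)
    squareSum_nonneg squareSum_nonneg h₁.1 h₂.1 hm ?_ (h₁.2 γ hγ c s s' t t' hs hs' htt') ?_
  · rw [cast_triangle_sub (by omega)] at hm
    rw [cast_triangle_sub (by omega), cast_triangle_sub hlk.le, ← hm]
    ring
  · simpa only [mul_comm] using h₂.2 γ hγ c s' s t' t hs' hs (by rwa [dvd_sub_comm])

theorem HasBilinearDecoupling.root_sum_le {c : ℤ → ℂ} {s s' J : Finset ℤ} {t t' : ℤ}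
    (h : HasBilinearDecoupling p M k N l n b C) (hl : l ≠ 0)
    (hγ : IsMomentCurveMod (p : ZMod (p ^ M)) γ) (ha : 1 ≤ a)
    (hs : ∀ i ∈ s, ((p ^ a : ℕ) : ℤ) ∣ i - t) (hs' : ∀ i ∈ s', ((p ^ b : ℕ) : ℤ) ∣ i - t')
    (htt' : ¬ (p : ℤ) ∣ t - t') (hJ : J ∈ (residueClasses (p ^ n) s).parts) :
    (∑ x, (‖curveSum N γ c J x‖ ^ 2) ^ triangle l *
        (‖curveSum N γ c s' x‖ ^ 2) ^ (triangle k - triangle l)) ^ (triangle l : ℝ)⁻¹ ≤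
      (C * squareSum N γ c s' ^ (triangle k - triangle l)) ^ (triangle l : ℝ)⁻¹ *
        squareSum N γ c J := by
  obtain ⟨i, hi⟩ := (residueClasses (p ^ n) s).nonempty_of_mem_parts hJ
  have hit : (p : ℤ) ∣ i - t := (Int.natCast_dvd_natCast.2 (dvd_pow_self p (by omega))).trans
    (hs i (subset_of_mem_residueClasses hJ hi))
  have hit' : ¬ (p : ℤ) ∣ i - t' := fun hd => htt' (by simpa using dvd_sub hd hit)
  have hJ' := h.2 γ hγ c J s' i t' (fun j hj => dvd_sub_of_mem_residueClasses hJ hi hj) hs' hit'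
  have hC : 0 ≤ C * squareSum N γ c s' ^ (triangle k - triangle l) :=
    mul_nonneg h.1 (pow_nonneg squareSum_nonneg _)
  calc _ ≤ (C * squareSum N γ c s' ^ (triangle k - triangle l) *
        squareSum N γ c J ^ triangle l) ^ (triangle l : ℝ)⁻¹ := by
        refine Real.rpow_le_rpow (by positivity) ?_ (by positivity)
        simpa only [mul_comm, mul_left_comm] using hJ'
    _ = _ := by
        rw [Real.mul_rpow hC (pow_nonneg squareSum_nonneg _),
          Real.pow_rpow_inv_natCast squareSum_nonneg (triangle_ne_zero hl)]

theorem HasBilinearDecoupling.descend (h : HasBilinearDecoupling p M k N l n b C₂)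
    (hC : HasDecoupling p M l (n - a) C₁) (hl : l ≠ 0) (hlk : l < k) (hkp : k < p) (ha : 1 ≤ a)
    (hb : 1 ≤ b) (han : a ≤ n) (hnN : n ≤ N) (hln : l * n ≤ (k - l + 1) * b) (hM : k * N ≤ M) :
    HasBilinearDecoupling p M k N l a b (C₁ * C₂) := by
  refine ⟨mul_nonneg hC.1 h.1, fun γ hγ c s s' t t' hs hs' htt' => ?_⟩
  have hM₀ : M ≠ 0 := fun hM₀ => by
    have := Nat.mul_pos (Nat.pos_of_ne_zero (Nat.ne_zero_of_lt hlk)) (ha.trans (han.trans hnN))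
    omega
  have hna : n - a + a = n := Nat.sub_add_cancel han
  let f : Fin l → Fin k := fun i => ⟨k - l + i.1, by omega⟩
  set S' := squareSum N γ c s' ^ (triangle k - triangle l)
  have hS' : 0 ≤ C₂ * S' := mul_nonneg h.1 (pow_nonneg squareSum_nonneg _)
  have hdec := hC.sum_mul_norm_curveSum_pow_le hl γ ((taylorMatrix k γ t')⁻¹.submatrix f id)
    (isUnit_det_submatrix_inv_mul_taylorMatrix hγ hM₀ hkp hlk.le htt' fun _ => rfl) ha
    (by rw [hna]; exact Nat.mul_le_mul hlk.le hnN) hM c hs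
    (w := fun x => (‖curveSum N γ c s' x‖ ^ 2) ^ (triangle k - triangle l))
    (fun x => by positivity) fun x v => by
      rw [hna, norm_curveSum_add_of_curvePhase_eq fun i hi =>
        curvePhase_eq_of_dvd_sub (isUnit_det_taylorMatrix hγ hM₀ hkp t') hb (fun _ => rfl) hlk.le
          hnN hln hM (hs' i hi) v]
  simp only [hna, pow_mul, mul_comm ((‖curveSum N γ c s' _‖ ^ 2) ^ _)] at hdec
  calc _ ≤ _ := hdec
    _ ≤ C₁ * (∑ J ∈ (residueClasses (p ^ n) s).parts,
          (C₂ * S') ^ (triangle l : ℝ)⁻¹ * squareSum N γ c J) ^ triangle l :=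
        mul_le_mul_of_nonneg_left (pow_le_pow_left₀ (sum_nonneg fun _ _ => by positivity)
          (sum_le_sum fun J hJ =>
            h.root_sum_le hl hγ ha hs hs' htt' hJ) _) hC.1
    _ = _ := by
        rw [← mul_sum, sum_squareSum_residueClasses hnN, mul_pow,
          Real.rpow_inv_natCast_pow hS' (triangle_ne_zero hl)]
        ring

theorem HasBilinearDecoupling.sum_le_of_mem_residueClasses {c : ℤ → ℂ} {s s' J J' : Finset ℤ}
    {t t' : ℤ} (h : HasBilinearDecoupling p M k N l a b C)
    (hγ : IsMomentCurveMod (p : ZMod (p ^ M)) γ) (haN : a ≤ N) (hbN : b ≤ N)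
    (hs : ∀ i ∈ s, (p : ℤ) ∣ i - t) (hs' : ∀ i ∈ s', (p : ℤ) ∣ i - t')
    (htt' : ¬ (p : ℤ) ∣ t - t') (hJ : J ∈ (residueClasses (p ^ a) s).parts)
    (hJ' : J' ∈ (residueClasses (p ^ b) s').parts) :
    ∑ x, (‖curveSum N γ c J x‖ ^ 2) ^ triangle l *
        (‖curveSum N γ c J' x‖ ^ 2) ^ (triangle k - triangle l) ≤
      C * (squareSum N γ c s ^ triangle l * squareSum N γ c s' ^ (triangle k - triangle l)) := by
  obtain ⟨i, hi⟩ := (residueClasses (p ^ a) s).nonempty_of_mem_parts hJ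
  obtain ⟨i', hi'⟩ := (residueClasses (p ^ b) s').nonempty_of_mem_parts hJ'
  have hii' : ¬ (p : ℤ) ∣ i - i' := fun hd => htt' <| by
    have := dvd_add (dvd_sub hd (hs i (subset_of_mem_residueClasses hJ hi)))
      (hs' i' (subset_of_mem_residueClasses hJ' hi'))
    rwa [show i - i' - (i - t) + (i' - t') = t - t' by ring] at this
  refine (h.2 γ hγ c J J' i i' (fun j hj => dvd_sub_of_mem_residueClasses hJ hi hj)
    (fun j hj => dvd_sub_of_mem_residueClasses hJ' hi' hj) hii').trans ?_
  have hS := fun s => squareSum_nonneg (N := N) (γ := γ) (c := c) (s := s)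
  gcongr
  exacts [h.1, pow_nonneg (hS _) _, pow_nonneg (hS _) _, hS _,
    squareSum_le_of_mem_residueClasses haN hJ, hS _, squareSum_le_of_mem_residueClasses hbN hJ']

theorem norm_curveSum_pow_mul_norm_curveSum_pow_le {c : ℤ → ℂ} {s s' : Finset ℤ}
    (x : Fin k → ZMod (p ^ M)) (a b : ℕ) {m n : ℕ} (hm : m ≠ 0) (hn : n ≠ 0) :
    (‖curveSum N γ c s x‖ ^ 2) ^ m * (‖curveSum N γ c s' x‖ ^ 2) ^ n ≤
      (p ^ a : ℝ) ^ (2 * m) * (p ^ b : ℝ) ^ (2 * n) *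
        ∑ J ∈ (residueClasses (p ^ a) s).parts, ∑ J' ∈ (residueClasses (p ^ b) s').parts,
          (‖curveSum N γ c J x‖ ^ 2) ^ m * (‖curveSum N γ c J' x‖ ^ 2) ^ n := by
  rw [← sum_mul_sum, mul_mul_mul_comm]
  have hs := norm_curveSum_pow_le (N := N) (γ := γ) (c := c) (s := s) x a
    (mul_ne_zero two_ne_zero hm)
  have hs' := norm_curveSum_pow_le (N := N) (γ := γ) (c := c) (s := s') x b
    (mul_ne_zero two_ne_zero hn)
  rw [Nat.cast_pow] at hs hs'
  simpa only [pow_mul] using mul_le_mul hs hs' (by positivity) (by positivity)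

theorem HasBilinearDecoupling.of_fine (h : HasBilinearDecoupling p M k N l a b C) (hl : l ≠ 0)
    (hlk : l < k) (haN : a ≤ N) (hbN : b ≤ N) :
    HasBilinearDecoupling p M k N l 1 1
      ((p ^ a : ℝ) ^ (2 * triangle l + 1) *
        (p ^ b : ℝ) ^ (2 * (triangle k - triangle l) + 1) * C) := by
  have hC := h.1
  refine ⟨by positivity, fun γ hγ c s s' t t' hs hs' htt' => ?_⟩
  rw [pow_one] at hs hs'
  set S := squareSum N γ c s ^ triangle l * squareSum N γ c s' ^ (triangle k - triangle l)
  have hS : 0 ≤ S := mul_nonneg (pow_nonneg squareSum_nonneg _) (pow_nonneg squareSum_nonneg _)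
  have hl' := triangle_ne_zero hl
  have hkl : triangle k - triangle l ≠ 0 := Nat.sub_ne_zero_of_lt (triangle_strictMono hlk)
  calc _ ≤ _ := sum_le_sum fun x _ =>
          norm_curveSum_pow_mul_norm_curveSum_pow_le x a b hl' hkl
    _ = (p ^ a : ℝ) ^ (2 * triangle l) * (p ^ b : ℝ) ^ (2 * (triangle k - triangle l)) *
        ∑ J ∈ (residueClasses (p ^ a) s).parts, ∑ J' ∈ (residueClasses (p ^ b) s').parts,
          ∑ x, (‖curveSum N γ c J x‖ ^ 2) ^ triangle l *
            (‖curveSum N γ c J' x‖ ^ 2) ^ (triangle k - triangle l) := by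
        rw [← mul_sum, sum_comm, sum_congr rfl fun J _ => sum_comm]
    _ ≤ (p ^ a : ℝ) ^ (2 * triangle l) * (p ^ b : ℝ) ^ (2 * (triangle k - triangle l)) *
        ∑ _J ∈ (residueClasses (p ^ a) s).parts,
          ∑ _J' ∈ (residueClasses (p ^ b) s').parts, C * S := by
        gcongr with J hJ J' hJ'
        exact h.sum_le_of_mem_residueClasses hγ haN hbN hs hs' htt' hJ hJ'
    _ = (p ^ a : ℝ) ^ (2 * triangle l) * (p ^ b : ℝ) ^ (2 * (triangle k - triangle l)) *
        (#(residueClasses (p ^ a) s).parts * (#(residueClasses (p ^ b) s').parts * (C * S))) := by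
        simp only [sum_const, nsmul_eq_mul]
    _ ≤ (p ^ a : ℝ) ^ (2 * triangle l) * (p ^ b : ℝ) ^ (2 * (triangle k - triangle l)) *
        (p ^ a * (p ^ b * (C * S))) := by
        have hpos := fun m => pow_pos (NeZero.pos p) m
        gcongr
        · exact_mod_cast card_residueClasses_le (hpos a) s
        · exact_mod_cast card_residueClasses_le (hpos b) s'
    _ = _ := by ring

end Bilinear

section BroadNarrow

variable {ι : Type*} {t : Finset ι} {f : ι → ℝ} {Q m n : ℕ} {η : ℝ} {j j' : ι}

theorem pow_sum_le_of_broad (hη₀ : 0 < η) (hη₁ : η ≤ 1) (hQ : #t ≤ Q) (hf : ∀ i ∈ t, 0 ≤ f i)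
    (hfj : 0 ≤ f j) (hmax : ∀ i ∈ t, f i ≤ f j) (hbroad : η * f j ≤ f j') :
    (∑ i ∈ t, f i) ^ (m + n) ≤ (Q / η) ^ (m + n) * (f j ^ m * f j' ^ n) := by
  have hsum : ∑ i ∈ t, f i ≤ Q * f j := by
    refine (sum_le_card_nsmul t f (f j) hmax).trans ?_
    rw [nsmul_eq_mul]
    gcongr
  have hj : ∑ i ∈ t, f i ≤ Q / η * f j := by
    refine hsum.trans (mul_le_mul_of_nonneg_right ?_ hfj)
    exact le_div_self (Nat.cast_nonneg Q) hη₀ hη₁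
  have hj' : ∑ i ∈ t, f i ≤ Q / η * f j' := by
    refine hsum.trans ?_
    rw [div_mul_eq_mul_div, mul_div_assoc]
    gcongr
    rwa [le_div_iff₀' hη₀]
  have hnonneg := sum_nonneg hf
  calc (∑ i ∈ t, f i) ^ (m + n) = (∑ i ∈ t, f i) ^ m * (∑ i ∈ t, f i) ^ n := pow_add _ _ _
    _ ≤ (Q / η * f j) ^ m * (Q / η * f j') ^ n := by gcongr
    _ = (Q / η) ^ (m + n) * (f j ^ m * f j' ^ n) := by
      rw [mul_pow, mul_pow, pow_add, mul_mul_mul_comm]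

theorem sum_le_one_add_mul_of_narrow (hη : 0 ≤ η) (hQ : #t ≤ Q) (hj : j ∈ t) (hfj : 0 ≤ f j)
    (hnarrow : ∀ i ∈ t, i ≠ j → f i ≤ η * f j) : ∑ i ∈ t, f i ≤ (1 + Q * η) * f j := by
  classical
  have hrest : ∑ i ∈ t.erase j, f i ≤ Q * (η * f j) :=
    calc ∑ i ∈ t.erase j, f i ≤ ∑ _i ∈ t.erase j, η * f j := sum_le_sum fun i hi =>
          hnarrow i (mem_of_mem_erase hi) (ne_of_mem_erase hi)
      _ = #(t.erase j) * (η * f j) := by rw [sum_const, nsmul_eq_mul]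
      _ ≤ Q * (η * f j) := by
        gcongr
        exact (card_le_card (erase_subset j t)).trans hQ
  rw [← add_sum_erase _ _ hj]
  linarith

/- Either one of the terms dominates all the others, or two of them are comparable to the
largest. -/
theorem pow_sum_le_narrow_add_broad [DecidableEq ι] (hη₀ : 0 < η) (hη₁ : η ≤ 1) (hQ : #t ≤ Q)
    (hf : ∀ i ∈ t, 0 ≤ f i) (hmn : m + n ≠ 0) :
    (∑ i ∈ t, f i) ^ (m + n) ≤ (1 + Q * η) ^ (m + n) * ∑ i ∈ t, f i ^ (m + n) +
      (Q / η) ^ (m + n) * ∑ i ∈ t, ∑ i' ∈ t with i' ≠ i, f i ^ m * f i' ^ n := by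
  have hdiag : 0 ≤ (1 + Q * η) ^ (m + n) * ∑ i ∈ t, f i ^ (m + n) :=
    mul_nonneg (by positivity) (sum_nonneg fun i hi => pow_nonneg (hf i hi) _)
  have hterm : ∀ i ∈ t, ∀ i' ∈ {i' ∈ t | i' ≠ i}, 0 ≤ f i ^ m * f i' ^ n := fun i hi i' hi' =>
    mul_nonneg (pow_nonneg (hf i hi) m) (pow_nonneg (hf i' (mem_filter.1 hi').1) n)
  have hoff : ∀ i ∈ t, 0 ≤ ∑ i' ∈ t with i' ≠ i, f i ^ m * f i' ^ n :=
    fun i hi => sum_nonneg (hterm i hi)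
  rcases t.eq_empty_or_nonempty with rfl | ht
  · simp [zero_pow hmn]
  obtain ⟨j, hj, hmax⟩ := exists_max_image t f ht
  by_cases hbroad : ∃ j' ∈ t, j' ≠ j ∧ η * f j ≤ f j'
  · obtain ⟨j', hj', hne, hle⟩ := hbroad
    refine (pow_sum_le_of_broad hη₀ hη₁ hQ hf (hf j hj) hmax hle).trans ?_
    refine le_add_of_nonneg_of_le hdiag (mul_le_mul_of_nonneg_left ?_ (by positivity))
    exact (single_le_sum (f := fun i' => f j ^ m * f i' ^ n) (hterm j hj)
      (mem_filter.2 ⟨hj', hne⟩)).trans (single_le_sum hoff hj)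
  · push Not at hbroad
    have hsum := sum_le_one_add_mul_of_narrow hη₀.le hQ hj (hf j hj)
      fun i hi hne => (hbroad i hi hne).le
    refine (pow_le_pow_left₀ (sum_nonneg hf) hsum _).trans ?_
    rw [mul_pow]
    refine le_add_of_le_of_nonneg (mul_le_mul_of_nonneg_left ?_ (by positivity))
      (mul_nonneg (by positivity) (sum_nonneg hoff))
    exact single_le_sum (f := fun i => f i ^ (m + n)) (fun i hi => pow_nonneg (hf i hi) _) hj

end BroadNarrow

section LinearFromBilinear

open Polynomial Matrix

variable {p M k l N : ℕ} [Fact p.Prime] {C C₁ C₂ η : ℝ} {γ : Fin k → (ZMod (p ^ M))[X]}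

theorem HasBilinearDecoupling.sum_le_of_ne {c : ℤ → ℂ} {s J J' : Finset ℤ}
    (h : HasBilinearDecoupling p M k N l 1 1 C) (hγ : IsMomentCurveMod (p : ZMod (p ^ M)) γ)
    (hlk : l ≤ k) (hN : 1 ≤ N) (hJ : J ∈ (residueClasses (p ^ 1) s).parts)
    (hJ' : J' ∈ (residueClasses (p ^ 1) s).parts) (hne : J' ≠ J) :
    ∑ x, (‖curveSum N γ c J x‖ ^ 2) ^ triangle l *
        (‖curveSum N γ c J' x‖ ^ 2) ^ (triangle k - triangle l) ≤
      C * squareSum N γ c s ^ triangle k := by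
  obtain ⟨i, hi⟩ := (residueClasses (p ^ 1) s).nonempty_of_mem_parts hJ
  obtain ⟨i', hi'⟩ := (residueClasses (p ^ 1) s).nonempty_of_mem_parts hJ'
  have hii' := not_dvd_sub_of_mem_residueClasses hJ hJ' hne.symm hi hi'
  rw [pow_one] at hii'
  refine (h.2 γ hγ c J J' i i' (fun j hj => dvd_sub_of_mem_residueClasses hJ hi hj)
    (fun j hj => dvd_sub_of_mem_residueClasses hJ' hi' hj) hii').trans ?_
  rw [← Nat.add_sub_cancel' (triangle_strictMono.monotone hlk), pow_add, Nat.add_sub_cancel_left]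
  refine mul_le_mul_of_nonneg_left (mul_le_mul ?_ ?_ ?_ ?_) h.1
  · exact pow_le_pow_left₀ squareSum_nonneg (squareSum_le_of_mem_residueClasses hN hJ) _
  · exact pow_le_pow_left₀ squareSum_nonneg (squareSum_le_of_mem_residueClasses hN hJ') _
  all_goals exact pow_nonneg squareSum_nonneg _

theorem HasBilinearDecoupling.sum_offDiag_le (h : HasBilinearDecoupling p M k N l 1 1 C)
    (hγ : IsMomentCurveMod (p : ZMod (p ^ M)) γ) (hlk : l ≤ k) (hN : 1 ≤ N) (c : ℤ → ℂ)
    (s : Finset ℤ) :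
    ∑ J ∈ (residueClasses (p ^ 1) s).parts, ∑ J' ∈ (residueClasses (p ^ 1) s).parts with J' ≠ J,
        ∑ x, (‖curveSum N γ c J x‖ ^ 2) ^ triangle l *
          (‖curveSum N γ c J' x‖ ^ 2) ^ (triangle k - triangle l) ≤
      (p : ℝ) ^ 2 * C * squareSum N γ c s ^ triangle k := by
  set B := C * squareSum N γ c s ^ triangle k
  have hB : 0 ≤ B := mul_nonneg h.1 (pow_nonneg squareSum_nonneg _)
  have hcard : (#(residueClasses (p ^ 1) s).parts : ℝ) ≤ p := by
    simpa using card_residueClasses_le (pow_pos (NeZero.pos p) 1) s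
  calc _ ≤ ∑ J ∈ (residueClasses (p ^ 1) s).parts,
        ∑ J' ∈ (residueClasses (p ^ 1) s).parts with J' ≠ J, B :=
        sum_le_sum fun J hJ => sum_le_sum fun J' hJ' =>
          h.sum_le_of_ne hγ hlk hN hJ (mem_filter.1 hJ').1 (mem_filter.1 hJ').2
    _ ≤ ∑ _J ∈ (residueClasses (p ^ 1) s).parts,
          ∑ _J' ∈ (residueClasses (p ^ 1) s).parts, B :=
        sum_le_sum fun J _ => sum_le_sum_of_subset_of_nonneg (filter_subset _ _) fun _ _ _ => hB
    _ = #(residueClasses (p ^ 1) s).parts * (#(residueClasses (p ^ 1) s).parts * B) := by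
        simp only [sum_const, nsmul_eq_mul]
    _ ≤ p * (p * B) := by gcongr
    _ = _ := by ring

theorem HasDecoupling.sum_diag_le (h : HasDecoupling p M k (N - 1) C)
    (hγ : IsMomentCurveMod (p : ZMod (p ^ M)) γ) (hk : k ≠ 0) (hkp : k < p) (hN : 1 ≤ N)
    (hM : k * N ≤ M) (c : ℤ → ℂ) (s : Finset ℤ) :
    ∑ J ∈ (residueClasses (p ^ 1) s).parts, ∑ x, ‖curveSum N γ c J x‖ ^ (2 * triangle k) ≤
      C * squareSum N γ c s ^ triangle k := by
  calc _ ≤ ∑ J ∈ (residueClasses (p ^ 1) s).parts, C * squareSum N γ c J ^ triangle k := by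
        refine sum_le_sum fun J hJ => ?_
        obtain ⟨i, hi⟩ := (residueClasses (p ^ 1) s).nonempty_of_mem_parts hJ
        exact h.rescale hk hkp le_rfl hN hM hγ c fun j hj =>
          dvd_sub_of_mem_residueClasses hJ hi hj
    _ ≤ C * squareSum N γ c s ^ triangle k := by
        rw [← mul_sum, ← sum_squareSum_residueClasses (s := s) hN]
        exact mul_le_mul_of_nonneg_left
          (sum_pow_le_pow_sum _ (fun _ _ => squareSum_nonneg) (triangle_ne_zero hk)) h.1

theorem HasDecoupling.of_bilinear (hC : HasDecoupling p M k (N - 1) C₁)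
    (hB : HasBilinearDecoupling p M k N l 1 1 C₂) (hk : k ≠ 0) (hkp : k < p) (hlk : l ≤ k)
    (hN : 1 ≤ N) (hM : k * N ≤ M) (hη₀ : 0 < η) (hη₁ : η ≤ 1) :
    HasDecoupling p M k N
      ((1 + p * η) ^ (2 * triangle k) * C₁ + (p / η) ^ (2 * triangle k) * (p ^ 2 * C₂)) := by
  have hC₁ := hC.1
  have hC₂ := hB.1
  refine ⟨by positivity, fun γ hγ c s => ?_⟩
  set P := (residueClasses (p ^ 1) s).parts
  have hdeg : 2 * triangle k = 2 * triangle l + 2 * (triangle k - triangle l) := by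
    have := triangle_strictMono.monotone hlk
    omega
  have hP : #P ≤ p := (card_residueClasses_le (pow_pos (NeZero.pos p) 1) s).trans (pow_one p).le
  have hpointwise : ∀ x, ‖curveSum N γ c s x‖ ^ (2 * triangle k) ≤
      (1 + p * η) ^ (2 * triangle k) * ∑ J ∈ P, ‖curveSum N γ c J x‖ ^ (2 * triangle k) +
        (p / η) ^ (2 * triangle k) * ∑ J ∈ P, ∑ J' ∈ P with J' ≠ J,
          (‖curveSum N γ c J x‖ ^ 2) ^ triangle l *
            (‖curveSum N γ c J' x‖ ^ 2) ^ (triangle k - triangle l) := fun x => by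
    have hnorm := norm_sum_le P fun J => curveSum N γ c J x
    rw [sum_curveSum_residueClasses] at hnorm
    refine (pow_le_pow_left₀ (norm_nonneg _) hnorm _).trans ?_
    simp only [← pow_mul]
    rw [hdeg]
    exact pow_sum_le_narrow_add_broad hη₀ hη₁ hP (fun _ _ => norm_nonneg _)
      (hdeg ▸ mul_ne_zero two_ne_zero (triangle_ne_zero hk))
  refine (sum_le_sum fun x _ => hpointwise x).trans ?_
  rw [sum_add_distrib, ← mul_sum, ← mul_sum, add_mul, mul_assoc, mul_assoc, sum_comm]
  refine add_le_add ?_ ?_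
  · gcongr
    exact hC.sum_diag_le hγ hk hkp hN hM c s
  · rw [sum_comm, sum_congr rfl fun J _ => sum_comm]
    gcongr
    exact hB.sum_offDiag_le hγ hlk hN c s

end LinearFromBilinear

section DimensionOne

open Polynomial Matrix ComplexConjugate

theorem sum_norm_sum_sq_eq_of_orthogonal {X ι : Type*} [Fintype X] (t : Finset ι)
    (F : ι → X → ℂ) (hF : ∀ i ∈ t, ∀ j ∈ t, i ≠ j → ∑ x, F i x * conj (F j x) = 0) :
    ∑ x, ‖∑ i ∈ t, F i x‖ ^ 2 = ∑ i ∈ t, ∑ x, ‖F i x‖ ^ 2 := by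
  apply Complex.ofReal_injective
  push_cast
  simp only [← Complex.mul_conj', map_sum, sum_mul_sum]
  rw [sum_comm]
  refine sum_congr rfl fun i hi => ?_
  rw [sum_comm]
  exact sum_eq_single_of_mem i hi fun j hj hne => hF i hi j hj hne.symm

variable {p M N : ℕ} [Fact p.Prime] {γ : Fin 1 → (ZMod (p ^ M))[X]}

theorem pow_mul_eval_sub_eval_ne_zero (hγ : IsMomentCurveMod (p : ZMod (p ^ M)) γ) (hNM : N ≤ M)
    {i i' : ℤ} (hii' : ¬ ((p ^ N : ℕ) : ℤ) ∣ i - i') :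
    (p : ZMod (p ^ M)) ^ (M - N) * ((γ 0).eval (i : ZMod (p ^ M)) - (γ 0).eval (i' : ZMod (p ^ M)))
      ≠ 0 := by
  have hM : M ≠ 0 := by
    rintro rfl
    exact hii' (by simp [Nat.le_zero.1 hNM])
  set π := (p : ZMod (p ^ M))
  obtain ⟨g, hg⟩ := hγ 0
  obtain ⟨h, hh⟩ := sub_dvd_eval_sub (i : ZMod (p ^ M)) (i' : ZMod (p ^ M)) g
  have hγ₀ : γ 0 = X + C π * g := by
    rw [← hg]
    simp [momentCurve]
  have hunit : IsUnit (1 + π * h) := by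
    have := isLocalHom_castHom_pow (p := p) hM
    refine isUnit_of_map_unit (ZMod.castHom (dvd_pow_self p hM) (ZMod p)) _ ?_
    rw [map_add, map_mul, map_natCast, ZMod.natCast_self, zero_mul, add_zero, map_one]
    exact isUnit_one
  have heval : π ^ (M - N) * ((γ 0).eval (i : ZMod (p ^ M)) - (γ 0).eval (i' : ZMod (p ^ M))) =
      ((p ^ (M - N) * (i - i') : ℤ) : ZMod (p ^ M)) * (1 + π * h) := by
    simp only [hγ₀, eval_add, eval_mul, eval_C, eval_X]
    push_cast
    linear_combination π ^ (M - N) * π * hh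
  rw [heval, Ne, hunit.mul_left_eq_zero, ZMod.intCast_zmod_eq_zero_iff_dvd]
  intro hdvd
  rw [← Nat.sub_add_cancel hNM, Nat.add_sub_cancel, pow_add] at hdvd
  push_cast at hdvd hii'
  exact hii' (Int.dvd_of_mul_dvd_mul_left (pow_ne_zero _ (by exact_mod_cast NeZero.ne p)) hdvd)

theorem sum_stdAddChar_curvePhase_mul_conj_eq_zero
    (hγ : IsMomentCurveMod (p : ZMod (p ^ M)) γ) (hNM : N ≤ M) {i i' : ℤ}
    (hii' : ¬ ((p ^ N : ℕ) : ℤ) ∣ i - i') :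
    ∑ x, (ZMod.stdAddChar (curvePhase N γ x i) : ℂ) *
      conj (ZMod.stdAddChar (curvePhase N γ x i') : ℂ) = 0 := by
  set d := (p : ZMod (p ^ M)) ^ (M - N) *
    ((γ 0).eval (i : ZMod (p ^ M)) - (γ 0).eval (i' : ZMod (p ^ M))) with hd
  have hd₀ : d ≠ 0 := pow_mul_eval_sub_eval_ne_zero hγ hNM hii'
  have hsum := AddChar.sum_mulShift d (ZMod.isPrimitive_stdAddChar (p ^ M))
  rw [if_neg hd₀, Nat.cast_zero] at hsum
  rw [← hsum, ← Equiv.sum_comp (Equiv.funUnique (Fin 1) (ZMod (p ^ M))).symm]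
  refine sum_congr rfl fun z _ => ?_
  rw [← AddChar.map_neg_eq_conj, ← AddChar.map_add_eq_mul]
  congr 1
  simp [curvePhase, curveEval, dotProduct, hd]
  ring

theorem sum_curveSum_mul_conj_eq_zero (hγ : IsMomentCurveMod (p : ZMod (p ^ M)) γ) (hNM : N ≤ M)
    (c : ℤ → ℂ) {J J' : Finset ℤ}
    (hJJ' : ∀ i ∈ J, ∀ i' ∈ J', ¬ ((p ^ N : ℕ) : ℤ) ∣ i - i') :
    ∑ x, curveSum N γ c J x * conj (curveSum N γ c J' x) = 0 := by
  simp only [curveSum, map_sum, map_mul, sum_mul_sum]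
  rw [sum_comm]
  refine sum_eq_zero fun i hi => ?_
  rw [sum_comm]
  refine sum_eq_zero fun i' hi' => ?_
  simp only [mul_mul_mul_comm]
  rw [← mul_sum, sum_stdAddChar_curvePhase_mul_conj_eq_zero hγ hNM (hJJ' i hi i' hi'), mul_zero]

theorem hasDecoupling_one (hNM : N ≤ M) : HasDecoupling p M 1 N 1 := by
  refine ⟨zero_le_one, fun γ hγ c s => ?_⟩
  have htri : triangle 1 = 1 := rfl
  have horth : ∀ J ∈ (residueClasses (p ^ N) s).parts, ∀ J' ∈ (residueClasses (p ^ N) s).parts,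
      J ≠ J' → ∑ x, curveSum N γ c J x * conj (curveSum N γ c J' x) = 0 := by
    exact fun J hJ J' hJ' hne => sum_curveSum_mul_conj_eq_zero hγ hNM c fun i hi i' hi' =>
      not_dvd_sub_of_mem_residueClasses hJ hJ' hne hi hi'
  have hparseval := sum_norm_sum_sq_eq_of_orthogonal _ (curveSum N γ c) horth
  simp only [sum_curveSum_residueClasses] at hparseval
  simp [htri, hparseval, squareSum, curveSumNormSq]

end DimensionOne

section Exponents

open Polynomial Nat

/-- `p`-adic decoupling for the moment curve of dimension `k` with a power loss of exponent `lam`,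
at all scales `p ^ N` and all moduli `p ^ M` that can accommodate them. -/
def HasDecouplingExponent (p k : ℕ) [NeZero p] (lam : ℝ) : Prop :=
  ∃ C : ℝ, 1 ≤ C ∧ ∀ N M : ℕ, k * N ≤ M → HasDecoupling p M k N (C * (p : ℝ) ^ (lam * N))

/-- The gain after `ρ` rounds of the bilinear iteration: the constant of degree `l` at the scale
`p ^ b` is smaller than the linear constant, of exponent `lam`, by a factor
`p ^ (decayExponent k lam ρ l * b)`. -/
noncomputable def decayExponent (k : ℕ) (lam : ℝ) : ℕ → ℕ → ℝ
  | _, 0 => lam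
  | 0, _ + 1 => 0
  | ρ + 1, l + 1 => (1 - 1 / ((k : ℝ) - l)) * decayExponent k lam ρ l +
      decayExponent k lam ρ (k - (l + 1)) / (l + 1)

/-- The outcome of `ρ` rounds of the bilinear iteration. The conditions on `b` keep the scales that
occur in these rounds integral and at most `N`. -/
def HasIteratedDecoupling (p k : ℕ) [NeZero p] (lam : ℝ) (ρ : ℕ) : Prop :=
  ∀ ε : ℝ, 0 < ε → ∃ C : ℝ, 1 ≤ C ∧ ∀ N M b : ℕ, k * N ≤ M → 1 ≤ b → k ! ^ ρ ∣ b →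
    k ^ (ρ + 1) * b ≤ N → ∀ l < k, ∀ n, 1 ≤ n → l * n ≤ (k - l + 1) * b →
      HasBilinearDecoupling p M k N l n b
        (C * (p : ℝ) ^ (lam * N - decayExponent k lam ρ l * b + ε * N))

variable {p k l N M a b n ρ : ℕ} {lam μ ε C : ℝ}

theorem decayExponent_zero (k : ℕ) (lam : ℝ) (ρ : ℕ) : decayExponent k lam ρ 0 = lam := by
  cases ρ <;> rfl

theorem sum_decayExponent (K : ℕ) (lam : ℝ) (ρ : ℕ) :
    ∑ l ∈ range K, decayExponent (K + 1) lam ρ (l + 1) = ρ * ((1 - 1 / ((K : ℝ) + 1)) * lam) := by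
  induction ρ with
  | zero => simp [decayExponent]
  | succ ρ ih =>
    have hfirst : ∑ l ∈ range K, (1 - 1 / ((K : ℝ) + 1 - l)) * decayExponent (K + 1) lam ρ l =
        (∑ l ∈ range K, (1 - 1 / ((K : ℝ) - l)) * decayExponent (K + 1) lam ρ (l + 1)) +
          (1 - 1 / ((K : ℝ) + 1)) * lam := by
      have h := sum_range_succ'
        (fun l : ℕ => (1 - 1 / ((K : ℝ) + 1 - l)) * decayExponent (K + 1) lam ρ l) K
      rw [sum_range_succ] at h
      simpa [decayExponent_zero] using h
    have hsecond : ∑ l ∈ range K, decayExponent (K + 1) lam ρ (K - l) / ((l : ℝ) + 1) =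
        ∑ l ∈ range K, 1 / ((K : ℝ) - l) * decayExponent (K + 1) lam ρ (l + 1) := by
      rw [← sum_range_reflect]
      refine sum_congr rfl fun l hl => ?_
      have hlK := mem_range.1 hl
      have hcast : ((K - 1 - l : ℕ) : ℝ) + 1 = K - l := by
        rw [← Nat.cast_sub hlK.le]
        exact_mod_cast (by omega : K - 1 - l + 1 = K - l)
      rw [hcast, show K - (K - 1 - l) = l + 1 by omega, div_eq_inv_mul, one_div]
    calc ∑ l ∈ range K, decayExponent (K + 1) lam (ρ + 1) (l + 1)
        = ∑ l ∈ range K, (1 - 1 / ((K : ℝ) + 1 - l)) * decayExponent (K + 1) lam ρ l +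
          ∑ l ∈ range K, decayExponent (K + 1) lam ρ (K - l) / ((l : ℝ) + 1) := by
          rw [← sum_add_distrib]
          simp [decayExponent]
      _ = ∑ l ∈ range K, decayExponent (K + 1) lam ρ (l + 1) + (1 - 1 / ((K : ℝ) + 1)) * lam := by
          rw [hfirst, hsecond, add_right_comm, ← sum_add_distrib]
          simp only [← add_mul, sub_add_cancel, one_mul]
      _ = _ := by
          rw [ih]
          push_cast
          ring

theorem exists_le_decayExponent (hk : 2 ≤ k) (lam : ℝ) (ρ : ℕ) :
    ∃ l, 1 ≤ l ∧ l < k ∧ ρ * (lam / k) ≤ decayExponent k lam ρ l := by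
  obtain ⟨K, rfl⟩ := Nat.exists_eq_succ_of_ne_zero (by omega : k ≠ 0)
  obtain ⟨l, hl, hle⟩ : ∃ l ∈ range K,
      ρ * (lam / (K + 1 : ℕ)) ≤ decayExponent (K + 1) lam ρ (l + 1) := by
    refine exists_le_of_sum_le ⟨0, mem_range.2 (by omega)⟩ ?_
    rw [sum_decayExponent, sum_const, card_range, nsmul_eq_mul]
    push_cast
    field_simp
    exact (by ring : _ = _).le
  exact ⟨l + 1, by omega, by simpa using hl, hle⟩

variable [Fact p.Prime]

theorem one_le_natCast_of_prime : (1 : ℝ) ≤ p :=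
  Nat.one_le_cast.2 (NeZero.one_le (n := p))

theorem hasDecouplingExponent_two_mul_triangle (hk : k ≠ 0) :
    HasDecouplingExponent p k (2 * triangle k) := by
  refine ⟨1, le_rfl, fun N M _ => ⟨by positivity, fun γ _ c s => ?_⟩⟩
  have hT := triangle_ne_zero hk
  have hconst : 1 * (p : ℝ) ^ ((2 * triangle k : ℝ) * N) =
      ((p ^ N : ℕ) : ℝ) ^ (2 * triangle k) := by
    rw [one_mul, mul_comm, Real.rpow_mul (Nat.cast_nonneg p), Real.rpow_natCast, Nat.cast_pow,
      ← Real.rpow_natCast _ (2 * triangle k), Nat.cast_mul, Nat.cast_ofNat]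
  rw [hconst]
  calc ∑ x, ‖curveSum N γ c s x‖ ^ (2 * triangle k)
      ≤ ∑ x, ((p ^ N : ℕ) : ℝ) ^ (2 * triangle k) *
        ∑ J ∈ (residueClasses (p ^ N) s).parts, ‖curveSum N γ c J x‖ ^ (2 * triangle k) :=
        sum_le_sum fun x _ => norm_curveSum_pow_le x N (mul_ne_zero two_ne_zero hT)
    _ = ((p ^ N : ℕ) : ℝ) ^ (2 * triangle k) *
        ∑ J ∈ (residueClasses (p ^ N) s).parts, curveSumNormSq N γ c J ^ triangle k := by
        simp only [curveSumNormSq_pow hk]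
        rw [← mul_sum, sum_comm]
    _ ≤ _ := by
        gcongr
        exact sum_pow_le_pow_sum _ (fun _ _ => curveSumNormSq_nonneg) hT

theorem exists_hasDecoupling_lt (h : ∀ l, 1 ≤ l → l < k → HasDecouplingExponent p l ε)
    (hε : 0 ≤ ε) : ∃ C : ℝ, 1 ≤ C ∧ ∀ l, 1 ≤ l → l < k → ∀ N M n : ℕ, k * N ≤ M → n ≤ N →
      HasDecoupling p M l n (C * (p : ℝ) ^ (ε * N)) := by
  have h' : ∀ l, ∃ C : ℝ, 1 ≤ C ∧ (1 ≤ l → l < k → ∀ N M : ℕ, l * N ≤ M →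
      HasDecoupling p M l N (C * (p : ℝ) ^ (ε * N))) := fun l => by
    by_cases hl : 1 ≤ l ∧ l < k
    · obtain ⟨C, hC, hdec⟩ := h l hl.1 hl.2
      exact ⟨C, hC, fun _ _ => hdec⟩
    · exact ⟨1, le_rfl, fun h₁ h₂ => absurd ⟨h₁, h₂⟩ hl⟩
  choose C hC hdec using h'
  have hC₀ : ∀ l ∈ range k, 0 ≤ C l := fun l _ => zero_le_one.trans (hC l)
  refine ⟨1 + ∑ l ∈ range k, C l, le_add_of_nonneg_right (sum_nonneg hC₀),
    fun l hl hlk N M n hM hnN => ?_⟩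
  refine (hdec l hl hlk n M ((Nat.mul_le_mul hlk.le hnN).trans hM)).mono ?_
  have hp := one_le_natCast_of_prime (p := p)
  have hCl : C l ≤ 1 + ∑ l ∈ range k, C l :=
    (single_le_sum hC₀ (mem_range.2 hlk)).trans (le_add_of_nonneg_left zero_le_one)
  exact mul_le_mul hCl (by gcongr) (by positivity) ((zero_le_one.trans (hC l)).trans hCl)

theorem HasDecoupling.bilinear_zero_of_exponent
    (hC : HasDecoupling p M k (N - b) (C * (p : ℝ) ^ (lam * (N - b : ℕ))))
    (hk : k ≠ 0) (hkp : k < p) (hb : 1 ≤ b) (hbN : b ≤ N) (hM : k * N ≤ M) (hε : 0 ≤ ε)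
    (hC₀ : 0 ≤ C) :
    HasBilinearDecoupling p M k N 0 n b
      (C * (p : ℝ) ^ (lam * N - decayExponent k lam ρ 0 * b + ε * N)) := by
  refine (hC.bilinear_zero hk hkp hb hbN hM).mono ?_
  have hp := one_le_natCast_of_prime (p := p)
  rw [decayExponent_zero, Nat.cast_sub hbN, mul_sub]
  gcongr
  exact le_add_of_nonneg_right (by positivity)

theorem HasDecouplingExponent.hasIteratedDecoupling_zero (h : HasDecouplingExponent p k lam)
    (hkp : k < p) (hlam : 0 ≤ lam) : HasIteratedDecoupling p k lam 0 := by
  intro ε hε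
  obtain ⟨C, hC, hdec⟩ := h
  refine ⟨C, hC, fun N M b hM hb _ hbN l hlk n hn hln => ?_⟩
  have hk : k ≠ 0 := by omega
  have hp := one_le_natCast_of_prime (p := p)
  rw [zero_add, pow_one] at hbN
  have hbN' : b ≤ N := (Nat.le_mul_of_pos_left b (by omega)).trans hbN
  have hM' : ∀ a, k * (N - a) ≤ M := fun a => (Nat.mul_le_mul_left k (Nat.sub_le N a)).trans hM
  rcases l with - | l
  · exact (hdec (N - b) M (hM' b)).bilinear_zero_of_exponent hk hkp hb hbN' hM hε.le (by linarith)
  · have hnN : n ≤ N :=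
      calc n ≤ (l + 1) * n := Nat.le_mul_of_pos_left n l.succ_pos
        _ ≤ (k - (l + 1) + 1) * b := hln
        _ ≤ k * b := Nat.mul_le_mul_right b (by omega)
        _ ≤ N := hbN
    have hdec' : ∀ a, HasDecoupling p M k (N - a) (C * (p : ℝ) ^ (lam * N)) := fun a =>
      (hdec (N - a) M (hM' a)).mono (by gcongr; exact Nat.sub_le N a)
    refine ((hdec' n).bilinear (hdec' b) hk hlk.le hkp hn hnN hb hbN' hM).mono ?_
    gcongr
    rw [decayExponent, zero_mul, sub_zero]
    exact le_add_of_nonneg_right (by positivity)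

end Exponents

section Iteration

open Nat

variable {p k l N M a b n ρ : ℕ} {lam μ ε C : ℝ}

theorem mul_rpow_rpow_mul_mul_rpow_rpow {Q q : ℝ} (hQ : 0 < Q) (hq : 0 < q) (e₁ e₂ θ : ℝ) :
    (Q * q ^ e₁) ^ (1 - θ) * (Q * q ^ e₂) ^ θ = Q * q ^ ((1 - θ) * e₁ + θ * e₂) := by
  have hQθ : Q ^ (1 - θ) * Q ^ θ = Q := by rw [← Real.rpow_add hQ, sub_add_cancel, Real.rpow_one]
  rw [Real.mul_rpow hQ.le (by positivity), Real.mul_rpow hQ.le (by positivity),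
    ← Real.rpow_mul hq.le, ← Real.rpow_mul hq.le, mul_mul_mul_comm, hQθ, ← Real.rpow_add hq,
    mul_comm e₁, mul_comm e₂]

theorem exists_balanced_scale (hlk : l < k) (hb : 1 ≤ b) (hdvd : k ! ^ (ρ + 1) ∣ b) :
    ∃ n, 1 ≤ n ∧ n ≤ k * b ∧ k ! ^ ρ ∣ n ∧ (l + 1) * n = (k - l) * b := by
  obtain ⟨c, rfl⟩ := hdvd
  obtain ⟨d, hd⟩ : l + 1 ∣ k ! := Nat.dvd_factorial l.succ_pos hlk
  have hn : (l + 1) * (k ! ^ ρ * ((k - l) * d * c)) = (k - l) * (k ! ^ (ρ + 1) * c) := by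
    calc (l + 1) * (k ! ^ ρ * ((k - l) * d * c))
        = k ! ^ ρ * ((k - l) * ((l + 1) * d) * c) := by ring
      _ = (k - l) * (k ! ^ (ρ + 1) * c) := by rw [← hd]; ring
  refine ⟨_, ?_, ?_, dvd_mul_right _ _, hn⟩
  · have hpos : 0 < (k - l) * (k ! ^ (ρ + 1) * c) := Nat.mul_pos (by omega) hb
    exact Nat.pos_of_mul_pos_left (hn ▸ hpos)
  · exact (Nat.le_mul_of_pos_left _ l.succ_pos).trans
      (hn.trans_le (Nat.mul_le_mul_right _ (Nat.sub_le k l)))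

theorem mul_le_of_balanced (hlk : l < k) (hn : (l + 1) * n = (k - l) * b) :
    l * n ≤ (k - l + 1) * b ∧ (k - (l + 1)) * b ≤ (k - (k - (l + 1)) + 1) * n := by
  constructor
  · calc l * n ≤ (l + 1) * n := Nat.mul_le_mul_right _ l.le_succ
      _ = (k - l) * b := hn
      _ ≤ (k - l + 1) * b := Nat.mul_le_mul_right _ (Nat.le_succ _)
  · calc (k - (l + 1)) * b ≤ (k - l) * b := Nat.mul_le_mul_right _ (by omega)
      _ = (l + 1) * n := hn.symm
      _ ≤ (k - (k - (l + 1)) + 1) * n := Nat.mul_le_mul_right _ (by omega)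

variable [Fact p.Prime]

theorem HasBilinearDecoupling.interpolate_decayExponent {Q δ : ℝ}
    (h₁ : HasBilinearDecoupling p M k N l n b
      (Q * (p : ℝ) ^ (lam * N - decayExponent k lam ρ l * b + δ)))
    (h₂ : HasBilinearDecoupling p M k N (k - (l + 1)) b n
      (Q * (p : ℝ) ^ (lam * N - decayExponent k lam ρ (k - (l + 1)) * n + δ)))
    (hQ : 0 < Q) (hlk : l + 1 < k) (hn : (l + 1) * n = (k - l) * b) :
    HasBilinearDecoupling p M k N (l + 1) n b
      (Q * (p : ℝ) ^ (lam * N - decayExponent k lam (ρ + 1) (l + 1) * b + δ)) := by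
  have hp : (0 : ℝ) < p := zero_lt_one.trans_le one_le_natCast_of_prime
  refine (h₁.interpolate h₂ (l := l + 1) le_add_self hlk).mono (le_of_eq ?_)
  have hlk' : (l : ℝ) + 1 < k := by exact_mod_cast hlk
  have hkl : (k : ℝ) - l ≠ 0 := by linarith
  have hn' : ((l : ℝ) + 1) * n = (k - l) * b := by
    rw [← Nat.cast_sub (by omega)]
    exact_mod_cast hn
  have hn'' : (n : ℝ) / (k - l) = b / (l + 1) := by
    field_simp
    linarith
  rw [mul_rpow_rpow_mul_mul_rpow_rpow hQ hp, decayExponent]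
  push_cast
  rw [show (k : ℝ) - (l + 1) + 1 = k - l by ring]
  congr 2
  linear_combination -decayExponent k lam ρ (k - (l + 1)) * hn''

theorem HasIteratedDecoupling.succ (hk : k < p)
    (hlow : ∀ ε, 0 < ε → ∀ l, 1 ≤ l → l < k → HasDecouplingExponent p l ε)
    (hlin : HasDecouplingExponent p k lam) (h : HasIteratedDecoupling p k lam ρ) :
    HasIteratedDecoupling p k lam (ρ + 1) := by
  intro ε hε
  obtain ⟨C₁, hC₁, hlin⟩ := hlin
  obtain ⟨C₂, hC₂, h⟩ := h (ε / 2) (half_pos hε)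
  obtain ⟨C₃, hC₃, hlow⟩ := exists_hasDecoupling_lt (hlow (ε / 2) (half_pos hε)) (half_pos hε).le
  have hp := one_le_natCast_of_prime (p := p)
  have hC₂₃ : 1 ≤ C₂ * C₃ := one_le_mul_of_one_le_of_one_le hC₂ hC₃
  refine ⟨C₁ * (C₂ * C₃), one_le_mul_of_one_le_of_one_le hC₁ hC₂₃,
    fun N M b hM hb hdvd hbN l hlk n hn hln => ?_⟩
  have hkbN : k ^ (ρ + 1) * (k * b) ≤ N := by rwa [← mul_assoc, ← _root_.pow_succ]
  have hkN : k * b ≤ N := (Nat.le_mul_of_pos_left _ (Nat.pow_pos (by omega))).trans hkbN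
  have hbkb : b ≤ k * b := Nat.le_mul_of_pos_left b (by omega)
  have hbN' : b ≤ N := hbkb.trans hkN
  rcases l with - | l
  · exact (((hlin (N - b) M ((Nat.mul_le_mul_left k (Nat.sub_le N b)).trans hM)
      ).bilinear_zero_of_exponent (by omega) hk hb hbN' hM hε.le (by linarith)).mono
        (by gcongr; exact le_mul_of_one_le_right (by linarith) hC₂₃))
  obtain ⟨n', hn', hnkb, hndvd, hbal⟩ := exists_balanced_scale (by omega : l < k) hb hdvd
  have hdvd' : k ! ^ ρ ∣ b := (pow_dvd_pow _ ρ.le_succ).trans hdvd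
  have hkl : k - (l + 1) + 1 = k - l := by omega
  obtain ⟨hlower, hupper⟩ := mul_le_of_balanced (by omega : l < k) hbal
  have hstep : HasBilinearDecoupling p M k N (l + 1) n' b
      (C₂ * (p : ℝ) ^ (lam * N - decayExponent k lam (ρ + 1) (l + 1) * b + ε / 2 * N)) :=
    (h N M b hM hb hdvd' ((Nat.mul_le_mul_left _ hbkb).trans hkbN) l (by omega) n' hn'
      hlower).interpolate_decayExponent (h N M n' hM hn' hndvd
        ((Nat.mul_le_mul_left _ hnkb).trans hkbN) (k - (l + 1)) (by omega) b hb hupper)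
      (by linarith) hlk hbal
  have hnn' : n ≤ n' := Nat.le_of_mul_le_mul_left (by rwa [hbal, ← hkl]) l.succ_pos
  refine (hstep.descend (hlow (l + 1) le_add_self hlk N M (n' - n) hM ((Nat.sub_le _ _).trans
    (hnkb.trans hkN))) l.succ_ne_zero hlk hk hn hb hnn' (hnkb.trans hkN) (by rw [hbal, hkl])
      hM).mono ?_
  have hsplit (e : ℝ) : (p : ℝ) ^ (e + ε * N) = p ^ (ε / 2 * N) * p ^ (e + ε / 2 * N) := by
    rw [← Real.rpow_add (by linarith)]
    ring_nf
  rw [hsplit, mul_mul_mul_comm, mul_comm C₃]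
  exact mul_le_mul_of_nonneg_right (le_mul_of_one_le_left (by linarith) hC₁) (by positivity)

theorem HasDecouplingExponent.hasIteratedDecoupling (h : HasDecouplingExponent p k lam) (hk : k < p)
    (hlow : ∀ ε, 0 < ε → ∀ l, 1 ≤ l → l < k → HasDecouplingExponent p l ε) (hlam : 0 ≤ lam)
    (ρ : ℕ) : HasIteratedDecoupling p k lam ρ := by
  induction ρ with
  | zero => exact h.hasIteratedDecoupling_zero hk hlam
  | succ ρ ih => exact ih.succ hk hlow h

end Iteration

section Bootstrap

open Nat Filter Topology

variable {p k l N M b ρ : ℕ} {lam μ C d δ : ℝ}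

theorem exists_pos_le_one_pow_lt {A : ℝ} (hA : 1 < A) (P : ℝ) (m : ℕ) :
    ∃ η : ℝ, 0 < η ∧ η ≤ 1 ∧ (1 + P * η) ^ m < A := by
  have hlim : Tendsto (fun η : ℝ => (1 + P * η) ^ m) (𝓝[>] 0) (𝓝 1) :=
    (Continuous.tendsto' (by fun_prop) 0 1 (by simp)).mono_left nhdsWithin_le_nhds
  obtain ⟨η, hη, hη₀, hη₁⟩ :=
    ((hlim.eventually_lt_const hA).and (Ioc_mem_nhdsGT one_pos)).exists
  exact ⟨η, hη₀, hη₁, hη⟩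

theorem exists_dvd_scale {F G : ℕ} (hF : 0 < F) (hG : 0 < G) (hN : F * G ≤ N) :
    ∃ b, 1 ≤ b ∧ F ∣ b ∧ G * b ≤ N ∧ N ≤ G * b + F * G := by
  refine ⟨F * (N / (F * G)), ?_, dvd_mul_right _ _, ?_, ?_⟩
  · exact Nat.mul_pos hF (Nat.div_pos hN (Nat.mul_pos hF hG))
  · calc G * (F * (N / (F * G))) = F * G * (N / (F * G)) := by ring
      _ ≤ N := Nat.mul_div_le N (F * G)
  · calc N ≤ F * G * (N / (F * G) + 1) := (Nat.lt_mul_div_succ N (Nat.mul_pos hF hG)).le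
      _ = G * (F * (N / (F * G))) + F * G := by ring

theorem two_mul_div_le_of_le_mul_add {F G : ℕ} (hG : 0 < G) (hN : N ≤ G * b + F * G) :
    2 * (1 / (2 * (G : ℝ)) * N) ≤ b + F := by
  have hG₀ : (0 : ℝ) < G := Nat.cast_pos.2 hG
  rw [show 2 * (1 / (2 * (G : ℝ)) * N) = N / G by field_simp, div_le_iff₀ hG₀]
  exact_mod_cast hN.trans_eq (by ring)

variable [Fact p.Prime]

theorem HasDecouplingExponent.mono (h : HasDecouplingExponent p k lam) (hle : lam ≤ μ) :
    HasDecouplingExponent p k μ := by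
  obtain ⟨C, hC, hdec⟩ := h
  have hp := one_le_natCast_of_prime (p := p)
  exact ⟨C, hC, fun N M hM => (hdec N M hM).mono (by gcongr)⟩

theorem HasDecouplingExponent.of_bilinear {K : ℝ} (hk : k ≠ 0) (hkp : k < p) (hlk : l ≤ k)
    (hμ : 0 < μ) (hK : 0 ≤ K) (hB : ∀ N M : ℕ, 1 ≤ N → k * N ≤ M →
      HasBilinearDecoupling p M k N l 1 1 (K * (p : ℝ) ^ (μ * N))) :
    HasDecouplingExponent p k μ := by
  have hp : (1 : ℝ) < p := Nat.one_lt_cast.2 (Fact.out : p.Prime).one_lt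
  have ht : 1 < (p : ℝ) ^ μ := Real.one_lt_rpow hp hμ
  set t : ℝ := (p : ℝ) ^ μ
  set m := 2 * triangle k
  obtain ⟨A, hA, hAt⟩ := exists_between ht
  obtain ⟨η, hη₀, hη₁, hηA⟩ := exists_pos_le_one_pow_lt hA p m
  set B : ℝ := (p / η) ^ m * (p ^ 2 * K)
  have hB₀ : 0 ≤ B * t / (t - A) := div_nonneg (by positivity) (by linarith)
  set L : ℝ := 1 + B * t / (t - A) with hL
  have hAL : A * L + B * t ≤ L * t := by
    have hBt : B * t = B * t / (t - A) * (t - A) := by field_simp [(sub_pos.2 hAt).ne']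
    rw [hBt, hL]
    linarith
  have hL₁ : 1 ≤ L := le_add_of_nonneg_right hB₀
  refine ⟨L, hL₁, fun N => ?_⟩
  induction N with
  | zero =>
    intro M _
    exact (hasDecoupling_scale_zero hk).mono (by simpa using hL₁)
  | succ N ih =>
    intro M hM
    have hN : HasDecoupling p M k (N + 1 - 1) (L * (p : ℝ) ^ (μ * N)) :=
      ih M ((Nat.mul_le_mul_left k N.le_succ).trans hM)
    refine (hN.of_bilinear (hB (N + 1) M le_add_self hM) hk hkp hlk le_add_self hM hη₀ hη₁).mono ?_
    have ht' : (p : ℝ) ^ (μ * (N + 1 : ℕ)) = t * (p : ℝ) ^ (μ * N) := by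
      rw [← Real.rpow_add (by linarith)]
      push_cast
      ring_nf
    rw [ht']
    calc (1 + p * η) ^ m * (L * (p : ℝ) ^ (μ * N)) +
          (p / η) ^ m * (p ^ 2 * (K * (t * (p : ℝ) ^ (μ * N))))
        = ((1 + p * η) ^ m * L + B * t) * (p : ℝ) ^ (μ * N) := by ring
      _ ≤ (A * L + B * t) * (p : ℝ) ^ (μ * N) := by gcongr
      _ ≤ L * t * (p : ℝ) ^ (μ * N) := by gcongr
      _ = L * (t * (p : ℝ) ^ (μ * N)) := by ring

theorem HasBilinearDecoupling.of_fine_of_decay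
    (h : HasBilinearDecoupling p M k N l 1 b (C * (p : ℝ) ^ (lam * N - d * b + δ)))
    (hC : 0 ≤ C) (hl : l ≠ 0) (hlk : l < k) (hb : 1 ≤ b) (hbN : b ≤ N)
    (hd : 2 * triangle k + 3 ≤ d) :
    HasBilinearDecoupling p M k N l 1 1 (C * (p : ℝ) ^ (lam * N - b + δ)) := by
  have hp := one_le_natCast_of_prime (p := p)
  refine (h.of_fine hl hlk (hb.trans hbN) hbN).mono ?_
  have hloss : ((p : ℝ) ^ 1) ^ (2 * triangle l + 1) *
      ((p : ℝ) ^ b) ^ (2 * (triangle k - triangle l) + 1) ≤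
        (p : ℝ) ^ ((2 * triangle k + 2 : ℝ) * b) := by
    have hlb : 2 * triangle l + 1 ≤ b * (2 * triangle l + 1) := Nat.le_mul_of_pos_left _ hb
    have htri := (triangle_strictMono hlk).le
    rw [pow_one, ← pow_mul, ← pow_add]
    refine (pow_le_pow_right₀ hp (n := (2 * triangle k + 2) * b) ?_).trans_eq ?_
    · calc 2 * triangle l + 1 + b * (2 * (triangle k - triangle l) + 1)
          ≤ b * (2 * triangle l + 1) + b * (2 * (triangle k - triangle l) + 1) := by gcongr
        _ = b * (2 * (triangle l + (triangle k - triangle l)) + 2) := by ring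
        _ = (2 * triangle k + 2) * b := by rw [Nat.add_sub_cancel' htri, mul_comm]
    · rw [← Real.rpow_natCast]
      push_cast
      rfl
  calc _ ≤ (p : ℝ) ^ ((2 * triangle k + 2 : ℝ) * b) *
        (C * (p : ℝ) ^ (lam * N - d * b + δ)) := by gcongr
    _ = C * (p : ℝ) ^ ((2 * triangle k + 2 : ℝ) * b + (lam * N - d * b + δ)) := by
        rw [Real.rpow_add (by linarith) (_ * _)]
        ring
    _ ≤ C * (p : ℝ) ^ (lam * N - b + δ) := by
        have hdb : (2 * triangle k + 3 : ℝ) * b ≤ d * b := by gcongr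
        refine mul_le_mul_of_nonneg_left (Real.rpow_le_rpow_of_exponent_le hp ?_) hC
        linarith

theorem HasIteratedDecoupling.exists_hasBilinearDecoupling (h : HasIteratedDecoupling p k lam ρ)
    (hlin : HasDecouplingExponent p k lam) (hkp : k < p) (hl : 1 ≤ l) (hlk : l < k)
    (hlam : 0 ≤ lam) (hd : 2 * triangle k + 3 ≤ decayExponent k lam ρ l) :
    ∃ K : ℝ, 0 ≤ K ∧ ∀ N M : ℕ, 1 ≤ N → k * N ≤ M → HasBilinearDecoupling p M k N l 1 1
      (K * (p : ℝ) ^ ((lam - 1 / (2 * (k : ℝ) ^ (ρ + 1))) * N)) := by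
  have hp := one_le_natCast_of_prime (p := p)
  set F := k * k ! ^ ρ
  set G := k ^ (ρ + 1)
  have hF : 0 < F := Nat.mul_pos (by omega) (by positivity)
  have hG : 0 < G := Nat.pow_pos (by omega)
  have : (0 : ℝ) < G := Nat.cast_pos.2 hG
  obtain ⟨C₁, hC₁, hlin⟩ := hlin
  obtain ⟨C₂, hC₂, h⟩ := h (1 / (2 * G)) (by positivity)
  rw [← Nat.cast_pow]
  have hconst {C e : ℝ} {N : ℕ} (hC : C ≤ C₁ + C₂) (he : e ≤ F + (lam - 1 / (2 * G)) * N) :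
      C * (p : ℝ) ^ e ≤ (C₁ + C₂) * (p : ℝ) ^ (F : ℝ) * (p : ℝ) ^ ((lam - 1 / (2 * G)) * N) := by
    rw [mul_assoc, ← Real.rpow_add (by linarith)]
    gcongr
  refine ⟨(C₁ + C₂) * (p : ℝ) ^ (F : ℝ), by positivity, fun N M hN hM => ?_⟩
  rcases le_total (F * G) N with hNFG | hNFG
  · obtain ⟨b, hb, hFb, hGb, hNb⟩ := exists_dvd_scale hF hG hNFG
    have hkb : k ≤ b := Nat.le_of_dvd hb ((dvd_mul_right _ _).trans hFb)
    have hbN : b ≤ N := (Nat.le_mul_of_pos_left b hG).trans hGb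
    have hfine := h N M b hM hb ((dvd_mul_left _ _).trans hFb) hGb l hlk 1 le_rfl
      (by rw [mul_one]; exact (hlk.le.trans hkb).trans (Nat.le_mul_of_pos_left b (by omega)))
    refine (hfine.of_fine_of_decay (by linarith) (by omega) hlk hb hbN hd).mono
      (hconst (by linarith) ?_)
    linarith [two_mul_div_le_of_le_mul_add hG hNb]
  · have hdec : HasDecoupling p M k (N - 1) (C₁ * (p : ℝ) ^ (lam * N)) :=
      (hlin (N - 1) M ((Nat.mul_le_mul_left k (Nat.sub_le N 1)).trans hM)).mono
        (by gcongr; exact Nat.sub_le N 1)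
    refine (hdec.bilinear hdec (by omega) hlk.le hkp le_rfl hN le_rfl hN hM).mono
      (hconst (by linarith) ?_)
    have hNF := two_mul_div_le_of_le_mul_add (b := 0) hG (by simpa using hNFG)
    rw [Nat.cast_zero, zero_add] at hNF
    linarith [(F.cast_nonneg : (0 : ℝ) ≤ F)]

theorem exists_hasDecouplingExponent_max_sub (hk : 2 ≤ k) (hkp : k < p) (hμ : 0 < μ)
    (hlow : ∀ ε, 0 < ε → ∀ l, 1 ≤ l → l < k → HasDecouplingExponent p l ε) :
    ∃ c : ℝ, 0 < c ∧ ∀ lam, μ ≤ lam → HasDecouplingExponent p k lam →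
      HasDecouplingExponent p k (max μ (lam - c)) := by
  have hp := one_le_natCast_of_prime (p := p)
  have : (0 : ℝ) < k := by positivity
  obtain ⟨ρ, hρ⟩ := exists_nat_ge ((2 * triangle k + 3) / (μ / k))
  rw [div_le_iff₀ (by positivity)] at hρ
  refine ⟨1 / (2 * (k : ℝ) ^ (ρ + 1)), by positivity, fun lam hlam h => ?_⟩
  have hlam₀ : 0 ≤ lam := hμ.le.trans hlam
  obtain ⟨l, hl, hlk, hd⟩ := exists_le_decayExponent hk lam ρ
  have hρ' : (ρ : ℝ) * (μ / k) ≤ ρ * (lam / k) := by gcongr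
  obtain ⟨K, hK, hB⟩ := (h.hasIteratedDecoupling hkp hlow hlam₀ ρ).exists_hasBilinearDecoupling
    h hkp hl hlk hlam₀ (by linarith)
  refine .of_bilinear (by omega) hkp hlk.le (lt_max_of_lt_left hμ) hK fun N M hN hM =>
    (hB N M hN hM).mono ?_
  gcongr
  exact le_max_right _ _

theorem hasDecouplingExponent_of_lt (hk : 2 ≤ k) (hkp : k < p) (hμ : 0 < μ)
    (hlow : ∀ ε, 0 < ε → ∀ l, 1 ≤ l → l < k → HasDecouplingExponent p l ε) :
    HasDecouplingExponent p k μ := by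
  obtain ⟨c, hc, himprove⟩ := exists_hasDecouplingExponent_max_sub hk hkp hμ hlow
  have hiter (n : ℕ) : HasDecouplingExponent p k (max μ (2 * triangle k - n * c)) := by
    induction n with
    | zero => exact (hasDecouplingExponent_two_mul_triangle (by omega)).mono (by simp)
    | succ n ih =>
      refine (himprove _ (le_max_left _ _) ih).mono ?_
      push_cast
      have h₁ := le_max_left μ (2 * triangle k - (n + 1) * c)
      have h₂ := le_max_right μ (2 * triangle k - (n + 1) * c)
      exact max_le h₁ (sub_le_iff_le_add.2 (max_le (by linarith) (by linarith)))
  obtain ⟨n, hn⟩ := exists_nat_ge (2 * triangle k / c)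
  rw [div_le_iff₀ hc] at hn
  exact (hiter n).mono (max_le le_rfl (by linarith))

theorem hasDecouplingExponent (hk : k ≠ 0) (hkp : k < p) (hμ : 0 < μ) :
    HasDecouplingExponent p k μ := by
  induction k using Nat.strong_induction_on generalizing μ with
  | _ k ih =>
    obtain rfl | hk₂ := (Nat.one_le_iff_ne_zero.2 hk).eq_or_lt
    · refine ⟨1, le_rfl, fun N M hM => (hasDecoupling_one (by simpa using hM)).mono ?_⟩
      rw [one_mul]
      exact Real.one_le_rpow one_le_natCast_of_prime (by positivity)
    · exact hasDecouplingExponent_of_lt hk₂ hkp hμ fun ε hε l hl hlk =>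
        ih l hlk (by omega) (hlk.trans hkp) hε

end Bootstrap

section MeanValue

open Polynomial Matrix

variable {p M k N : ℕ} [NeZero p] {a : ℤ → ℂ} {C ε : ℝ}

/-- The exponential sum of Vinogradov's mean value, with coefficients `a`, at the frequency
`α / q`. -/
noncomputable def weylSum {q k : ℕ} [NeZero q] (a : ℤ → ℂ) (Y : ℕ) (α : Fin k → ZMod q) : ℂ :=
  ∑ i ∈ Icc (1 : ℤ) Y, a i * ZMod.stdAddChar (α ⬝ᵥ curveEval (momentCurve (ZMod q) k) i)

theorem weylSum_add_smul (a : ℤ → ℂ) (x y : Fin k → ZMod (p ^ M)) :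
    weylSum a (p ^ N) (x + (p : ZMod (p ^ M)) ^ (M - k * N) • y) =
      curveSum N (momentCurve (ZMod (p ^ M)) k)
        (fun i => a i * ZMod.stdAddChar (x ⬝ᵥ curveEval (momentCurve (ZMod (p ^ M)) k) i))
        (Icc 1 ((p ^ N : ℕ) : ℤ)) y := by
  simp only [weylSum, curveSum, curvePhase, add_dotProduct, smul_dotProduct, smul_eq_mul,
    AddChar.map_add_eq_mul, mul_assoc]

theorem residueClasses_Icc_eq_singleton {q : ℕ} {J : Finset ℤ}
    (hJ : J ∈ (residueClasses q (Icc 1 (q : ℤ))).parts) : ∃ i, J = {i} := by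
  obtain ⟨i, hi⟩ := (residueClasses q _).nonempty_of_mem_parts hJ
  refine ⟨i, eq_singleton_iff_unique_mem.2 ⟨hi, fun j hj => ?_⟩⟩
  have hi' := mem_Icc.1 (subset_of_mem_residueClasses hJ hi)
  have hj' := mem_Icc.1 (subset_of_mem_residueClasses hJ hj)
  refine sub_eq_zero.1 (Int.eq_zero_of_abs_lt_dvd (dvd_sub_of_mem_residueClasses hJ hi hj) ?_)
  rw [abs_lt]
  constructor <;> omega

theorem squareSum_Icc_le (γ : Fin k → (ZMod (p ^ M))[X]) (ha : ∀ i, ‖a i‖ ≤ 1) :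
    squareSum N γ a (Icc 1 ((p ^ N : ℕ) : ℤ)) ≤
      (p ^ N : ℕ) * (((p ^ M : ℕ) : ℝ) ^ k) ^ (triangle k : ℝ)⁻¹ := by
  have hpiece : ∀ J ∈ (residueClasses (p ^ N) (Icc 1 ((p ^ N : ℕ) : ℤ))).parts,
      curveSumNormSq N γ a J ≤ (((p ^ M : ℕ) : ℝ) ^ k) ^ (triangle k : ℝ)⁻¹ := fun J hJ => by
    obtain ⟨i, rfl⟩ := residueClasses_Icc_eq_singleton hJ
    refine Real.rpow_le_rpow (by positivity) ?_ (by positivity)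
    have hone : ∀ x, ‖curveSum N γ a {i} x‖ ^ (2 * triangle k) ≤ 1 := fun x => by
      rw [curveSum, sum_singleton, norm_mul, AddChar.norm_apply, mul_one]
      exact pow_le_one₀ (norm_nonneg _) (ha i)
    simpa using sum_le_card_nsmul univ _ 1 fun x _ => hone x
  refine (sum_le_card_nsmul _ _ _ hpiece).trans ?_
  rw [nsmul_eq_mul]
  gcongr
  exact card_residueClasses_le (pow_pos (NeZero.pos p) N) _

theorem card_mul_sum_mul_le {G U : Type*} [Fintype G] [AddGroup G] [Fintype U] {w f : G → ℝ}
    {ρ : U → G} {B : ℝ} (hw₀ : ∀ x, 0 ≤ w x) (hw : ∀ x u, w (x + ρ u) = w x)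
    (hf : ∀ x, ∑ u, f (x + ρ u) ≤ B) : Fintype.card U * ∑ x, w x * f x ≤ B * ∑ x, w x := by
  rw [← sum_mul_sum_add_eq hw, mul_comm B, sum_mul]
  exact sum_le_sum fun x _ => mul_le_mul_of_nonneg_left (hf x) (hw₀ x)

theorem HasDecoupling.sum_norm_weylSum_pow_le (hC : HasDecoupling p M k N C) (hk : k ≠ 0)
    (ha : ∀ i, ‖a i‖ ≤ 1) :
    ∑ α : Fin k → ZMod (p ^ M), ‖weylSum a (p ^ N) α‖ ^ (2 * triangle k) ≤
      C * ((p ^ N : ℕ) : ℝ) ^ triangle k * ((p ^ M : ℕ) : ℝ) ^ k := by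
  have hmoment : IsMomentCurveMod (p : ZMod (p ^ M)) (momentCurve (ZMod (p ^ M)) k) :=
    fun j => by simp
  have hV : (0 : ℝ) ≤ ((p ^ M : ℕ) : ℝ) ^ k := by positivity
  have havg : ∀ x : Fin k → ZMod (p ^ M), ∑ y : Fin k → ZMod (p ^ M),
      ‖weylSum a (p ^ N) (x + (p : ZMod (p ^ M)) ^ (M - k * N) • y)‖ ^ (2 * triangle k) ≤
        C * ((p ^ N : ℕ) : ℝ) ^ triangle k * ((p ^ M : ℕ) : ℝ) ^ k := fun x => by
    simp only [weylSum_add_smul]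
    refine (hC.2 _ hmoment _ _).trans ?_
    rw [mul_assoc, ← Real.rpow_inv_natCast_pow hV (triangle_ne_zero hk), ← mul_pow]
    refine mul_le_mul_of_nonneg_left (pow_le_pow_left₀ squareSum_nonneg
      (squareSum_Icc_le _ fun i => ?_) _) hC.1
    simpa using ha i
  have hmean := card_mul_sum_mul_le (w := fun _ => 1)
    (f := fun α => ‖weylSum a (p ^ N) α‖ ^ (2 * triangle k)) (fun _ => zero_le_one)
    (fun _ _ => rfl) havg
  simp only [one_mul, sum_const, card_univ, nsmul_eq_mul, mul_one] at hmean
  rw [mul_comm _ (Fintype.card _ : ℝ)] at hmean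
  exact le_of_mul_le_mul_left hmean (by exact_mod_cast Fintype.card_pos)

theorem exists_sum_norm_weylSum_pow_le {p : ℕ} [Fact p.Prime] (hkp : k < p) (hε : 0 < ε) :
    ∃ C : ℝ, 1 ≤ C ∧ ∀ N M : ℕ, k * N ≤ M → ∀ a : ℤ → ℂ, (∀ i, ‖a i‖ ≤ 1) →
      ∑ α : Fin k → ZMod (p ^ M), ‖weylSum a (p ^ N) α‖ ^ (2 * triangle k) ≤
        C * ((p ^ N : ℕ) : ℝ) ^ ε * ((p ^ N : ℕ) : ℝ) ^ triangle k * ((p ^ M : ℕ) : ℝ) ^ k := by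
  rcases eq_or_ne k 0 with rfl | hk
  · refine ⟨1, le_rfl, fun N M _ a _ => ?_⟩
    simpa [triangle] using Real.one_le_rpow
      (one_le_pow₀ (one_le_natCast_of_prime (p := p)) (n := N)) hε.le
  obtain ⟨C, hC₁, hC⟩ := hasDecouplingExponent hk hkp hε
  refine ⟨C, hC₁, fun N M hM a ha => ?_⟩
  have hpow : ((p ^ N : ℕ) : ℝ) ^ ε = (p : ℝ) ^ (ε * N) := by
    rw [Nat.cast_pow, ← Real.rpow_natCast, ← Real.rpow_mul p.cast_nonneg, mul_comm]
  rw [hpow]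
  exact (hC N M hM).sum_norm_weylSum_pow_le hk ha

end MeanValue

section DivisorBound

theorem add_one_le_div_sub_one_mul_pow {y : ℝ} (hy : 1 < y) (a : ℕ) :
    (a + 1 : ℝ) ≤ y / (y - 1) * y ^ a := by
  have hy₁ : 0 < y - 1 := sub_pos.2 hy
  have hbernoulli : 1 + a * (y - 1) ≤ y ^ a := one_add_mul_sub_le_pow (by linarith) a
  calc (a + 1 : ℝ) ≤ y / (y - 1) + a * y := by
        have h₁ : 1 ≤ y / (y - 1) := (one_le_div hy₁).2 (by linarith)
        have h₂ : (a : ℝ) ≤ a * y := le_mul_of_one_le_right a.cast_nonneg hy.le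
        linarith
    _ = y / (y - 1) * (1 + a * (y - 1)) := by field_simp
    _ ≤ y / (y - 1) * y ^ a := by gcongr

theorem natCast_rpow_eq_prod_primeFactors {n : ℕ} (hn : n ≠ 0) (ε : ℝ) :
    (n : ℝ) ^ ε = ∏ p ∈ n.primeFactors, ((p : ℝ) ^ ε) ^ n.factorization p := by
  conv_lhs => rw [← Nat.prod_factorization_pow_eq_self hn,
    Nat.prod_factorization_eq_prod_primeFactors, Nat.cast_prod,
    ← Real.finsetProd_rpow _ _ fun p _ => by positivity]
  refine prod_congr rfl fun p _ => ?_
  rw [Nat.cast_pow, ← Real.rpow_natCast, ← Real.rpow_natCast, ← Real.rpow_mul p.cast_nonneg,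
    ← Real.rpow_mul p.cast_nonneg, mul_comm]

/-- The primes with `p ^ ε ≥ 2` contribute at most `1` each; the other ones are finitely many. -/
theorem exists_card_divisors_le {ε : ℝ} (hε : 0 < ε) :
    ∃ C : ℝ, 1 ≤ C ∧ ∀ n : ℕ, n ≠ 0 → (#n.divisors : ℝ) ≤ C * (n : ℝ) ^ ε := by
  set y : ℝ := 2 ^ ε
  have hy : 1 < y := Real.one_lt_rpow one_lt_two hε
  have hK : 1 ≤ y / (y - 1) := (one_le_div (sub_pos.2 hy)).2 (by linarith)
  set B : ℕ := ⌈(2 : ℝ) ^ ε⁻¹⌉₊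
  have hprime : ∀ p a : ℕ, 2 ≤ p →
      (a + 1 : ℝ) ≤ (if p < B then y / (y - 1) else 1) * ((p : ℝ) ^ ε) ^ a := fun p a hp => by
    split_ifs with hpB
    · have hyp : y ≤ (p : ℝ) ^ ε :=
        Real.rpow_le_rpow zero_le_two (Nat.ofNat_le_cast.2 hp) hε.le
      exact (add_one_le_div_sub_one_mul_pow hy a).trans (by gcongr)
    · have htwo : 2 ≤ (p : ℝ) ^ ε := (Real.rpow_inv_le_iff_of_pos zero_le_two p.cast_nonneg hε).1
        (Nat.ceil_le.1 (not_lt.1 hpB))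
      rw [one_mul]
      exact le_trans (by exact_mod_cast Nat.lt_two_pow_self) (pow_le_pow_left₀ zero_le_two htwo a)
  refine ⟨(y / (y - 1)) ^ B, one_le_pow₀ hK, fun n hn => ?_⟩
  calc (#n.divisors : ℝ) = ∏ p ∈ n.primeFactors, (n.factorization p + 1 : ℝ) := by
        rw [Nat.card_divisors hn]
        push_cast
        rfl
    _ ≤ ∏ p ∈ n.primeFactors,
          (if p < B then y / (y - 1) else 1) * ((p : ℝ) ^ ε) ^ n.factorization p :=
        prod_le_prod (fun p _ => by positivity) fun p hp =>
          hprime p _ (Nat.prime_of_mem_primeFactors hp).two_le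
    _ = (y / (y - 1)) ^ #{p ∈ n.primeFactors | p < B} * (n : ℝ) ^ ε := by
        rw [prod_mul_distrib, natCast_rpow_eq_prod_primeFactors hn, ← prod_filter, prod_const]
    _ ≤ (y / (y - 1)) ^ B * (n : ℝ) ^ ε := by
        gcongr
        simpa using card_le_card fun p hp => mem_range.2 (mem_filter.1 hp).2

end DivisorBound

section VanishingMoments

open Polynomial

variable {ι R : Type*} [Fintype ι]

/-- The moments of order at most `D` of the system of point masses `w i` at the nodes `x i` are
zero. -/
def MomentsVanish [CommRing R] (D : ℕ) (x w : ι → R) : Prop :=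
  ∀ d ≤ D, ∑ i, w i * x i ^ d = 0

/-- The point masses `w i` at the nodes `x i` add up to the zero measure: the diagonal solutions of
the equations `MomentsVanish`. -/
def MassesCancel [AddCommMonoid R] [DecidableEq R] (x w : ι → R) : Prop :=
  ∀ v, ∑ i with x i = v, w i = 0

section Ring

variable [CommRing R] {D : ℕ} {x w w' : ι → R} {a b c : ι}

theorem MomentsVanish.sum_mul_eval (h : MomentsVanish D x w) {q : R[X]} (hq : q.natDegree ≤ D) :
    ∑ i, w i * q.eval (x i) = 0 := by
  simp_rw [eval_eq_sum_range' (Nat.lt_succ_of_le hq), mul_sum]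
  rw [sum_comm]
  refine sum_eq_zero fun d hd => ?_
  simp_rw [mul_left_comm _ (q.coeff d)]
  rw [← mul_sum, h d (Nat.lt_succ_iff.1 (mem_range.1 hd)), mul_zero]

theorem MomentsVanish.sub (h : MomentsVanish D x w) (h' : MomentsVanish D x w') :
    MomentsVanish D x (w - w') := fun d hd => by
  simp only [Pi.sub_apply, sub_mul, sum_sub_distrib, h d hd, h' d hd, sub_zero]

theorem MomentsVanish.massesCancel_of_card_support_le [IsDomain R] [DecidableEq R]
    (h : MomentsVanish D x w)
    (hcard : #{v ∈ univ.image x | ∑ i with x i = v, w i ≠ 0} ≤ D + 1) : MassesCancel x w := by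
  set φ : R → R := fun v => ∑ i with x i = v, w i
  set S := {v ∈ univ.image x | φ v ≠ 0}
  by_contra hcancel
  obtain ⟨v, hv : φ v ≠ 0⟩ := not_forall.1 hcancel
  have hvS : v ∈ S := by
    obtain ⟨i, hi, -⟩ := exists_ne_zero_of_sum_ne_zero hv
    exact mem_filter.2 ⟨mem_image.2 ⟨i, mem_univ i, (mem_filter.1 hi).2⟩, hv⟩
  set q : R[X] := ∏ u ∈ S.erase v, (X - C u)
  have hq : q.natDegree ≤ D := by
    rw [natDegree_finsetProd_X_sub_C_eq_card, card_erase_of_mem hvS]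
    omega
  have hqv : q.eval v ≠ 0 := by
    rw [eval_prod, prod_ne_zero_iff]
    exact fun u hu => by simpa using sub_ne_zero.2 (ne_of_mem_erase hu).symm
  have hfibre : ∑ i, w i * q.eval (x i) = ∑ u ∈ univ.image x, φ u * q.eval u := by
    rw [← sum_fiberwise_of_maps_to fun i _ => mem_image_of_mem x (mem_univ i)]
    refine sum_congr rfl fun u _ => ?_
    rw [sum_mul]
    exact sum_congr rfl fun i hi => by rw [(mem_filter.1 hi).2]
  rw [h.sum_mul_eval hq, sum_eq_single_of_mem v (filter_subset _ _ hvS) fun u hu huv => ?_]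
    at hfibre
  · exact mul_ne_zero hv hqv hfibre.symm
  · by_cases hu₀ : φ u = 0
    · rw [hu₀, zero_mul]
    · rw [eval_prod, prod_eq_zero (mem_erase.2 ⟨huv, mem_filter.2 ⟨hu, hu₀⟩⟩) (by simp), mul_zero]

theorem sum_filter_apply_eq_of_injective [DecidableEq R] (hx : Function.Injective x) (w : ι → R)
    (i : ι) : ∑ j with x j = x i, w j = w i :=
  sum_eq_single_of_mem i (by simp) fun j hj hji => absurd (hx (mem_filter.1 hj).2) hji

theorem MomentsVanish.massesCancel_or [IsDomain R] [DecidableEq R] (h : MomentsVanish D x w)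
    (hι : Fintype.card ι ≤ D + 2) : MassesCancel x w ∨
      Fintype.card ι = D + 2 ∧ Function.Injective x ∧ ∀ i, w i ≠ 0 := by
  by_cases hcard : #{v ∈ univ.image x | ∑ i with x i = v, w i ≠ 0} ≤ D + 1
  · exact .inl (h.massesCancel_of_card_support_le hcard)
  have hfilter := card_filter_le (univ.image x) fun v => ∑ i with x i = v, w i ≠ 0
  have himage : #(univ.image x) ≤ Fintype.card ι := card_image_le
  have hinj : Function.Injective x := by
    rw [← Set.injOn_univ, ← coe_univ, ← card_image_iff, card_univ]
    omega
  refine .inr ⟨by omega, hinj, fun i => ?_⟩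
  have hall : {v ∈ univ.image x | ∑ i with x i = v, w i ≠ 0} = univ.image x :=
    eq_of_subset_of_card_le (filter_subset _ _) (by omega)
  rw [← sum_filter_apply_eq_of_injective hinj w i]
  exact filter_eq_self.1 hall (x i) (mem_image_of_mem x (mem_univ i))

theorem MomentsVanish.weights_eq [IsDomain R] (h : MomentsVanish D x w)
    (h' : MomentsVanish D x w') (hι : Fintype.card ι ≤ D + 2) (hx : Function.Injective x)
    (ha : w a = w' a) : w = w' := by
  classical
  rcases (h.sub h').massesCancel_or hι with hcancel | ⟨-, -, hne⟩
  · funext i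
    have hi := hcancel (x i)
    rw [sum_filter_apply_eq_of_injective hx] at hi
    exact sub_eq_zero.1 hi
  · exact absurd (sub_eq_zero.2 ha) (hne a)

theorem MomentsVanish.mul_prod_sub_eq [DecidableEq ι] (h : MomentsVanish D x w)
    (hι : Fintype.card ι ≤ D + 2) (hab : a ≠ b) :
    w a * ∏ j ∈ {a, b}ᶜ, (x a - x j) = -(w b * ∏ j ∈ {a, b}ᶜ, (x b - x j)) := by
  set q : R[X] := ∏ j ∈ {a, b}ᶜ, (X - C (x j))
  have hq : q.natDegree ≤ D := by
    refine (natDegree_prod_le _ _).trans ((sum_le_card_nsmul _ _ 1 fun j _ =>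
      natDegree_X_sub_C_le (x j)).trans ?_)
    rw [smul_eq_mul, mul_one, card_compl, card_pair hab]
    omega
  have hsum := h.sum_mul_eval hq
  rw [← sum_add_sum_compl {a, b}, sum_pair hab, sum_eq_zero (s := {a, b}ᶜ) fun i hi => ?_,
    add_zero] at hsum
  · simpa [q, eval_prod, add_eq_zero_iff_eq_neg] using hsum
  · rw [eval_prod, prod_eq_zero hi (by simp), mul_zero]

theorem MomentsVanish.sub_dvd_mul_prod_sub [DecidableEq ι] (h : MomentsVanish D x w)
    (hι : Fintype.card ι ≤ D + 2) (hab : a ≠ b) (hca : c ≠ a) (hcb : c ≠ b) :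
    x b - x c ∣ w a * ∏ j ∈ {a, b}ᶜ, (x a - x j) := by
  rw [h.mul_prod_sub_eq hι hab]
  exact dvd_neg.2 ((dvd_prod_of_mem (fun j => x b - x j) (by simp [hca, hcb])).mul_left _)

end Ring

end VanishingMoments

section Counting

variable {ι R : Type*}

/-- A choice of one index in each fibre of `x`. -/
noncomputable def fibreRep [Nonempty ι] (x : ι → R) (i : ι) : ι :=
  Function.invFun x (x i)

theorem apply_fibreRep [Nonempty ι] (x : ι → R) (i : ι) : x (fibreRep x i) = x i :=
  Function.apply_invFun_apply

theorem fibreRep_congr [Nonempty ι] {x : ι → R} {i j : ι} (h : x i = x j) :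
    fibreRep x i = fibreRep x j :=
  congrArg (Function.invFun x) h

theorem fibreRep_fibreRep [Nonempty ι] (x : ι → R) (i : ι) :
    fibreRep x (fibreRep x i) = fibreRep x i :=
  fibreRep_congr (apply_fibreRep x i)

variable [Fintype ι]

/-- In each fibre, the weight of the representative is minus the sum of the other weights. -/
theorem MassesCancel.weights_eq [Nonempty ι] [AddCommGroup R] [DecidableEq R] {x w w' : ι → R}
    (h : MassesCancel x w) (h' : MassesCancel x w')
    (hw : ∀ i, fibreRep x i ≠ i → w i = w' i) : w = w' := by
  funext i
  by_cases hi : fibreRep x i = i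
  · have hsum : ∑ j with x j = x i, (w j - w' j) = 0 := by
      rw [sum_sub_distrib, h, h', sub_zero]
    refine sub_eq_zero.1 (Eq.trans (Eq.symm ?_) hsum)
    refine sum_eq_single_of_mem i (by simp) fun j hj hji => sub_eq_zero.2 (hw j fun hjj => hji ?_)
    rw [← hjj, ← hi]
    exact fibreRep_congr (mem_filter.1 hj).2
  · exact hw i hi

variable [DecidableEq ι]

theorem card_piFinset_ite_le {A B : Finset R} (hAB : #A ≤ #B) {σ : ι → ι} {a : ι} (ha : σ a = a) :
    #(Fintype.piFinset fun i => if σ i = i then A else B) ≤ #A * #B ^ (Fintype.card ι - 1) := by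
  rw [Fintype.card_piFinset, ← mul_prod_erase univ _ (mem_univ a), if_pos ha, ← card_univ,
    ← card_erase_of_mem (mem_univ a)]
  refine Nat.mul_le_mul_left _ (prod_le_pow_card _ _ _ fun i _ => ?_)
  split_ifs
  exacts [hAB, le_rfl]

theorem card_filter_fibreRep_le [Nonempty ι] [AddCommGroup R] [DecidableEq R] {A B : Finset R}
    (hAB : #A ≤ #B) {S : Finset (ι → R × R)} (hS : S ⊆ Fintype.piFinset fun _ => A ×ˢ B)
    (hcancel : ∀ t ∈ S, MassesCancel (fun i => (t i).1) fun i => (t i).2) (σ : ι → ι) :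
    #{t ∈ S | fibreRep (fun i => (t i).1) = σ} ≤ #A * #B ^ (Fintype.card ι - 1) := by
  rcases {t ∈ S | fibreRep (fun i => (t i).1) = σ}.eq_empty_or_nonempty with hempty | ⟨t₀, ht₀⟩
  · simp [hempty]
  have hσ : ∀ i, σ (σ i) = σ i := by
    rw [← (mem_filter.1 ht₀).2]
    exact fibreRep_fibreRep _
  refine le_trans (card_le_card_of_injOn (fun t i => if σ i = i then (t i).1 else (t i).2) ?_ ?_)
    (card_piFinset_ite_le hAB (hσ (Classical.arbitrary ι)))
  · intro t ht
    have hbox := fun i => mem_product.1 (Fintype.mem_piFinset.1 (hS (mem_filter.1 ht).1) i)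
    refine mem_coe.2 (Fintype.mem_piFinset.2 fun i => ?_)
    dsimp only
    split_ifs
    exacts [(hbox i).1, (hbox i).2]
  · intro t ht t' ht' hcode
    obtain ⟨htS, htσ⟩ := mem_filter.1 ht
    obtain ⟨htS', htσ'⟩ := mem_filter.1 ht'
    have hnode : (fun i => (t i).1) = fun i => (t' i).1 := funext fun i => by
      have hi := congrFun hcode (σ i)
      simp only [hσ, if_true] at hi
      rw [← apply_fibreRep (fun i => (t i).1), ← apply_fibreRep (fun i => (t' i).1), htσ, htσ', hi]
    have hweight := (hcancel t htS).weights_eq (hnode ▸ hcancel t' htS') fun i hi => by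
      simpa [htσ ▸ hi] using congrFun hcode i
    exact funext fun i => Prod.ext (congrFun hnode i) (congrFun hweight i)

theorem card_le_of_massesCancel [Nonempty ι] [AddCommGroup R] [DecidableEq R] {A B : Finset R}
    (hAB : #A ≤ #B) {S : Finset (ι → R × R)} (hS : S ⊆ Fintype.piFinset fun _ => A ×ˢ B)
    (hcancel : ∀ t ∈ S, MassesCancel (fun i => (t i).1) fun i => (t i).2) :
    #S ≤ Fintype.card ι ^ Fintype.card ι * (#A * #B ^ (Fintype.card ι - 1)) := by
  have hcard := card_le_mul_card_image_of_maps_to (fun t _ => mem_univ (fibreRep fun i => (t i).1))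
    _ fun σ _ => card_filter_fibreRep_le hAB hS hcancel σ
  rwa [card_univ, Fintype.card_fun, mul_comm] at hcard

theorem card_le_two_mul_card_divisors {K : ℤ} (hK : K ≠ 0) {T : Finset ℤ} (hT : ∀ d ∈ T, d ∣ K) :
    #T ≤ 2 * #K.natAbs.divisors := by
  refine card_le_mul_card_image_of_maps_to (f := Int.natAbs) (fun d hd => ?_) 2 fun n _ => ?_
  · exact Nat.mem_divisors.2 ⟨Int.natAbs_dvd_natAbs.2 (hT d hd), Int.natAbs_ne_zero.2 hK⟩
  · refine (card_le_card fun d hd => ?_).trans (card_le_two (a := (n : ℤ)) (b := -n))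
    simpa [Int.natAbs_eq_iff] using (mem_filter.1 hd).2

variable {D Q : ℕ} {a b c : ι}

/-- If the weight at `a` and all nodes except that at `b` are fixed, then so is the multiple
`w a * ∏ j ∈ {a, b}ᶜ, (x a - x j)` of `x b - x c`. -/
theorem card_le_of_momentsVanish_of_eqOn (hι : Fintype.card ι ≤ D + 2) (hab : a ≠ b) (hca : c ≠ a)
    (hcb : c ≠ b) {S : Finset (ι → ℤ × ℤ)}
    (hmom : ∀ t ∈ S, MomentsVanish D (fun i => (t i).1) fun i => (t i).2)
    (hinj : ∀ t ∈ S, Function.Injective fun i => (t i).1) (hne : ∀ t ∈ S, (t a).2 ≠ 0)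
    (hQ : ∀ t ∈ S, #((t a).2 * ∏ j ∈ {a, b}ᶜ, ((t a).1 - (t j).1)).natAbs.divisors ≤ Q)
    (hweight : ∀ t ∈ S, ∀ t' ∈ S, (t a).2 = (t' a).2)
    (hnode : ∀ t ∈ S, ∀ t' ∈ S, ∀ i ≠ b, (t i).1 = (t' i).1) : #S ≤ 2 * Q := by
  rcases S.eq_empty_or_nonempty with rfl | ⟨t₀, ht₀⟩
  · simp
  set K := (t₀ a).2 * ∏ j ∈ {a, b}ᶜ, ((t₀ a).1 - (t₀ j).1)
  have hK : K ≠ 0 := by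
    refine mul_ne_zero (hne t₀ ht₀) (prod_ne_zero_iff.2 fun j hj hzero => ?_)
    have haj := hinj t₀ ht₀ (sub_eq_zero.1 hzero)
    simp [haj] at hj
  have hdvd : ∀ t ∈ S, (t b).1 - (t c).1 ∣ K := fun t ht => by
    have hKt : K = (t a).2 * ∏ j ∈ {a, b}ᶜ, ((t a).1 - (t j).1) :=
      congrArg₂ (· * ·) (hweight t₀ ht₀ t ht) <| prod_congr rfl fun j hj => by
        rw [hnode t₀ ht₀ t ht a hab, hnode t₀ ht₀ t ht j fun hjb => by simp [hjb] at hj]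
    rw [hKt]
    exact (hmom t ht).sub_dvd_mul_prod_sub hι hab hca hcb
  have hinjOn : Set.InjOn (fun t : ι → ℤ × ℤ => (t b).1 - (t c).1) S := fun t ht t' ht' hbc => by
    have hx : (fun i => (t i).1) = fun i => (t' i).1 := funext fun i => by
      rcases eq_or_ne i b with rfl | hi
      · have hc := hnode t ht t' ht' c hcb
        simp only at hbc
        omega
      · exact hnode t ht t' ht' i hi
    have hw := (hmom t ht).weights_eq (hx ▸ hmom t' ht') hι (hinj t ht) (hweight t ht t' ht')
    exact funext fun i => Prod.ext (congrFun hx i) (congrFun hw i)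
  calc #S = #(S.image fun t => (t b).1 - (t c).1) := (card_image_of_injOn hinjOn).symm
    _ ≤ 2 * #K.natAbs.divisors :=
      card_le_two_mul_card_divisors hK (forall_mem_image.2 hdvd)
    _ ≤ 2 * Q := Nat.mul_le_mul_left 2 (hQ t₀ ht₀)

theorem card_le_of_momentsVanish_of_injective (hι : Fintype.card ι ≤ D + 2) (hab : a ≠ b)
    (hca : c ≠ a) (hcb : c ≠ b) {A B : Finset ℤ} {S : Finset (ι → ℤ × ℤ)}
    (hS : S ⊆ Fintype.piFinset fun _ => A ×ˢ B)
    (hmom : ∀ t ∈ S, MomentsVanish D (fun i => (t i).1) fun i => (t i).2)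
    (hinj : ∀ t ∈ S, Function.Injective fun i => (t i).1) (hne : ∀ t ∈ S, (t a).2 ≠ 0)
    (hQ : ∀ t ∈ S, #((t a).2 * ∏ j ∈ {a, b}ᶜ, ((t a).1 - (t j).1)).natAbs.divisors ≤ Q) :
    #S ≤ 2 * Q * (#B * #A ^ (Fintype.card ι - 1)) := by
  set f : (ι → ℤ × ℤ) → ℤ × ({i // i ≠ b} → ℤ) := fun t => ((t a).2, fun i => (t i).1)
  have hmaps : ∀ t ∈ S, f t ∈ B ×ˢ Fintype.piFinset fun _ => A := fun t ht => by
    have hbox := fun i => mem_product.1 (Fintype.mem_piFinset.1 (hS ht) i)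
    exact mem_product.2 ⟨(hbox a).2, Fintype.mem_piFinset.2 fun i => (hbox i).1⟩
  have hfibre : ∀ y, #{t ∈ S | f t = y} ≤ 2 * Q := fun y => by
    have hS' := filter_subset (fun t => f t = y) S
    have heq : ∀ t ∈ {t ∈ S | f t = y}, ∀ t' ∈ {t ∈ S | f t = y}, f t = f t' :=
      fun t ht t' ht' => (mem_filter.1 ht).2.trans (mem_filter.1 ht').2.symm
    exact card_le_of_momentsVanish_of_eqOn hι hab hca hcb (fun t ht => hmom t (hS' ht))
      (fun t ht => hinj t (hS' ht)) (fun t ht => hne t (hS' ht)) (fun t ht => hQ t (hS' ht))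
      (fun t ht t' ht' => congrArg Prod.fst (heq t ht t' ht')) fun t ht t' ht' i hi =>
        congrFun (congrArg Prod.snd (heq t ht t' ht')) ⟨i, hi⟩
  have hcard := card_le_mul_card_image_of_maps_to hmaps _ fun y _ => hfibre y
  rwa [card_product, Fintype.card_piFinset, prod_const, card_univ, Fintype.card_subtype_compl,
    Fintype.card_subtype_eq] at hcard

end Counting

section CountingInBoxes

variable {ι : Type*} [Fintype ι] [DecidableEq ι] {D Y Z : ℕ} {a b : ι}

/-- The systems of point masses, given as pairs of a node and a weight, with nodes in `[1, Y]` and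
weights in `[-Z, Z]`. -/
noncomputable def nodeWeightBox (ι : Type*) [Fintype ι] [DecidableEq ι] (Y Z : ℕ) :
    Finset (ι → ℤ × ℤ) :=
  Fintype.piFinset fun _ => Icc (1 : ℤ) Y ×ˢ Icc (-(Z : ℤ)) Z

theorem mem_nodeWeightBox {t : ι → ℤ × ℤ} : t ∈ nodeWeightBox ι Y Z ↔
    ∀ i, (1 ≤ (t i).1 ∧ (t i).1 ≤ Y) ∧ -(Z : ℤ) ≤ (t i).2 ∧ (t i).2 ≤ Z := by
  simp [nodeWeightBox]

theorem card_Icc_neg_le (hZ : 1 ≤ Z) : #(Icc (-(Z : ℤ)) Z) ≤ 3 * Z := by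
  rw [Int.card_Icc]
  omega

theorem card_Icc_mul_card_Icc_pow_le (hY : Y ≤ Z) (hZ : 1 ≤ Z) {n : ℕ} :
    #(Icc (-(Z : ℤ)) Z) * #(Icc (1 : ℤ) Y) ^ (n + 1) ≤ 3 * (Y * Z ^ (n + 1)) := by
  rw [Int.card_Icc 1, add_sub_cancel_right, Int.toNat_natCast]
  calc #(Icc (-(Z : ℤ)) Z) * Y ^ (n + 1) ≤ 3 * Z * (Y * Z ^ n) := by
        rw [pow_succ' Y]
        gcongr
        exact card_Icc_neg_le hZ
    _ = 3 * (Y * Z ^ (n + 1)) := by ring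

theorem card_le_of_massesCancel_of_box [Nonempty ι] (hY : 1 ≤ Y) (hYZ : Y ≤ Z)
    {S : Finset (ι → ℤ × ℤ)} (hS : S ⊆ nodeWeightBox ι Y Z)
    (hcancel : ∀ t ∈ S, MassesCancel (fun i => (t i).1) fun i => (t i).2) :
    #S ≤ Fintype.card ι ^ Fintype.card ι * 3 ^ (Fintype.card ι - 1) *
      (Y * Z ^ (Fintype.card ι - 1)) := by
  have hcard : #(Icc (1 : ℤ) Y) ≤ #(Icc (-(Z : ℤ)) Z) := by
    simp only [Int.card_Icc]
    omega
  refine (card_le_of_massesCancel hcard hS hcancel).trans ?_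
  rw [mul_assoc]
  refine Nat.mul_le_mul_left _ ?_
  calc #(Icc (1 : ℤ) Y) * #(Icc (-(Z : ℤ)) Z) ^ (Fintype.card ι - 1)
      ≤ Y * (3 * Z) ^ (Fintype.card ι - 1) := by
        gcongr
        · simp
        · exact card_Icc_neg_le (hY.trans hYZ)
    _ = 3 ^ (Fintype.card ι - 1) * (Y * Z ^ (Fintype.card ι - 1)) := by
        rw [mul_pow, mul_left_comm]

theorem natAbs_mul_prod_sub_le (hY : 1 ≤ Y) (hYZ : Y ≤ Z) (hab : a ≠ b) {t : ι → ℤ × ℤ}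
    (ht : t ∈ nodeWeightBox ι Y Z) :
    ((t a).2 * ∏ j ∈ {a, b}ᶜ, ((t a).1 - (t j).1)).natAbs ≤ Z ^ Fintype.card ι := by
  have hbox := mem_nodeWeightBox.1 ht
  have hprod : (∏ j ∈ {a, b}ᶜ, ((t a).1 - (t j).1)).natAbs ≤ Z ^ #({a, b}ᶜ : Finset ι) := by
    rw [← Int.natAbsHom_apply, map_prod]
    refine prod_le_pow_card _ _ _ fun j _ => ?_
    have ha := (hbox a).1
    have hj := (hbox j).1
    rw [Int.natAbsHom_apply]
    omega
  have hcard : #({a, b}ᶜ : Finset ι) + 1 ≤ Fintype.card ι := by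
    have hle := card_le_univ ({a, b} : Finset ι)
    rw [card_compl]
    rw [card_pair hab] at hle ⊢
    omega
  rw [Int.natAbs_mul]
  calc (t a).2.natAbs * (∏ j ∈ {a, b}ᶜ, ((t a).1 - (t j).1)).natAbs
      ≤ Z * Z ^ #({a, b}ᶜ : Finset ι) := Nat.mul_le_mul (by have := (hbox a).2; omega) hprod
    _ = Z ^ (#({a, b}ᶜ : Finset ι) + 1) := (pow_succ' _ _).symm
    _ ≤ Z ^ Fintype.card ι := Nat.pow_le_pow_right (by omega) hcard

theorem exists_card_le_of_momentsVanish_of_injective (hι : Fintype.card ι ≤ D + 2)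
    (hι₃ : 2 < Fintype.card ι) {ε : ℝ} (hε : 0 < ε) :
    ∃ C : ℝ, ∀ Y Z : ℕ, 1 ≤ Y → Y ≤ Z → ∀ S ⊆ nodeWeightBox ι Y Z,
      (∀ t ∈ S, MomentsVanish D (fun i => (t i).1) fun i => (t i).2) →
      (∀ t ∈ S, (Function.Injective fun i => (t i).1) ∧ ∀ i, (t i).2 ≠ 0) →
      (#S : ℝ) ≤ C * (Z : ℝ) ^ ε * (Y * (Z : ℝ) ^ (Fintype.card ι - 1)) := by
  obtain ⟨a, b, c, hab, hac, hbc⟩ := Fintype.two_lt_card_iff.1 hι₃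
  set n := Fintype.card ι
  have hn : (n : ℝ) ≠ 0 := Nat.cast_ne_zero.2 (by omega)
  obtain ⟨C, hC₁, hC⟩ := exists_card_divisors_le (div_pos hε (n.cast_pos.2 (by omega)))
  refine ⟨6 * C, fun Y Z hY hYZ S hS hmom hS' => ?_⟩
  have hdivisors : ∀ t ∈ S,
      #((t a).2 * ∏ j ∈ {a, b}ᶜ, ((t a).1 - (t j).1)).natAbs.divisors ≤ ⌊C * (Z : ℝ) ^ ε⌋₊ := by
    intro t ht
    have hne : (t a).2 * ∏ j ∈ {a, b}ᶜ, ((t a).1 - (t j).1) ≠ 0 :=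
      mul_ne_zero ((hS' t ht).2 a) <| prod_ne_zero_iff.2 fun j hj hzero => by
        simp [(hS' t ht).1 (sub_eq_zero.1 hzero)] at hj
    refine Nat.le_floor ((hC _ (Int.natAbs_ne_zero.2 hne)).trans ?_)
    have hpow : (Z : ℝ) ^ ε = ((Z ^ n : ℕ) : ℝ) ^ (ε / n) := by
      rw [Nat.cast_pow, ← Real.rpow_natCast, ← Real.rpow_mul Z.cast_nonneg, mul_div_cancel₀ _ hn]
    rw [hpow]
    gcongr
    exact natAbs_mul_prod_sub_le hY hYZ hab (hS ht)
  have hcard := card_le_of_momentsVanish_of_injective hι hab hac.symm hbc.symm hS hmom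
    (fun t ht => (hS' t ht).1) (fun t ht => (hS' t ht).2 a) hdivisors
  obtain ⟨m, hm⟩ : ∃ m, n - 1 = m + 1 := ⟨n - 2, by omega⟩
  calc (#S : ℝ) ≤ ((2 * ⌊C * (Z : ℝ) ^ ε⌋₊ * (3 * (Y * Z ^ (n - 1))) : ℕ) : ℝ) := by
        rw [hm] at hcard ⊢
        exact_mod_cast hcard.trans
          (Nat.mul_le_mul_left _ (card_Icc_mul_card_Icc_pow_le hYZ (hY.trans hYZ)))
    _ = 6 * ⌊C * (Z : ℝ) ^ ε⌋₊ * (Y * (Z : ℝ) ^ (n - 1)) := by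
        push_cast
        ring
    _ ≤ 6 * (C * (Z : ℝ) ^ ε) * (Y * (Z : ℝ) ^ (n - 1)) := by
        gcongr
        exact Nat.floor_le (by positivity)
    _ = 6 * C * (Z : ℝ) ^ ε * (Y * (Z : ℝ) ^ (n - 1)) := by ring

/-- Off the diagonal there are as many masses as nodes allow, at distinct nodes, and the divisor
bound applies. -/
theorem exists_card_le_of_momentsVanish [Nonempty ι] (hι : Fintype.card ι ≤ D + 2) (hD : 1 ≤ D)
    {ε : ℝ} (hε : 0 < ε) :
    ∃ C : ℝ, ∀ Y Z : ℕ, 1 ≤ Y → Y ≤ Z → ∀ S ⊆ nodeWeightBox ι Y Z,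
      (∀ t ∈ S, MomentsVanish D (fun i => (t i).1) fun i => (t i).2) →
      (#S : ℝ) ≤ C * (Z : ℝ) ^ ε * (Y * (Z : ℝ) ^ (Fintype.card ι - 1)) := by
  classical
  obtain ⟨C, hC⟩ : ∃ C : ℝ, ∀ Y Z : ℕ, 1 ≤ Y → Y ≤ Z → ∀ S ⊆ nodeWeightBox ι Y Z,
      (∀ t ∈ S, MomentsVanish D (fun i => (t i).1) fun i => (t i).2) →
      (∀ t ∈ S, ¬MassesCancel (fun i => (t i).1) fun i => (t i).2) →
      (#S : ℝ) ≤ C * (Z : ℝ) ^ ε * (Y * (Z : ℝ) ^ (Fintype.card ι - 1)) := by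
    have hor := fun (t : ι → ℤ × ℤ) (h : MomentsVanish D (fun i => (t i).1) fun i => (t i).2) hn =>
      (h.massesCancel_or hι).resolve_left hn
    by_cases hι₃ : 2 < Fintype.card ι
    · obtain ⟨C, hC⟩ := exists_card_le_of_momentsVanish_of_injective hι hι₃ hε
      exact ⟨C, fun Y Z hY hYZ S hS hmom hS' => hC Y Z hY hYZ S hS hmom fun t ht =>
        (hor t (hmom t ht) (hS' t ht)).2⟩
    · refine ⟨0, fun Y Z _ _ S _ hmom hS' => ?_⟩
      have hempty : S = ∅ := eq_empty_of_forall_notMem fun t ht => by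
        have := (hor t (hmom t ht) (hS' t ht)).1
        omega
      simp [hempty]
  set n := Fintype.card ι
  refine ⟨n ^ n * 3 ^ (n - 1) + C, fun Y Z hY hYZ S hS hmom => ?_⟩
  set P : (ι → ℤ × ℤ) → Prop := fun t => MassesCancel (fun i => (t i).1) fun i => (t i).2
  have hdiag : (#{t ∈ S | P t} : ℝ) ≤ n ^ n * 3 ^ (n - 1) * (Y * (Z : ℝ) ^ (n - 1)) := by
    exact_mod_cast card_le_of_massesCancel_of_box hY hYZ ((filter_subset _ _).trans hS)
      fun t ht => (mem_filter.1 ht).2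
  have hoff := hC Y Z hY hYZ {t ∈ S | ¬P t} ((filter_subset _ _).trans hS)
    (fun t ht => hmom t (mem_filter.1 ht).1) fun t ht => (mem_filter.1 ht).2
  have hZ : (1 : ℝ) ≤ (Z : ℝ) ^ ε :=
    Real.one_le_rpow (Nat.one_le_cast.2 (hY.trans hYZ)) hε.le
  have hdiag' : (n : ℝ) ^ n * 3 ^ (n - 1) * (Y * (Z : ℝ) ^ (n - 1)) ≤
      n ^ n * 3 ^ (n - 1) * (Z : ℝ) ^ ε * (Y * (Z : ℝ) ^ (n - 1)) := by
    exact mul_le_mul_of_nonneg_right (le_mul_of_one_le_right (by positivity) hZ) (by positivity)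
  rw [← card_filter_add_card_filter_not P, Nat.cast_add, add_mul, add_mul]
  linarith

end CountingInBoxes

section ExponentialSums

open Matrix ComplexConjugate

variable {ι κ : Type*} {q k : ℕ} [NeZero q]

theorem map_addChar_sum {A M : Type*} [AddCommMonoid A] [CommMonoid M] (ψ : AddChar A M)
    (S : Finset ι) (f : ι → A) : ψ (∑ i ∈ S, f i) = ∏ i ∈ S, ψ (f i) :=
  map_prod ψ.toMonoidHom (fun i => Multiplicative.ofAdd (f i)) S

theorem sum_stdAddChar_dotProduct (w : Fin k → ZMod q) :
    ∑ α : Fin k → ZMod q, (ZMod.stdAddChar (α ⬝ᵥ w) : ℂ) = if w = 0 then (q : ℂ) ^ k else 0 := by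
  have hprod (α : Fin k → ZMod q) : (ZMod.stdAddChar (α ⬝ᵥ w) : ℂ) =
      ∏ j, ZMod.stdAddChar (α j * w j) := map_addChar_sum _ _ _
  have hcoord := prod_univ_sum (fun _ : Fin k => (univ : Finset (ZMod q)))
    fun j a => (ZMod.stdAddChar (a * w j) : ℂ)
  rw [Fintype.piFinset_univ] at hcoord
  simp only [hprod, ← hcoord, AddChar.sum_mulShift _ (ZMod.isPrimitive_stdAddChar q)]
  split_ifs with hw
  · simp [hw]
  · obtain ⟨j, hj⟩ := Function.ne_iff.1 hw
    exact prod_eq_zero (mem_univ j) (by simp_all)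

/-- The exponential sum `∑ i ∈ S, e(α · v i / q)` over the vectors `v i`, which is the generating
function for additive problems in the `v i`. -/
noncomputable def expSum (S : Finset ι) (v : ι → Fin k → ZMod q) (α : Fin k → ZMod q) : ℂ :=
  ∑ i ∈ S, ZMod.stdAddChar (α ⬝ᵥ v i)

variable (S : Finset ι) (T : Finset κ) (v : ι → Fin k → ZMod q) (w : κ → Fin k → ZMod q)

theorem sum_expSum :
    ∑ α, expSum S v α = (q : ℂ) ^ k * #{i ∈ S | v i = 0} := by
  simp only [expSum]
  rw [sum_comm]
  simp only [sum_stdAddChar_dotProduct]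
  rw [← sum_filter, sum_const, nsmul_eq_mul, mul_comm]

theorem expSum_mul (α : Fin k → ZMod q) :
    expSum S v α * expSum T w α = expSum (S ×ˢ T) (fun t => v t.1 + w t.2) α := by
  simp only [expSum, sum_mul_sum, sum_product, dotProduct_add, AddChar.map_add_eq_mul]

theorem expSum_pow (n : ℕ) (α : Fin k → ZMod q) :
    expSum S v α ^ n =
      expSum (Fintype.piFinset fun _ : Fin n => S) (fun t => ∑ i, v (t i)) α := by
  simp only [expSum, sum_pow', dotProduct_sum, map_addChar_sum]

theorem conj_expSum (α : Fin k → ZMod q) : conj (expSum S v α) = expSum S (-v) α := by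
  simp only [expSum, map_sum, Pi.neg_apply, dotProduct_neg, AddChar.map_neg_eq_conj]

theorem sum_norm_expSum_pow_two_mul (hv : ∀ α, conj (expSum S v α) = expSum S v α) (m : ℕ) :
    ∑ α, ‖expSum S v α‖ ^ (2 * m) =
      (q : ℝ) ^ k * #{t ∈ Fintype.piFinset fun _ : Fin (2 * m) => S | ∑ i, v (t i) = 0} := by
  have hpow (α : Fin k → ZMod q) : ((‖expSum S v α‖ : ℂ)) ^ (2 * m) =
      expSum (Fintype.piFinset fun _ : Fin (2 * m) => S) (fun t => ∑ i, v (t i)) α := by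
    rw [← expSum_pow, pow_mul, ← Complex.mul_conj', hv, ← sq, pow_mul]
  have hsum := sum_expSum (Fintype.piFinset fun _ : Fin (2 * m) => S) fun t => ∑ i, v (t i)
  simp only [← hpow] at hsum
  exact_mod_cast hsum

theorem pow_mul_card_le_sum_norm_expSum (s : ℕ) :
    (q : ℝ) ^ k * #{t ∈ ((Fintype.piFinset fun _ : Fin s => S) ×ˢ
        Fintype.piFinset fun _ : Fin s => S) ×ˢ T |
      ∑ i, v (t.1.1 i) - ∑ i, v (t.1.2 i) + w t.2 = 0} ≤
    ∑ α, ‖expSum S v α‖ ^ (2 * s) * ‖expSum T w α‖ := by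
  have hprod (α : Fin k → ZMod q) :
      expSum (((Fintype.piFinset fun _ : Fin s => S) ×ˢ Fintype.piFinset fun _ : Fin s => S) ×ˢ T)
          (fun t => ∑ i, v (t.1.1 i) - ∑ i, v (t.1.2 i) + w t.2) α =
        expSum S v α ^ s * conj (expSum S v α ^ s) * expSum T w α := by
    rw [expSum_pow, conj_expSum, expSum_mul, expSum_mul]
    simp only [Pi.neg_apply, sub_eq_add_neg]
  have hsum := congrArg norm (sum_expSum (((Fintype.piFinset fun _ : Fin s => S) ×ˢ
    Fintype.piFinset fun _ : Fin s => S) ×ˢ T)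
    fun t => ∑ i, v (t.1.1 i) - ∑ i, v (t.1.2 i) + w t.2)
  rw [norm_mul, norm_pow, Complex.norm_natCast, Complex.norm_natCast] at hsum
  rw [← hsum]
  refine (norm_sum_le _ _).trans_eq (sum_congr rfl fun α _ => ?_)
  rw [hprod, norm_mul, norm_mul, RCLike.norm_conj, norm_pow, ← pow_add, two_mul]

end ExponentialSums

section ShiftSums

open Matrix ComplexConjugate

variable {q k l r Y Z : ℕ}

/-- The change `w * (j choose r) * h ^ (j - r)`, for `1 ≤ j ≤ k`, of the defects of a system of
equations between power sums under the translation by `h`, when the only nonzero defect is `w`, in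
degree `r`. -/
def shiftVector (R : Type*) [CommRing R] (k r : ℕ) (t : ℤ × ℤ) : Fin k → R :=
  fun j => ((j.1 + 1).choose r * (t.2 * t.1 ^ (j.1 + 1 - r)) : ℤ)

theorem shiftVector_comp_castLE (R : Type*) [CommRing R] (hlk : l ≤ k) (hlr : l < r) (t : ℤ × ℤ) :
    shiftVector R k r t ∘ Fin.castLE hlk = 0 := by
  ext j
  have := j.2
  simp [shiftVector, Nat.choose_eq_zero_of_lt (show j.1 + 1 < r by omega)]

variable [NeZero q]

theorem weylSum_one : weylSum 1 Y = expSum (Icc (1 : ℤ) Y)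
    fun i => curveEval (momentCurve (ZMod q) k) (i : ZMod q) := by
  ext α
  simp [weylSum, expSum]

/-- The generating function of the vectors `shiftVector` with `1 ≤ h ≤ Y` and `|w| ≤ Z`. -/
noncomputable def shiftSum (r Y Z : ℕ) : (Fin k → ZMod q) → ℂ :=
  expSum (Icc (1 : ℤ) Y ×ˢ Icc (-(Z : ℤ)) Z) (shiftVector (ZMod q) k r)

theorem conj_shiftSum (α : Fin k → ZMod q) : conj (shiftSum r Y Z α) = shiftSum r Y Z α := by
  rw [shiftSum, conj_expSum, expSum, expSum]
  refine sum_nbij' (fun t => (t.1, -t.2)) (fun t => (t.1, -t.2)) ?_ ?_ (by simp) (by simp) ?_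
  · simp only [mem_product, mem_Icc]
    omega
  · simp only [mem_product, mem_Icc]
    omega
  · intro t _
    congr 2
    ext j
    simp [shiftVector]

theorem sum_norm_shiftSum_pow (m : ℕ) :
    ∑ α : Fin k → ZMod q, ‖shiftSum r Y Z α‖ ^ (2 * m) = (q : ℝ) ^ k *
      #{t ∈ nodeWeightBox (Fin (2 * m)) Y Z | ∑ i, shiftVector (ZMod q) k r (t i) = 0} :=
  sum_norm_expSum_pow_two_mul _ _ conj_shiftSum m

theorem extend_dotProduct {m n R : Type*} [Fintype m] [Fintype n] [NonUnitalNonAssocSemiring R]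
    {f : m → n} (hf : Function.Injective f) (y : m → R) (w : n → R) :
    Function.extend f y 0 ⬝ᵥ w = y ⬝ᵥ (w ∘ f) :=
  (Fintype.sum_of_injective f hf _ _
    (fun j hj => by rw [Function.extend_apply' _ _ _ hj, Pi.zero_apply, zero_mul])
    fun i => by rw [hf.extend_apply, Function.comp_apply]).symm

theorem weylSum_add_extend (hlk : l ≤ k) (a : ℤ → ℂ) (α : Fin k → ZMod q) (y : Fin l → ZMod q) :
    weylSum a Y (α + Function.extend (Fin.castLE hlk) y 0) =
      weylSum (fun i => a i * ZMod.stdAddChar (α ⬝ᵥ curveEval (momentCurve (ZMod q) k) i)) Y y := by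
  simp only [weylSum, add_dotProduct, extend_dotProduct (Fin.castLE_injective hlk),
    AddChar.map_add_eq_mul, mul_assoc]
  rfl

theorem shiftSum_add_extend (hlk : l ≤ k) (hlr : l < r) (α : Fin k → ZMod q)
    (y : Fin l → ZMod q) :
    shiftSum r Y Z (α + Function.extend (Fin.castLE hlk) y 0) = shiftSum r Y Z α := by
  simp only [shiftSum, expSum, add_dotProduct, extend_dotProduct (Fin.castLE_injective hlk),
    shiftVector_comp_castLE _ hlk hlr, dotProduct_zero, add_zero]

/-- The sum `shiftSum` does not see the first `l < r` frequencies, so that `weylSum` may be averaged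
over these alone. -/
theorem sum_norm_weylSum_pow_mul_norm_shiftSum_pow_le (hlk : l ≤ k) (hlr : l < r) {m n : ℕ} {B : ℝ}
    (hB : ∀ a : ℤ → ℂ, (∀ i, ‖a i‖ ≤ 1) →
      ∑ y : Fin l → ZMod q, ‖weylSum a Y y‖ ^ m ≤ B * (q : ℝ) ^ l) :
    ∑ α : Fin k → ZMod q, ‖weylSum 1 Y α‖ ^ m * ‖shiftSum r Y Z α‖ ^ n ≤
      B * ∑ α : Fin k → ZMod q, ‖shiftSum r Y Z α‖ ^ n := by
  have hmean := card_mul_sum_mul_le (B := B * (q : ℝ) ^ l)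
    (w := fun α : Fin k → ZMod q => ‖shiftSum r Y Z α‖ ^ n) (f := fun α => ‖weylSum 1 Y α‖ ^ m)
    (ρ := fun y : Fin l → ZMod q => Function.extend (Fin.castLE hlk) y 0)
    (fun _ => by positivity) (fun α y => by rw [shiftSum_add_extend hlk hlr]) fun α => by
      simp only [weylSum_add_extend]
      exact hB _ fun i => by simp
  have hq : (0 : ℝ) < (q : ℝ) ^ l := pow_pos (Nat.cast_pos.2 (NeZero.pos q)) l
  simp only [Fintype.card_fun, ZMod.card, Fintype.card_fin, Nat.cast_pow] at hmean
  refine le_of_mul_le_mul_left ?_ hq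
  simpa only [mul_comm, mul_left_comm, mul_assoc] using hmean

end ShiftSums

section ShiftMoments

variable {ι : Type*} [Fintype ι] [DecidableEq ι] {q k r d Y Z : ℕ} {t : ι → ℤ × ℤ}

theorem abs_sum_mul_pow_le (hY : 1 ≤ Y) (ht : t ∈ nodeWeightBox ι Y Z) (hd : d ≤ k) :
    |∑ i, (t i).2 * (t i).1 ^ d| ≤ Fintype.card ι * (Z * (Y : ℤ) ^ k) := by
  have hterm (i : ι) : |(t i).2 * (t i).1 ^ d| ≤ Z * (Y : ℤ) ^ k := by
    obtain ⟨⟨hnode, hnode'⟩, hweight⟩ := mem_nodeWeightBox.1 ht i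
    rw [abs_mul, abs_pow, abs_of_pos (by omega : 0 < (t i).1)]
    gcongr
    · exact abs_le.2 hweight
    · calc (t i).1 ^ d ≤ (Y : ℤ) ^ d := by gcongr
        _ ≤ (Y : ℤ) ^ k := pow_le_pow_right₀ (by exact_mod_cast hY) hd
  calc |∑ i, (t i).2 * (t i).1 ^ d| ≤ ∑ i, |(t i).2 * (t i).1 ^ d| := abs_sum_le_sum_abs _ _
    _ ≤ Fintype.card ι * (Z * (Y : ℤ) ^ k) := by
        simpa using sum_le_card_nsmul univ _ _ fun i _ => hterm i

theorem momentsVanish_of_sum_shiftVector_eq_zero (hr : r ≠ 0) (hrk : r ≤ k) (hY : 1 ≤ Y)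
    (hq : Fintype.card ι * (2 ^ k * (Z * Y ^ k)) < q) (ht : t ∈ nodeWeightBox ι Y Z)
    (hsum : ∑ i, shiftVector (ZMod q) k r (t i) = 0) :
    MomentsVanish (k - r) (fun i => (t i).1) fun i => (t i).2 := by
  intro d hd
  have hdvd := congrFun hsum ⟨d + r - 1, by omega⟩
  rw [Finset.sum_apply] at hdvd
  simp only [shiftVector, Pi.zero_apply, show d + r - 1 + 1 = d + r by omega,
    Nat.add_sub_cancel] at hdvd
  rw [← Int.cast_sum, ← mul_sum, ZMod.intCast_zmod_eq_zero_iff_dvd] at hdvd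
  have hchoose : (d + r).choose r ≤ 2 ^ k :=
    (Nat.choose_le_two_pow _ _).trans (Nat.pow_le_pow_right two_pos (by omega))
  have hlt : |((d + r).choose r : ℤ) * ∑ i, (t i).2 * (t i).1 ^ d| < q := calc
    |((d + r).choose r : ℤ) * ∑ i, (t i).2 * (t i).1 ^ d|
      = (d + r).choose r * |∑ i, (t i).2 * (t i).1 ^ d| := by rw [abs_mul, Nat.abs_cast]
    _ ≤ 2 ^ k * (Fintype.card ι * (Z * (Y : ℤ) ^ k)) := by
        gcongr
        · exact_mod_cast hchoose
        · exact abs_sum_mul_pow_le hY ht (by omega)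
    _ = (Fintype.card ι * (2 ^ k * (Z * Y ^ k)) : ℕ) := by
        push_cast
        ring
    _ < q := by exact_mod_cast hq
  refine (mul_eq_zero.1 (Int.eq_zero_of_abs_lt_dvd hdvd hlt)).resolve_left ?_
  exact_mod_cast (Nat.choose_pos (Nat.le_add_left r d)).ne'

theorem exists_sum_norm_shiftSum_pow_le {m : ℕ} (hr : r ≠ 0) (hrk : r < k) (hm : m ≠ 0)
    (hmk : 2 * m ≤ k - r + 2) {ε : ℝ} (hε : 0 < ε) :
    ∃ C : ℝ, ∀ q Y Z : ℕ, [NeZero q] → 1 ≤ Y → Y ≤ Z → 2 * m * (2 ^ k * (Z * Y ^ k)) < q →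
      ∑ α : Fin k → ZMod q, ‖shiftSum r Y Z α‖ ^ (2 * m) ≤
        (q : ℝ) ^ k * (C * (Z : ℝ) ^ ε * (Y * (Z : ℝ) ^ (2 * m - 1))) := by
  have : Nonempty (Fin (2 * m)) := ⟨⟨0, by omega⟩⟩
  obtain ⟨C, hC⟩ := exists_card_le_of_momentsVanish (ι := Fin (2 * m)) (D := k - r)
    (by simpa using hmk) (by omega) hε
  simp only [Fintype.card_fin] at hC
  refine ⟨C, fun q Y Z _ hY hYZ hq => ?_⟩
  rw [sum_norm_shiftSum_pow]
  refine mul_le_mul_of_nonneg_left ?_ (by positivity)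
  refine hC Y Z hY hYZ _ (filter_subset _ _) fun t ht => ?_
  obtain ⟨ht, hsum⟩ := mem_filter.1 ht
  exact momentsVanish_of_sum_shiftVector_eq_zero hr hrk.le hY (by simpa using hq) ht hsum

end ShiftMoments

section SliceSolutions

open Matrix

variable {s k r n J Y q : ℕ}

theorem sum_add_pow_sub_sum_add_pow {R : Type*} [CommRing R] {x y : Fin s → R}
    (hxy : ∀ j ∈ Icc 1 k, j ≠ r → ∑ i, x i ^ j = ∑ i, y i ^ j) (hJ : J ≤ k) (h : R) :
    ∑ i, (x i + h) ^ J - ∑ i, (y i + h) ^ J =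
      J.choose r * ((∑ i, x i ^ r - ∑ i, y i ^ r) * h ^ (J - r)) := by
  have hexpand (z : Fin s → R) : ∑ i, (z i + h) ^ J =
      ∑ m ∈ range (J + 1), (∑ i, z i ^ m) * (h ^ (J - m) * J.choose m) := by
    simp only [add_pow, mul_assoc, sum_mul]
    exact sum_comm
  have hvanish (m : ℕ) (hm : m ∈ range (J + 1)) (hmr : m ≠ r) :
      ∑ i, x i ^ m = ∑ i, y i ^ m := by
    rcases Nat.eq_zero_or_pos m with rfl | hm₀
    · simp
    · exact hxy m (mem_Icc.2 ⟨hm₀, by have := mem_range.1 hm; omega⟩) hmr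
  rw [hexpand, hexpand, ← sum_sub_distrib]
  simp only [← sub_mul]
  rw [sum_eq_single r (fun m hm hmr => by rw [hvanish m hm hmr, sub_self, zero_mul])]
  · ring
  · intro hr
    rw [Nat.choose_eq_zero_of_lt (by simpa using hr), Nat.cast_zero, mul_zero, mul_zero]

/-- The solutions counted by `vinogradovSliceCount s k r n`. -/
noncomputable def sliceSolutions (s k r n : ℕ) : Finset ((Fin s → ℤ) × (Fin s → ℤ)) :=
  {p ∈ (Fintype.piFinset fun _ => Icc (1 : ℤ) n) ×ˢ Fintype.piFinset fun _ => Icc (1 : ℤ) n |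
    ∀ j ∈ Icc 1 k, j ≠ r → ∑ i, p.1 i ^ j = ∑ i, p.2 i ^ j}

theorem mem_sliceSolutions {x y : Fin s → ℤ} : (x, y) ∈ sliceSolutions s k r n ↔
    ((∀ i, 1 ≤ x i ∧ x i ≤ n) ∧ ∀ i, 1 ≤ y i ∧ y i ≤ n) ∧
      ∀ j ∈ Icc 1 k, j ≠ r → ∑ i, x i ^ j = ∑ i, y i ^ j := by
  simp [sliceSolutions]

theorem vinogradovSliceCount_eq_card (X : ℝ) :
    vinogradovSliceCount s k r X = #(sliceSolutions s k r ⌊X⌋₊) := by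
  have hfloor (z : ℤ) : 1 ≤ z ∧ (z : ℝ) ≤ X ↔ 1 ≤ z ∧ z ≤ (⌊X⌋₊ : ℤ) :=
    and_congr_right fun hz => by
      lift z to ℕ using by omega
      rw [Int.cast_natCast, Int.ofNat_le, Nat.le_floor_iff' (by omega)]
  rw [vinogradovSliceCount, ← Set.ncard_coe_finset]
  congr 1
  ext ⟨x, y⟩
  simp only [Set.mem_ofPred_eq, mem_coe, mem_sliceSolutions, hfloor, and_assoc]

theorem sum_pow_mem_Icc {z : Fin s → ℤ} (hz : ∀ i, 1 ≤ z i ∧ z i ≤ Y) :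
    ∑ i, z i ^ r ∈ Icc (0 : ℤ) (s * Y ^ r) := by
  refine mem_Icc.2 ⟨sum_nonneg fun i _ => pow_nonneg (by have := hz i; omega) r, ?_⟩
  have hterm (i : Fin s) : z i ^ r ≤ (Y : ℤ) ^ r :=
    pow_le_pow_left₀ (by have := hz i; omega) (hz i).2 r
  simpa using sum_le_card_nsmul univ _ _ fun i _ => hterm i

/-- The translation by `h` of a solution `(x, y)`, with `h` and the defect of the new solution in
the degree `r`. -/
def shiftSolution (r : ℕ) (t : ((Fin s → ℤ) × (Fin s → ℤ)) × ℤ) :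
    ((Fin s → ℤ) × (Fin s → ℤ)) × ℤ × ℤ :=
  ((fun i => t.1.1 i + t.2, fun i => t.1.2 i + t.2), t.2, ∑ i, t.1.2 i ^ r - ∑ i, t.1.1 i ^ r)

theorem shiftSolution_injective : Function.Injective (shiftSolution (s := s) r) := by
  rintro ⟨⟨x, y⟩, h⟩ ⟨⟨x', y'⟩, h'⟩ heq
  simp only [shiftSolution, Prod.mk.injEq] at heq
  obtain ⟨⟨hx, hy⟩, rfl, -⟩ := heq
  simpa [funext_iff] using And.intro hx hy

theorem shiftSolution_mem [NeZero q] (hY : 2 * n ≤ Y) {t : ((Fin s → ℤ) × (Fin s → ℤ)) × ℤ}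
    (ht : t ∈ sliceSolutions s k r n ×ˢ Icc (1 : ℤ) n) :
    shiftSolution r t ∈ {t ∈ ((Fintype.piFinset fun _ : Fin s => Icc (1 : ℤ) Y) ×ˢ
        Fintype.piFinset fun _ : Fin s => Icc (1 : ℤ) Y) ×ˢ
          Icc (1 : ℤ) Y ×ˢ Icc (-((s * Y ^ r : ℕ) : ℤ)) (s * Y ^ r : ℕ) |
      ∑ i, curveEval (momentCurve (ZMod q) k) (t.1.1 i : ZMod q) -
        ∑ i, curveEval (momentCurve (ZMod q) k) (t.1.2 i : ZMod q) +
        shiftVector (ZMod q) k r t.2 = 0} := by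
  obtain ⟨⟨x, y⟩, h⟩ := t
  obtain ⟨hsol, hh⟩ := mem_product.1 ht
  obtain ⟨⟨hx, hy⟩, hxy⟩ := mem_sliceSolutions.1 hsol
  have hh := mem_Icc.1 hh
  have hpow {z : Fin s → ℤ} (hz : ∀ i, 1 ≤ z i ∧ z i ≤ n) :=
    mem_Icc.1 (sum_pow_mem_Icc (r := r) (Y := Y) fun i => ⟨(hz i).1, by have := hz i; omega⟩)
  have hxr := hpow hx
  have hyr := hpow hy
  simp only [shiftSolution, mem_filter, mem_product, Fintype.mem_piFinset, mem_Icc]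
  refine ⟨⟨⟨fun i => ?_, fun i => ?_⟩, by omega, ?_⟩, ?_⟩
  · have := hx i
    omega
  · have := hy i
    omega
  · push_cast
    omega
  · ext j
    have hshift := congrArg (Int.cast : ℤ → ZMod q)
      (sum_add_pow_sub_sum_add_pow hxy (J := j.1 + 1) (by omega) h)
    push_cast at hshift
    simp only [curveEval, momentCurve, shiftVector, Pi.add_apply, Pi.sub_apply, Finset.sum_apply,
      Polynomial.eval_pow, Polynomial.eval_X, Pi.zero_apply]
    push_cast
    rw [hshift]
    ring

theorem pow_mul_card_sliceSolutions_le [NeZero q] (hY : 2 * n ≤ Y) :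
    (q : ℝ) ^ k * (n * #(sliceSolutions s k r n)) ≤
      ∑ α : Fin k → ZMod q, ‖weylSum 1 Y α‖ ^ (2 * s) * ‖shiftSum r Y (s * Y ^ r) α‖ := by
  rw [weylSum_one, shiftSum]
  refine le_trans ?_ (pow_mul_card_le_sum_norm_expSum _ _ _ _ s)
  have hcard := card_le_card_of_injOn (s := sliceSolutions s k r n ×ˢ Icc (1 : ℤ) n)
    (shiftSolution r) (fun t ht => shiftSolution_mem (q := q) hY ht)
    shiftSolution_injective.injOn
  rw [card_product, Int.card_Icc, add_sub_cancel_right, Int.toNat_natCast, mul_comm] at hcard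
  refine mul_le_mul_of_nonneg_left ?_ (by positivity)
  exact_mod_cast hcard

end SliceSolutions

section Interpolation

variable {α : Type*} {S : Finset α} {f g : α → ℝ} {Q Y : ℝ}

theorem sum_rpow_mul_rpow_le_mul_rpow {a b θ : ℝ} (hθ₀ : 0 ≤ θ) (hθ₁ : θ ≤ 1)
    (hf : ∀ x ∈ S, 0 ≤ f x) (hg : ∀ x ∈ S, 0 ≤ g x) (hQ : 0 ≤ Q) (hY : 0 < Y)
    (hfQ : ∑ x ∈ S, f x ≤ Q * Y ^ a) (hgQ : ∑ x ∈ S, g x ≤ Q * Y ^ b) :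
    ∑ x ∈ S, f x ^ (1 - θ) * g x ^ θ ≤ Q * Y ^ ((1 - θ) * a + θ * b) := by
  have hθ : 0 ≤ 1 - θ := sub_nonneg.2 hθ₁
  have hf' := sum_nonneg hf
  have hg' := sum_nonneg hg
  calc ∑ x ∈ S, f x ^ (1 - θ) * g x ^ θ
      ≤ (∑ x ∈ S, f x) ^ (1 - θ) * (∑ x ∈ S, g x) ^ θ := sum_rpow_mul_rpow_le S hθ₀ hθ₁ hf hg
    _ ≤ (Q * Y ^ a) ^ (1 - θ) * (Q * Y ^ b) ^ θ := by gcongr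
    _ = Q * Y ^ ((1 - θ) * a + θ * b) := by
        rw [Real.mul_rpow hQ (by positivity), Real.mul_rpow hQ (by positivity),
          mul_mul_mul_comm, ← Real.rpow_add_of_nonneg hQ hθ hθ₀, sub_add_cancel, Real.rpow_one,
          ← Real.rpow_mul hY.le, ← Real.rpow_mul hY.le, ← Real.rpow_add hY, mul_comm a,
          mul_comm b]

theorem sum_rpow_mul_le_mul_rpow {u v : α → ℝ} {a b : ℝ} {n : ℕ} (hn : n ≠ 0)
    (hu : ∀ x ∈ S, 0 ≤ u x) (hv : ∀ x ∈ S, 0 ≤ v x) (hg : ∀ x ∈ S, 0 ≤ g x) (hQ : 0 ≤ Q)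
    (hY : 0 < Y) (huQ : ∑ x ∈ S, u x ≤ Q * Y ^ a) (hvQ : ∑ x ∈ S, v x * g x ^ n ≤ Q * Y ^ b) :
    ∑ x ∈ S, u x ^ (1 - (n : ℝ)⁻¹) * v x ^ (n : ℝ)⁻¹ * g x ≤
      Q * Y ^ ((1 - (n : ℝ)⁻¹) * a + (n : ℝ)⁻¹ * b) := by
  have hn₁ : (1 : ℝ) ≤ n := by exact_mod_cast Nat.one_le_iff_ne_zero.2 hn
  refine (sum_congr rfl fun x hx => ?_).trans_le (sum_rpow_mul_rpow_le_mul_rpow (by positivity)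
    (inv_le_one_of_one_le₀ hn₁) hu (fun x hx => mul_nonneg (hv x hx) (pow_nonneg (hg x hx) n))
    hQ hY huQ hvQ)
  rw [Real.mul_rpow (hv x hx) (pow_nonneg (hg x hx) n), Real.pow_rpow_inv_natCast (hg x hx) hn,
    mul_assoc]

theorem sum_pow_mul_le_mul_rpow {K L c n s : ℕ} (hf : ∀ x ∈ S, 0 ≤ f x) (hg : ∀ x ∈ S, 0 ≤ g x)
    (hn : n ≠ 0) (hs : (s : ℝ) ≤ K * (1 - (n : ℝ)⁻¹) + L * (n : ℝ)⁻¹) (hQ : 0 ≤ Q) (hY : 0 < Y)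
    (hcard : #S ≤ Q) (hgQ : ∑ x ∈ S, g x ^ n ≤ Q * Y ^ c)
    (hfQ : ∑ x ∈ S, f x ^ (2 * K) ≤ Q * Y ^ K)
    (hfgQ : ∑ x ∈ S, f x ^ (2 * L) * g x ^ n ≤ Q * Y ^ (L + c)) :
    ∑ x ∈ S, f x ^ (2 * s) * g x ≤ Q * Y ^ ((s : ℝ) + c / n) := by
  have hl₁ : (n : ℝ)⁻¹ ≤ 1 := Nat.cast_inv_le_one n
  set μ : ℝ := K * (1 - (n : ℝ)⁻¹) + L * (n : ℝ)⁻¹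
  have hμ₀ : 0 ≤ μ := s.cast_nonneg.trans hs
  simp only [← Real.rpow_natCast Y] at hgQ hfQ hfgQ
  have hg₁ : ∑ x ∈ S, g x ≤ Q * Y ^ ((1 - (n : ℝ)⁻¹) * 0 + (n : ℝ)⁻¹ * (c : ℝ)) := by
    simpa using sum_rpow_mul_le_mul_rpow (u := 1) (v := 1) (a := 0) hn (by simp) (by simp) hg hQ hY
      (by simpa using hcard) (by simpa using hgQ)
  have hfg₁ : ∑ x ∈ S, f x ^ (2 * μ) * g x ≤
      Q * Y ^ ((1 - (n : ℝ)⁻¹) * (K : ℝ) + (n : ℝ)⁻¹ * ((L + c : ℕ) : ℝ)) := by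
    refine (sum_congr rfl fun x hx => ?_).trans_le (sum_rpow_mul_le_mul_rpow hn
      (fun x hx => pow_nonneg (hf x hx) _) (fun x hx => pow_nonneg (hf x hx) _) hg hQ hY hfQ hfgQ)
    have hfx := hf x hx
    have : 0 ≤ 1 - (n : ℝ)⁻¹ := sub_nonneg.2 hl₁
    rw [← Real.rpow_natCast, ← Real.rpow_natCast, ← Real.rpow_mul hfx, ← Real.rpow_mul hfx,
      ← Real.rpow_add_of_nonneg hfx (by positivity) (by positivity)]
    congr 2
    push_cast
    ring
  have hθμ : s / μ * μ = s :=
    div_mul_cancel_of_imp fun h => le_antisymm (hs.trans h.le) s.cast_nonneg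
  have hθ₁ : s / μ ≤ 1 := div_le_one_of_le₀ hs hμ₀
  refine (sum_congr rfl fun x hx => ?_).trans_le ((sum_rpow_mul_rpow_le_mul_rpow (by positivity)
    hθ₁ hg (fun x hx => mul_nonneg (Real.rpow_nonneg (hf x hx) _) (hg x hx)) hQ hY hg₁
    hfg₁).trans_eq ?_)
  · have hgx := hg x hx
    rw [Real.mul_rpow (Real.rpow_nonneg (hf x hx) _) hgx, mul_left_comm,
      ← Real.rpow_mul (hf x hx), ← Real.rpow_add_of_nonneg hgx (sub_nonneg.2 hθ₁) (by positivity),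
      sub_add_cancel, Real.rpow_one, mul_assoc, mul_comm μ, hθμ]
    norm_cast
  · congr 2
    push_cast
    linear_combination hθμ

end Interpolation

section SliceBound

variable {q k l r s κ K L Y Z c n : ℕ} {D₁ D₂ D₃ ε : ℝ}

theorem sum_norm_weylSum_pow_mul_norm_shiftSum_le [NeZero q] (hlk : l ≤ k) (hlr : l < r)
    (hn : n ≠ 0) (hs : (s : ℝ) ≤ K * (1 - (n : ℝ)⁻¹) + L * (n : ℝ)⁻¹) (hY : 1 ≤ Y)
    (hD₁ : 1 ≤ D₁) (hD₂ : 1 ≤ D₂) (hD₃ : 1 ≤ D₃)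
    (hfull : ∑ α : Fin k → ZMod q, ‖weylSum 1 Y α‖ ^ (2 * K) ≤ D₁ * (Y : ℝ) ^ K * (q : ℝ) ^ k)
    (hlow : ∀ a : ℤ → ℂ, (∀ i, ‖a i‖ ≤ 1) →
      ∑ y : Fin l → ZMod q, ‖weylSum a Y y‖ ^ (2 * L) ≤ D₂ * (Y : ℝ) ^ L * (q : ℝ) ^ l)
    (hshift : ∑ α : Fin k → ZMod q, ‖shiftSum r Y Z α‖ ^ n ≤ D₃ * (Y : ℝ) ^ c * (q : ℝ) ^ k) :
    ∑ α : Fin k → ZMod q, ‖weylSum 1 Y α‖ ^ (2 * s) * ‖shiftSum r Y Z α‖ ≤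
      D₁ * D₂ * D₃ * (q : ℝ) ^ k * (Y : ℝ) ^ ((s : ℝ) + c / n) := by
  have hY₀ : (0 : ℝ) < Y := by exact_mod_cast hY
  have hD₁₂ : 1 ≤ D₁ * D₂ := one_le_mul_of_one_le_of_one_le hD₁ hD₂
  have hD₂₃ : 1 ≤ D₂ * D₃ := one_le_mul_of_one_le_of_one_le hD₂ hD₃
  refine sum_pow_mul_le_mul_rpow (K := K) (L := L) (fun _ _ => norm_nonneg _)
    (fun _ _ => norm_nonneg _) hn hs (by positivity) hY₀ ?_ ?_ ?_ ?_
  · simpa using le_mul_of_one_le_left (by positivity : (0 : ℝ) ≤ (q : ℝ) ^ k)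
      (one_le_mul_of_one_le_of_one_le hD₁₂ hD₃)
  · calc ∑ α : Fin k → ZMod q, ‖shiftSum r Y Z α‖ ^ n
        ≤ 1 * (D₃ * (Y : ℝ) ^ c * (q : ℝ) ^ k) := by rwa [one_mul]
      _ ≤ D₁ * D₂ * (D₃ * (Y : ℝ) ^ c * (q : ℝ) ^ k) := by gcongr
      _ = D₁ * D₂ * D₃ * (q : ℝ) ^ k * (Y : ℝ) ^ c := by ring
  · calc ∑ α : Fin k → ZMod q, ‖weylSum 1 Y α‖ ^ (2 * K)
        ≤ 1 * (D₁ * (Y : ℝ) ^ K * (q : ℝ) ^ k) := by rwa [one_mul]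
      _ ≤ D₂ * D₃ * (D₁ * (Y : ℝ) ^ K * (q : ℝ) ^ k) := by gcongr
      _ = D₁ * D₂ * D₃ * (q : ℝ) ^ k * (Y : ℝ) ^ K := by ring
  · calc ∑ α : Fin k → ZMod q, ‖weylSum 1 Y α‖ ^ (2 * L) * ‖shiftSum r Y Z α‖ ^ n
        ≤ D₂ * (Y : ℝ) ^ L * ∑ α : Fin k → ZMod q, ‖shiftSum r Y Z α‖ ^ n :=
          sum_norm_weylSum_pow_mul_norm_shiftSum_pow_le hlk hlr hlow
      _ ≤ D₂ * (Y : ℝ) ^ L * (D₃ * (Y : ℝ) ^ c * (q : ℝ) ^ k) := by gcongr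
      _ = 1 * (D₂ * (Y : ℝ) ^ L * (D₃ * (Y : ℝ) ^ c * (q : ℝ) ^ k)) := (one_mul _).symm
      _ ≤ D₁ * (D₂ * (Y : ℝ) ^ L * (D₃ * (Y : ℝ) ^ c * (q : ℝ) ^ k)) := by gcongr
      _ = D₁ * D₂ * D₃ * (q : ℝ) ^ k * (Y : ℝ) ^ (L + c) := by ring

theorem exists_sum_norm_shiftSum_mul_pow_le (hr : r ≠ 0) (hrk : r < k) (hκ : κ ≠ 0)
    (hκk : 2 * κ ≤ k - r + 2) (hs : s ≠ 0) (hε : 0 < ε) :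
    ∃ C : ℝ, 1 ≤ C ∧ ∀ q Y : ℕ, [NeZero q] → 1 ≤ Y →
      2 * κ * (2 ^ k * (s * Y ^ r * Y ^ k)) < q →
      ∑ α : Fin k → ZMod q, ‖shiftSum r Y (s * Y ^ r) α‖ ^ (2 * κ) ≤
        C * (Y : ℝ) ^ ε * (Y : ℝ) ^ (1 + r * (2 * κ - 1)) * (q : ℝ) ^ k := by
  obtain ⟨C, hC⟩ := exists_sum_norm_shiftSum_pow_le hr hrk hκ hκk
    (div_pos hε (Nat.cast_pos.2 (Nat.pos_of_ne_zero hr)))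
  refine ⟨max 1 (C * (s : ℝ) ^ (ε / r) * (s : ℝ) ^ (2 * κ - 1)), le_max_left _ _,
    fun q Y _ hY hq => ?_⟩
  have hYZ : Y ≤ s * Y ^ r := calc
    Y ≤ Y ^ r := Nat.le_self_pow hr Y
    _ ≤ s * Y ^ r := Nat.le_mul_of_pos_left _ (Nat.pos_of_ne_zero hs)
  have hε' : ((Y : ℝ) ^ r) ^ (ε / r) = (Y : ℝ) ^ ε := by
    rw [← Real.rpow_natCast_mul Y.cast_nonneg, mul_div_cancel₀ _ (Nat.cast_ne_zero.2 hr)]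
  refine (hC q Y (s * Y ^ r) hY hYZ hq).trans ?_
  push_cast
  rw [Real.mul_rpow (by positivity) (by positivity), hε', mul_pow, ← pow_mul, pow_add, pow_one]
  calc (q : ℝ) ^ k * (C * ((s : ℝ) ^ (ε / r) * (Y : ℝ) ^ ε) *
          (Y * ((s : ℝ) ^ (2 * κ - 1) * (Y : ℝ) ^ (r * (2 * κ - 1)))))
      = C * (s : ℝ) ^ (ε / r) * (s : ℝ) ^ (2 * κ - 1) *
          ((Y : ℝ) ^ ε * (Y * (Y : ℝ) ^ (r * (2 * κ - 1))) * (q : ℝ) ^ k) := by ring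
    _ ≤ max 1 (C * (s : ℝ) ^ (ε / r) * (s : ℝ) ^ (2 * κ - 1)) *
          ((Y : ℝ) ^ ε * (Y * (Y : ℝ) ^ (r * (2 * κ - 1))) * (q : ℝ) ^ k) := by
        gcongr
        exact le_max_right _ _
    _ = _ := by ring

theorem exists_sum_norm_weylSum_pow_mul_norm_shiftSum_le {p : ℕ} [Fact p.Prime] (hkp : k < p)
    (hr : r ≠ 0) (hrk : r < k) (hκ : κ ≠ 0) (hκk : 2 * κ ≤ k - r + 2) (hs₀ : s ≠ 0)
    (hs : (s : ℝ) ≤ triangle k * (1 - ((2 * κ : ℕ) : ℝ)⁻¹) +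
      triangle (r - 1) * ((2 * κ : ℕ) : ℝ)⁻¹) (hε : 0 < ε) :
    ∃ C : ℝ, 0 ≤ C ∧ ∀ N M : ℕ, k * N ≤ M →
      2 * κ * (2 ^ k * (s * (p ^ N) ^ r * (p ^ N) ^ k)) < p ^ M →
      ∑ α : Fin k → ZMod (p ^ M), ‖weylSum 1 (p ^ N) α‖ ^ (2 * s) *
          ‖shiftSum r (p ^ N) (s * (p ^ N) ^ r) α‖ ≤
        C * ((p ^ N : ℕ) : ℝ) ^ ε * ((p ^ M : ℕ) : ℝ) ^ k *
          ((p ^ N : ℕ) : ℝ) ^ ((s : ℝ) + (1 + r * (2 * κ - 1) : ℕ) / (2 * κ : ℕ)) := by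
  have hε' : 0 < ε / 3 := by positivity
  obtain ⟨C₁, hC₁, hfull⟩ := exists_sum_norm_weylSum_pow_le hkp hε'
  obtain ⟨C₂, hC₂, hlow⟩ := exists_sum_norm_weylSum_pow_le (k := r - 1) (p := p) (by omega) hε'
  obtain ⟨C₃, hC₃, hshift⟩ := exists_sum_norm_shiftSum_mul_pow_le hr hrk hκ hκk hs₀ hε'
  refine ⟨C₁ * C₂ * C₃, by positivity, fun N M hM hp => ?_⟩
  have hY : 1 ≤ p ^ N := NeZero.one_le
  set y : ℝ := ((p ^ N : ℕ) : ℝ)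
  have hy₁ : 1 ≤ y := Nat.one_le_cast.2 hY
  have hone {C : ℝ} (hC : 1 ≤ C) : 1 ≤ C * y ^ (ε / 3) :=
    one_le_mul_of_one_le_of_one_le hC (Real.one_le_rpow hy₁ hε'.le)
  have hy₃ : y ^ ε = y ^ (ε / 3) * y ^ (ε / 3) * y ^ (ε / 3) := by
    rw [← Real.rpow_add (by positivity), ← Real.rpow_add (by positivity)]
    ring_nf
  refine (sum_norm_weylSum_pow_mul_norm_shiftSum_le (by omega : r - 1 ≤ k) (by omega)
    (by omega : 2 * κ ≠ 0) hs hY (hone hC₁) (hone hC₂) (hone hC₃) (hfull N M hM 1 (by simp))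
    (hlow N M ((Nat.mul_le_mul_right N (by omega)).trans hM)) (hshift _ _ hY hp)).trans_eq ?_
  rw [hy₃]
  ring

theorem exists_two_mul_le_pow_le {p n : ℕ} (hp : 1 < p) (hn : n ≠ 0) :
    ∃ N, 2 * n ≤ p ^ N ∧ p ^ N ≤ 2 * p * n := by
  refine ⟨Nat.log p (2 * n) + 1, (Nat.lt_pow_succ_log_self hp _).le, ?_⟩
  calc p ^ (Nat.log p (2 * n) + 1) = p ^ Nat.log p (2 * n) * p := pow_succ _ _
    _ ≤ 2 * n * p := Nat.mul_le_mul_right _ (Nat.pow_log_le_self p (by omega))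
    _ = 2 * p * n := by ring

/-- The exponent of the bound for the number of slice solutions, up to `ε`. -/
noncomputable def sliceExponent (s r κ : ℕ) : ℝ :=
  s + ((r : ℝ) - 1) * (1 - 1 / (2 * κ))

theorem sliceExponent_nonneg (hr : r ≠ 0) (hκ : κ ≠ 0) : 0 ≤ sliceExponent s r κ := by
  have hr₁ : (1 : ℝ) ≤ r := by exact_mod_cast Nat.one_le_iff_ne_zero.2 hr
  have hκ₁ : (1 : ℝ) ≤ κ := by exact_mod_cast Nat.one_le_iff_ne_zero.2 hκ
  have hθ : 1 / (2 * (κ : ℝ)) ≤ 1 := by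
    rw [div_le_one (by positivity)]
    linarith
  exact add_nonneg s.cast_nonneg (mul_nonneg (sub_nonneg.2 hr₁) (sub_nonneg.2 hθ))

theorem sliceExponent_add_one (hκ : κ ≠ 0) :
    sliceExponent s r κ + 1 = s + (1 + r * (2 * κ - 1) : ℕ) / (2 * κ : ℕ) := by
  rw [sliceExponent, Nat.cast_add, Nat.cast_mul r, Nat.cast_pred (by omega)]
  push_cast
  field_simp
  ring

theorem exists_card_sliceSolutions_le (hr : r ≠ 0) (hrk : r < k) (hκ : κ ≠ 0)
    (hκk : 2 * κ ≤ k - r + 2) (hs₀ : s ≠ 0)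
    (hs : (s : ℝ) ≤ triangle k * (1 - ((2 * κ : ℕ) : ℝ)⁻¹) +
      triangle (r - 1) * ((2 * κ : ℕ) : ℝ)⁻¹) (hε : 0 < ε) :
    ∃ C : ℝ, 0 ≤ C ∧ ∀ n : ℕ, n ≠ 0 →
      (#(sliceSolutions s k r n) : ℝ) ≤ C * (n : ℝ) ^ (sliceExponent s r κ + ε) := by
  set E : ℝ := sliceExponent s r κ + ε
  have hE₀ : 0 ≤ E := add_nonneg (sliceExponent_nonneg hr hκ) hε.le
  have hE : E + 1 = s + (1 + r * (2 * κ - 1) : ℕ) / (2 * κ : ℕ) + ε := by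
    rw [← sliceExponent_add_one hκ, add_right_comm]
  obtain ⟨p, hpk, hp⟩ := Nat.exists_infinite_primes (k + 1)
  have : Fact p.Prime := ⟨hp⟩
  obtain ⟨C, hC₀, hC⟩ := exists_sum_norm_weylSum_pow_mul_norm_shiftSum_le
    (Nat.lt_of_succ_le hpk) hr hrk hκ hκk hs₀ hs hε
  refine ⟨C * (2 * p) ^ (E + 1), by positivity, fun n hn => ?_⟩
  obtain ⟨N, hnN, hNn⟩ := exists_two_mul_le_pow_le hp.one_lt hn
  set W : ℕ := 2 * κ * (2 ^ k * (s * (p ^ N) ^ r * (p ^ N) ^ k))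
  have hW : W < p ^ (k * N + W) :=
    (Nat.lt_pow_self hp.one_lt).trans_le (Nat.pow_le_pow_right hp.pos (Nat.le_add_left _ _))
  have hY : (0 : ℝ) < (p ^ N : ℕ) := Nat.cast_pos.2 (pow_pos hp.pos N)
  have hq : (0 : ℝ) < ((p ^ (k * N + W) : ℕ) : ℝ) ^ k :=
    pow_pos (Nat.cast_pos.2 (pow_pos hp.pos _)) k
  have hn₀ : (0 : ℝ) < n := by positivity
  have hcount : n * (#(sliceSolutions s k r n) : ℝ) ≤ C * ((p ^ N : ℕ) : ℝ) ^ (E + 1) := by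
    refine le_of_mul_le_mul_left ((pow_mul_card_sliceSolutions_le hnN).trans
      ((hC N (k * N + W) (Nat.le_add_right _ _) hW).trans_eq ?_)) hq
    rw [hE, Real.rpow_add hY _ ε]
    ring
  refine le_of_mul_le_mul_left (hcount.trans ?_) hn₀
  calc C * ((p ^ N : ℕ) : ℝ) ^ (E + 1) ≤ C * (2 * p * n) ^ (E + 1) := by
        gcongr
        exact_mod_cast hNn
    _ = n * (C * (2 * p) ^ (E + 1) * (n : ℝ) ^ E) := by
        rw [Real.mul_rpow (by positivity) hn₀.le, Real.rpow_add_one hn₀.ne']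
        ring

end SliceBound

theorem bound_missing_slice_degree_r
    (r s k κ : ℕ) (hr : 1 ≤ r) (hrk : r < k)
    (hκ1 : 1 ≤ κ) (hκ2 : (κ : ℝ) ≤ ((k : ℝ) - (r : ℝ) + 2) / 2)
    (hs1 : 1 ≤ s)
    (hs2 : (s : ℝ) ≤ (k : ℝ) * ((k : ℝ) + 1) / 2 -
      ((k : ℝ) * ((k : ℝ) + 1) - (r : ℝ) * ((r : ℝ) - 1)) / (4 * (κ : ℝ)))
    (ε : ℝ) (hε : 0 < ε) :
    ∃ C X₀ : ℝ, ∀ X : ℝ, X₀ ≤ X →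
      (vinogradovSliceCount s k r X : ℝ) ≤
        C * X ^ ((s : ℝ) + ((r : ℝ) - 1) * (1 - 1 / (2 * (κ : ℝ))) + ε) := by
  have hκk : 2 * κ ≤ k - r + 2 := by
    have : 2 * κ + r ≤ k + 2 := by exact_mod_cast (by linarith : 2 * (κ : ℝ) + r ≤ k + 2)
    omega
  have hs : (s : ℝ) ≤ triangle k * (1 - ((2 * κ : ℕ) : ℝ)⁻¹) +
      triangle (r - 1) * ((2 * κ : ℕ) : ℝ)⁻¹ := by
    refine hs2.trans_eq ?_
    rw [cast_triangle, cast_triangle_sub_one (by omega), Nat.cast_mul, Nat.cast_two]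
    field_simp
    ring
  have hE₀ : 0 ≤ sliceExponent s r κ + ε :=
    add_nonneg (sliceExponent_nonneg (by omega) (by omega)) hε.le
  obtain ⟨C, hC₀, hC⟩ :=
    exists_card_sliceSolutions_le (by omega) hrk (by omega) hκk (by omega) hs hε
  refine ⟨C, 1, fun X hX => ?_⟩
  rw [vinogradovSliceCount_eq_card]
  exact (hC _ (Nat.floor_pos.2 hX).ne').trans (mul_le_mul_of_nonneg_left
    (Real.rpow_le_rpow (Nat.cast_nonneg _) (Nat.floor_le (by linarith)) hE₀) hC₀)
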